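/- Let α, β > -1, 1 ≤ p ≤ ∞, and fix an admissible function η. There is a constant c > 0, depending only on α, β, p, η, such that for every f ∈ L^p(w_{α,β}) if 1 ≤ p < ∞ (f ∈ C[-1,1] if p = ∞) and every n ≥ 1, ‖f - V_n^{α,β} f‖_{L^p(w_{α,β})} ≤ c · E_n(f)_{L^p(w_{α,β})}. -/

import Mathlib

open MeasureTheory Set ENNReal NNReal

noncomputable section

namespace JacobiApprox

/-- The Jacobi weight `w_{α,β}(x) = (1-x)^α (1+x)^β` on `(-1,1)`. -/
def w (α β x : ℝ) : ℝ := (1 - x) ^ α * (1 + x) ^ β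

/-- The weighted `L^p` norm `‖f‖_{L^p(w_{α,β})}`; for `p = ∞` it is the uniform
norm on `[-1,1]`. -/
def LpW (α β : ℝ) (p : ℝ≥0∞) (f : ℝ → ℝ) : ℝ :=
  if p = ⊤ then sSup ((fun x => |f x|) '' Icc (-1 : ℝ) 1)
  else (∫ x in Ioo (-1 : ℝ) 1, |f x| ^ p.toReal * w α β x) ^ (1 / p.toReal)

/-- Membership in `L^p(w_{α,β})` (`f ∈ C[-1,1]` when `p = ∞`). -/
def MemLpW (α β : ℝ) (p : ℝ≥0∞) (f : ℝ → ℝ) : Prop :=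
  Measurable f ∧
    (p ≠ ⊤ → IntegrableOn (fun x => |f x| ^ p.toReal * w α β x) (Ioo (-1 : ℝ) 1)) ∧
    (p = ⊤ → ContinuousOn f (Icc (-1 : ℝ) 1))

/-- `E_n(f)_{L^p(w_{α,β})}`: the error of best approximation of `f` by polynomials
of degree at most `n` in `L^p(w_{α,β})`. -/
def E (α β : ℝ) (p : ℝ≥0∞) (n : ℕ) (f : ℝ → ℝ) : ℝ :=
  sInf {r : ℝ | ∃ q : Polynomial ℝ, q.natDegree ≤ n ∧
    r = LpW α β p (fun x => f x - q.eval x)}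

/-- Membership in the Sobolev space `W_p^s(w_{α,β})`: `f` has `s` continuous
derivatives and `f^{(s)} ∈ L^p(w_{α,β})` (for `p = ∞` this is `f ∈ C^s[-1,1]`). -/
def MemW (α β : ℝ) (p : ℝ≥0∞) (s : ℕ) (f : ℝ → ℝ) : Prop :=
  ContDiff ℝ (s : ℕ∞) f ∧
    (p ≠ ⊤ → IntegrableOn (fun x => |iteratedDeriv s f x| ^ p.toReal * w α β x)
      (Ioo (-1 : ℝ) 1))

/-- The Sobolev norm `‖f‖_{W_p^s(w_{α,β})}` (max over derivatives when `p = ∞`). -/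
def WNorm (α β : ℝ) (p : ℝ≥0∞) (s : ℕ) (f : ℝ → ℝ) : ℝ :=
  if p = ⊤ then
    (Finset.range (s + 1)).sup' (Finset.nonempty_range_iff.mpr (Nat.succ_ne_zero s))
      (fun k => LpW α β ⊤ (iteratedDeriv k f))
  else (∑ k ∈ Finset.range (s + 1), (LpW α β p (iteratedDeriv k f)) ^ p.toReal) ^
    (1 / p.toReal)

/-- Pochhammer symbol (rising factorial) `(a)_k`. -/
def poch (a : ℝ) (k : ℕ) : ℝ := ∏ i ∈ Finset.range k, (a + i)

/-- The Jacobi polynomial `P_n^{(α,β)}`. -/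
def JP (α β : ℝ) (n : ℕ) (t : ℝ) : ℝ :=
  (poch (α + 1) n / n.factorial) *
    ∑ k ∈ Finset.range (n + 1),
      poch (-(n : ℝ)) k * poch ((n : ℝ) + α + β + 1) k /
        (poch (α + 1) k * k.factorial) * ((1 - t) / 2) ^ k

/-- The renormalized Jacobi polynomial `J_n^{α,β} = 2^n/(n+α+β+1)_n · P_n^{(α,β)}`. -/
def J (α β : ℝ) (n : ℕ) (t : ℝ) : ℝ :=
  2 ^ n / poch ((n : ℝ) + α + β + 1) n * JP α β n t

/-- The inner product `⟨f,g⟩_{α,β} = ∫_{-1}^1 f g w_{α,β}`. -/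
def ip (α β : ℝ) (f g : ℝ → ℝ) : ℝ := ∫ x in Ioo (-1 : ℝ) 1, f x * g x * w α β x

/-- `h_n^{α,β} = ⟨J_n^{α,β}, J_n^{α,β}⟩_{α,β}`. -/
def hJ (α β : ℝ) (n : ℕ) : ℝ := ip α β (J α β n) (J α β n)

/-- The Fourier–Jacobi coefficient `\hat f_n^{α,β}`. -/
def coeff (α β : ℝ) (n : ℕ) (f : ℝ → ℝ) : ℝ := ip α β f (J α β n) / hJ α β n

/-- The `n`-th partial sum `S_n^{α,β} f` of the Fourier–Jacobi series. -/
def S (α β : ℝ) (n : ℕ) (f : ℝ → ℝ) (x : ℝ) : ℝ :=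
  ∑ k ∈ Finset.range (n + 1), coeff α β k f * J α β k x

/-- An admissible cut-off function: `C^∞`, `η ≡ 1` on `[0,1]`, `η ≡ 0` on `[2,∞)`. -/
def Admissible (η : ℝ → ℝ) : Prop :=
  ContDiff ℝ (⊤ : ℕ∞) η ∧ (∀ t : ℝ, 0 ≤ t → t ≤ 1 → η t = 1) ∧ ∀ t : ℝ, 2 ≤ t → η t = 0

/-- The de la Vallée Poussin type operator `V_n^{α,β} f`. -/
def V (η : ℝ → ℝ) (α β : ℝ) (n : ℕ) (f : ℝ → ℝ) (x : ℝ) : ℝ :=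
  ∑ k ∈ Finset.range (2 * n + 1), η ((k : ℝ) / (n : ℝ)) * coeff α β k f * J α β k x

/-- The Sobolev orthogonal polynomial `𝒥_{n,θ}^{α-s,β-s}`. -/
def SJ (α β : ℝ) (s : ℕ) (θ : ℝ) (n : ℕ) (x : ℝ) : ℝ :=
  if n < s then (x - θ) ^ n / n.factorial
  else ∫ t in θ..x, (x - t) ^ (s - 1) / (s - 1).factorial * J α β (n - s) t

/-- The Sobolev inner product `⟨f,g⟩_{α,β}^{-s}`. -/
def ipS (α β : ℝ) (s : ℕ) (θ : ℝ) (lam : ℕ → ℝ) (f g : ℝ → ℝ) : ℝ :=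
  ip α β (iteratedDeriv s f) (iteratedDeriv s g) +
    ∑ k ∈ Finset.range s, lam k * iteratedDeriv k f θ * iteratedDeriv k g θ

/-- The Fourier coefficient `\hat{𝔣}_n^{α-s,β-s}` in the Sobolev orthogonal system. -/
def coeffS (α β : ℝ) (s : ℕ) (θ : ℝ) (lam : ℕ → ℝ) (n : ℕ) (f : ℝ → ℝ) : ℝ :=
  ipS α β s θ lam f (SJ α β s θ n) / ipS α β s θ lam (SJ α β s θ n) (SJ α β s θ n)

/-- The `n`-th partial sum `𝒮_{n,θ}^{α-s,β-s} f` of the Sobolev orthogonal expansion. -/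
def SS (α β : ℝ) (s : ℕ) (θ : ℝ) (lam : ℕ → ℝ) (n : ℕ) (f : ℝ → ℝ) (x : ℝ) : ℝ :=
  ∑ k ∈ Finset.range (n + 1), coeffS α β s θ lam k f * SJ α β s θ k x

/-- The operator `𝒱_{n,θ}^{α-s,β-s} f`. -/
def VS (η : ℝ → ℝ) (α β : ℝ) (s : ℕ) (θ : ℝ) (n : ℕ) (f : ℝ → ℝ) (x : ℝ) : ℝ :=
  (∑ k ∈ Finset.range s, iteratedDeriv k f θ * (x - θ) ^ k / k.factorial) +
    ∫ t in θ..x, (x - t) ^ (s - 1) / (s - 1).factorial *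
      V η α β n (iteratedDeriv s f) t

/-- `A_j^{α,β} = (α+β+2)_{2j}/(α+1)_j`. -/
def Acoef (α β : ℝ) (j : ℕ) : ℝ := poch (α + β + 2) (2 * j) / poch (α + 1) j

/-- `B_n^{α,β} = (α+1)_{n+1}/(α+β+2)_{2n+1}`. -/
def Bcoef (α β : ℝ) (n : ℕ) : ℝ := poch (α + 1) (n + 1) / poch (α + β + 2) (2 * n + 1)

/-- `D_j^{α,β} = (j+β+1)/((2j+α+β+2)(2j+α+β+3))`. -/
def Dcoef (α β : ℝ) (j : ℕ) : ℝ :=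
  ((j : ℝ) + β + 1) / ((2 * (j : ℝ) + α + β + 2) * (2 * (j : ℝ) + α + β + 3))

/-- The function `u_{g,k}` of the Aubin–Nitsche duality argument. -/
def u (α β : ℝ) (s k : ℕ) (g : ℝ → ℝ) (x : ℝ) : ℝ :=
  ∫ t in (-1 : ℝ)..x, (x - t) ^ (s - 1) / (s - 1).factorial * (1 / w α β t) *
    ∫ y in t..(1 : ℝ), (y - t) ^ (s - k - 1) / (s - k - 1).factorial * g y * w α β y

/-- The `s`-th derivative of `u_{g,k}`, given by its explicit formula. -/
def uDs (α β : ℝ) (s k : ℕ) (g : ℝ → ℝ) (x : ℝ) : ℝ :=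
  (1 / w α β x) *
    ∫ y in x..(1 : ℝ), (y - x) ^ (s - k - 1) / (s - k - 1).factorial * g y * w α β y



/-! ### Symbol classes of sequences -/

/-- Families of sequences whose forward differences up to order `m` gain powers of `N`. -/
def Sy {ι : Type} (N : ι → ℝ) (d : ι → ℕ) : ℕ → (ι → ℝ) → (ι → ℕ → ℝ) → Prop
  | 0, B, f => ∃ C : ℝ, 0 ≤ C ∧ ∀ p k, d p ≤ k → |f p k| ≤ C * B p
  | m + 1, B, f => (∃ C : ℝ, 0 ≤ C ∧ ∀ p k, d p ≤ k → |f p k| ≤ C * B p) ∧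
      Sy N d m (fun p => B p / N p) (fun p k => f p (k + 1) - f p k)

section Symbols
variable {ι : Type} {N : ι → ℝ} {d : ι → ℕ}

lemma Sy.bound {m : ℕ} {B : ι → ℝ} {f : ι → ℕ → ℝ} (h : Sy N d m B f) :
    ∃ C : ℝ, 0 ≤ C ∧ ∀ p k, d p ≤ k → |f p k| ≤ C * B p := by
  cases m with
  | zero => exact h
  | succ m => exact h.1

lemma Sy.pred {m : ℕ} {B : ι → ℝ} {f : ι → ℕ → ℝ} (h : Sy N d (m + 1) B f) :
    Sy N d m B f := by
  induction m generalizing B f with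
  | zero => exact h.1
  | succ m ih => exact ⟨h.1, ih h.2⟩

lemma Sy.mono {m : ℕ} {B B' : ι → ℝ} {f : ι → ℕ → ℝ} (hN : ∀ p, 0 < N p)
    (h : Sy N d m B f) (c : ℝ) (hc : 0 ≤ c) (hB : ∀ p, B p ≤ c * B' p) :
    Sy N d m B' f := by
  induction m generalizing B B' f with
  | zero =>
    obtain ⟨C, hC, h⟩ := h
    refine ⟨C * c, by positivity, fun p k hk => (h p k hk).trans ?_⟩
    rw [mul_assoc]; exact mul_le_mul_of_nonneg_left (hB p) hC
  | succ m ih =>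
    obtain ⟨⟨C, hC, h⟩, h2⟩ := h
    refine ⟨⟨C * c, by positivity, fun p k hk => (h p k hk).trans ?_⟩, ih h2 ?_⟩
    · rw [mul_assoc]; exact mul_le_mul_of_nonneg_left (hB p) hC
    · intro p
      rw [← mul_div_assoc]
      exact div_le_div_of_nonneg_right (hB p) (hN p).le

lemma Sy.congr {m : ℕ} {B : ι → ℝ} {f g : ι → ℕ → ℝ}
    (h : Sy N d m B f) (hfg : ∀ p k, d p ≤ k → g p k = f p k) : Sy N d m B g := by
  induction m generalizing B f g with
  | zero =>
    obtain ⟨C, hC, h⟩ := h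
    exact ⟨C, hC, fun p k hk => by rw [hfg p k hk]; exact h p k hk⟩
  | succ m ih =>
    obtain ⟨⟨C, hC, h⟩, h2⟩ := h
    refine ⟨⟨C, hC, fun p k hk => by rw [hfg p k hk]; exact h p k hk⟩, ih h2 ?_⟩
    intro p k hk
    simp only [hfg p k hk, hfg p (k + 1) (by omega)]

lemma Sy.shift {m : ℕ} {B : ι → ℝ} {f : ι → ℕ → ℝ} (h : Sy N d m B f) (a : ℕ) :
    Sy N d m B (fun p k => f p (k + a)) := by
  induction m generalizing B f with
  | zero =>
    obtain ⟨C, hC, h⟩ := h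
    exact ⟨C, hC, fun p k hk => h p (k + a) (by omega)⟩
  | succ m ih =>
    obtain ⟨⟨C, hC, h⟩, h2⟩ := h
    refine ⟨⟨C, hC, fun p k hk => h p (k + a) (by omega)⟩, ?_⟩
    refine (ih h2).congr fun p k _ => ?_
    simp only [show k + 1 + a = k + a + 1 by omega]

lemma Sy.add {m : ℕ} {B : ι → ℝ} {f g : ι → ℕ → ℝ} (h : Sy N d m B f) (h' : Sy N d m B g) :
    Sy N d m B (fun p k => f p k + g p k) := by
  induction m generalizing B f g with
  | zero =>
    obtain ⟨C, hC, h⟩ := h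
    obtain ⟨C', hC', h'⟩ := h'
    refine ⟨C + C', by positivity, fun p k hk => ?_⟩
    rw [add_mul]
    exact (abs_add_le _ _).trans (add_le_add (h p k hk) (h' p k hk))
  | succ m ih =>
    obtain ⟨⟨C, hC, h⟩, h2⟩ := h
    obtain ⟨⟨C', hC', h'⟩, h2'⟩ := h'
    refine ⟨⟨C + C', by positivity, fun p k hk => ?_⟩, ?_⟩
    · rw [add_mul]
      exact (abs_add_le _ _).trans (add_le_add (h p k hk) (h' p k hk))
    · exact (ih h2 h2').congr fun p k _ => by ring

/-- Multiplication by a constant depending on the parameter. -/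
lemma Sy.cmul {m : ℕ} {B : ι → ℝ} {f : ι → ℕ → ℝ} (h : Sy N d m B f) (c A : ι → ℝ)
    (hc : ∀ p, |c p| ≤ A p) :
    Sy N d m (fun p => A p * B p) (fun p k => c p * f p k) := by
  induction m generalizing B f with
  | zero =>
    obtain ⟨C, hC, h⟩ := h
    refine ⟨C, hC, fun p k hk => ?_⟩
    rw [abs_mul]
    calc |c p| * |f p k| ≤ A p * (C * B p) :=
          mul_le_mul (hc p) (h p k hk) (abs_nonneg _) ((abs_nonneg _).trans (hc p))
      _ = _ := by ring
  | succ m ih =>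
    obtain ⟨⟨C, hC, h⟩, h2⟩ := h
    refine ⟨⟨C, hC, fun p k hk => ?_⟩, ?_⟩
    · rw [abs_mul]
      calc |c p| * |f p k| ≤ A p * (C * B p) :=
            mul_le_mul (hc p) (h p k hk) (abs_nonneg _) ((abs_nonneg _).trans (hc p))
        _ = _ := by ring
    · have := (ih h2).congr (g := fun p k => c p * f p (k + 1) - c p * f p k)
        fun p k _ => by ring
      convert this using 2
      ring

lemma Sy.neg {m : ℕ} {B : ι → ℝ} {f : ι → ℕ → ℝ} (h : Sy N d m B f) :
    Sy N d m B (fun p k => - f p k) := by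
  have := h.cmul (fun _ => -1) (fun _ => 1) (by simp)
  simp only [one_mul] at this
  exact this.congr fun p k _ => by ring

lemma Sy.sub {m : ℕ} {B : ι → ℝ} {f g : ι → ℕ → ℝ} (h : Sy N d m B f) (h' : Sy N d m B g) :
    Sy N d m B (fun p k => f p k - g p k) :=
  (h.add h'.neg).congr fun p k _ => by ring

lemma Sy.mul {m : ℕ} {B B' : ι → ℝ} {f g : ι → ℕ → ℝ} (h : Sy N d m B f)
    (h' : Sy N d m B' g) :
    Sy N d m (fun p => B p * B' p) (fun p k => f p k * g p k) := by
  induction m generalizing B B' f g with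
  | zero =>
    obtain ⟨C, hC, h⟩ := h
    obtain ⟨C', hC', h'⟩ := h'
    refine ⟨C * C', by positivity, fun p k hk => ?_⟩
    rw [abs_mul]
    calc |f p k| * |g p k| ≤ (C * B p) * (C' * B' p) :=
          mul_le_mul (h p k hk) (h' p k hk) (abs_nonneg _) ((abs_nonneg _).trans (h p k hk))
      _ = _ := by ring
  | succ m ih =>
    have hf := h.pred
    have hg := h'.pred
    obtain ⟨⟨C, hC, h⟩, h2⟩ := h
    obtain ⟨⟨C', hC', h'⟩, h2'⟩ := h'
    refine ⟨⟨C * C', by positivity, fun p k hk => ?_⟩, ?_⟩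
    · rw [abs_mul]
      calc |f p k| * |g p k| ≤ (C * B p) * (C' * B' p) :=
            mul_le_mul (h p k hk) (h' p k hk) (abs_nonneg _) ((abs_nonneg _).trans (h p k hk))
        _ = _ := by ring
    · have e1 := ih h2 hg
      have e2 := ih (hf.shift 1) h2'
      have e1' : Sy N d m (fun p => B p * B' p / N p)
          (fun p k => (f p (k + 1) - f p k) * g p k) := by
        convert e1 using 2; ring
      have e2' : Sy N d m (fun p => B p * B' p / N p)
          (fun p k => f p (k + 1) * (g p (k + 1) - g p k)) := by
        convert e2 using 2; ring
      exact (e1'.add e2').congr fun p k _ => by ring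

lemma Sy.diff {m : ℕ} {B : ι → ℝ} {f : ι → ℕ → ℝ} (h : Sy N d (m + 1) B f) :
    Sy N d m (fun p => B p / N p) (fun p k => f p (k + 1) - f p k) := h.2

lemma Sy.zero (m : ℕ) {B : ι → ℝ} (hB : ∀ p, 0 ≤ B p) (hN : ∀ p, 0 < N p) :
    Sy N d m B (fun _ _ => 0) := by
  induction m generalizing B with
  | zero => exact ⟨0, le_rfl, by simp⟩
  | succ m ih =>
    refine ⟨⟨0, le_rfl, by simp⟩, ?_⟩
    simpa using ih (B := fun p => B p / N p) (fun p => div_nonneg (hB p) (hN p).le)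

lemma Sy.const (m : ℕ) (c A : ι → ℝ) (hc : ∀ p, |c p| ≤ A p) (hN : ∀ p, 0 < N p) :
    Sy N d m A (fun p _ => c p) := by
  cases m with
  | zero => exact ⟨1, zero_le_one, fun p k _ => by simpa using hc p⟩
  | succ m =>
    refine ⟨⟨1, zero_le_one, fun p k _ => by simpa using hc p⟩, ?_⟩
    simpa using Sy.zero m (B := fun p => A p / N p)
      (fun p => div_nonneg ((abs_nonneg _).trans (hc p)) (hN p).le) hN

/-- Reciprocals of affine sequences. -/
lemma Sy.inv (m : ℕ) (a b c : ℝ) (hc : 0 < c) (hN : ∀ p, 0 < N p)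
    (hlow : ∀ p k, d p ≤ k → c * N p ≤ a * (k : ℝ) + b) :
    Sy N d m (fun p => 1 / N p) (fun _ k => 1 / (a * (k : ℝ) + b)) := by
  have base : ∃ C : ℝ, 0 ≤ C ∧ ∀ p k, d p ≤ k →
      |(fun (_ : ι) (k : ℕ) => 1 / (a * (k : ℝ) + b)) p k| ≤ C * (1 / N p) := by
    refine ⟨1 / c, by positivity, fun p k hk => ?_⟩
    have h1 := hlow p k hk
    have h0 : 0 < c * N p := mul_pos hc (hN p)
    simp only
    rw [abs_of_pos (by have := h0.trans_le h1; positivity)]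
    calc 1 / (a * (k : ℝ) + b) ≤ 1 / (c * N p) := one_div_le_one_div_of_le h0 h1
      _ = _ := by rw [one_div_mul_one_div]
  induction m with
  | zero => exact base
  | succ m ih =>
    refine ⟨base, ?_⟩
    have h := (ih.mul (ih.shift 1)).cmul (fun _ => -a) (fun _ => |a|) (by simp)
    have h2 := h.congr (g := fun p k => 1 / (a * ((k + 1 : ℕ) : ℝ) + b) - 1 / (a * (k : ℝ) + b)) ?_
    · refine h2.mono hN |a| (abs_nonneg a) fun p => le_of_eq ?_
      field_simp
    · intro p k hk
      have h0 : 0 < c * N p := mul_pos hc (hN p)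
      have h1 := h0.trans_le (hlow p k hk)
      have h2 := h0.trans_le (hlow p (k + 1) (by omega))
      push_cast at h2 ⊢
      field_simp
      ring

/-- Samples of a smooth function with bounded derivatives on `[0,∞)`. -/
lemma fwd_bound (φ : ℝ → ℝ) (hφ : ContDiff ℝ (⊤ : ℕ∞) φ)
    (hb : ∀ i : ℕ, ∃ C : ℝ, 0 ≤ C ∧ ∀ t, 0 ≤ t → |iteratedDeriv i φ t| ≤ C) (m : ℕ)
    (hN : ∀ p, 0 < N p) :
    Sy N d m (fun _ => 1) (fun p k => φ ((k : ℝ) / N p)) := by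
  -- generalize to parameter dependent functions
  have key : ∀ (m : ℕ) (ψ : ι → ℝ → ℝ) (B : ι → ℝ), (∀ p, ContDiff ℝ (⊤ : ℕ∞) (ψ p)) →
      (∀ i : ℕ, ∃ C : ℝ, 0 ≤ C ∧ ∀ p t, 0 ≤ t → |iteratedDeriv i (ψ p) t| ≤ C * B p) →
      Sy N d m B (fun p k => ψ p ((k : ℝ) / N p)) := by
    intro m
    induction m with
    | zero =>
      intro ψ B hψ h
      obtain ⟨C, hC, h⟩ := h 0
      refine ⟨C, hC, fun p k _ => ?_⟩
      have := h p ((k : ℝ) / N p) (div_nonneg (Nat.cast_nonneg k) (hN p).le)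
      simpa using this
    | succ m ih =>
      intro ψ B hψ h
      refine ⟨?_, ?_⟩
      · obtain ⟨C, hC, h⟩ := h 0
        refine ⟨C, hC, fun p k _ => ?_⟩
        have := h p ((k : ℝ) / N p) (div_nonneg (Nat.cast_nonneg k) (hN p).le)
        simpa using this
      · have := ih (fun p t => ψ p (t + 1 / N p) - ψ p t) (fun p => B p / N p) ?_ ?_
        · refine this.congr fun p k _ => ?_
          simp only
          congr 2
          push_cast; ring
        · intro p
          exact ((hψ p).comp (contDiff_id.add contDiff_const)).sub (hψ p)
        · intro i
          obtain ⟨C, hC, h⟩ := h (i + 1)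
          refine ⟨C, hC, fun p t ht => ?_⟩
          have e : iteratedDeriv i (fun t => ψ p (t + 1 / N p) - ψ p t) t
              = iteratedDeriv i (ψ p) (t + 1 / N p) - iteratedDeriv i (ψ p) t := by
            have h1 : ContDiffAt ℝ i (fun t => ψ p (t + 1 / N p)) t :=
              (((hψ p).comp (contDiff_id.add contDiff_const)).of_le
                (by exact_mod_cast le_top)).contDiffAt
            have h2 : ContDiffAt ℝ i (ψ p) t :=
              ((hψ p).of_le (by exact_mod_cast le_top)).contDiffAt
            have := iteratedDeriv_fun_sub h1 h2
            rw [this, iteratedDeriv_comp_add_const]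
          rw [e]
          have hpos : 0 < 1 / N p := one_div_pos.mpr (hN p)
          have hd : Differentiable ℝ (iteratedDeriv i (ψ p)) :=
            (hψ p).differentiable_iteratedDeriv i (by exact_mod_cast WithTop.coe_lt_top i)
          have := (convex_Ici (0 : ℝ)).norm_image_sub_le_of_norm_deriv_le
            (f := iteratedDeriv i (ψ p)) (C := C * B p) (x := t) (y := t + 1 / N p)
            (fun x _ => hd x) (fun x hx => by
              rw [← iteratedDeriv_succ]; exact h p x hx) ht
              (by simp only [mem_Ici]; linarith)
          simp only [Real.norm_eq_abs] at this
          refine this.trans (le_of_eq ?_)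
          rw [add_sub_cancel_left, abs_of_pos hpos]; ring
  refine key m (fun _ => φ) _ (fun _ => hφ) fun i => ?_
  obtain ⟨C, hC, h⟩ := hb i
  exact ⟨C, hC, fun p t ht => by simpa using h t ht⟩

end Symbols


/-! ### Iterating the shifted Jacobi matrix on symbols -/

/-- The operator `T - x`, with `T` the Jacobi matrix with entries `1/2, b/2, (1+γ)/2`. -/
def Tm (b γ : ℕ → ℝ) (x : ℝ) (F : ℕ → ℝ) : ℕ → ℝ :=
  fun K => (F (K + 1) + (b K - 2 * x) * F K + (1 + γ K) * F (K - 1)) / 2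

lemma Tm_symbol {ι : Type} {N : ι → ℝ} {d : ι → ℕ} (hN : ∀ p, 1 ≤ N p) (hd : ∀ p, 1 ≤ d p)
    (b γ : ℕ → ℝ) (x σ : ι → ℝ) (v : ι → ℕ → ℝ) (hx : ∀ p, |x p| ≤ 1)
    (hσN : ∀ p, 1 / N p ≤ σ p) (hσx : ∀ p, 1 - x p ^ 2 ≤ σ p ^ 2)
    (hb : ∀ m, Sy N d m (fun p => 1 / N p ^ 2) (fun _ k => b k))
    (hγ : ∀ m, Sy N d m (fun p => 1 / N p ^ 2) (fun _ k => γ k))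
    (hv : ∀ p K, 1 ≤ K → v p (K + 2) =
      (2 * x p - b (K + 1)) * v p (K + 1) - (1 + γ (K + 1)) * v p K)
    (f0 : ι → ℕ → ℝ) (hf0 : ∀ m, Sy N d m (fun _ => 1) f0) (j : ℕ) :
    ∃ f g : ι → ℕ → ℝ, (∀ m, Sy N d m (fun p => (σ p / N p) ^ j) f) ∧
      (∀ m, Sy N d m (fun p => (σ p / N p) ^ j / σ p) g) ∧
      ∀ p k, d p ≤ k → (Tm b γ (x p))^[j] (fun k => f0 p k * v p k) (k + j) =
        f p k * v p (k + j) + g p k * (v p (k + j + 1) - x p * v p (k + j)) := by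
  have hN0 : ∀ p, 0 < N p := fun p => zero_lt_one.trans_le (hN p)
  have hσ : ∀ p, 0 < σ p := fun p => (one_div_pos.mpr (hN0 p)).trans_le (hσN p)
  induction j with
  | zero =>
    refine ⟨f0, fun _ _ => 0, by simpa using hf0, fun m => ?_, fun p k _ => by simp⟩
    exact Sy.zero m (fun p => by have := hσ p; positivity) hN0
  | succ j ih =>
    obtain ⟨f, g, hf, hg, hF⟩ := ih
    set Q : ι → ℝ := fun p => (σ p / N p) ^ j with hQ
    have hQ0 : ∀ p, 0 < Q p := fun p => by
      have := hσ p; have := hN0 p; simp only [hQ]; positivity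
    -- target weights
    have tf : ∀ p, (σ p / N p) ^ (j + 1) = Q p * σ p / N p := fun p => by
      simp only [hQ]; rw [pow_succ]; ring
    have tg : ∀ p, (σ p / N p) ^ (j + 1) / σ p = Q p / N p := fun p => by
      have := hσ p
      rw [tf]; field_simp
    -- comparison facts
    have c1 : ∀ p, 1 ≤ σ p * N p := fun p => by
      have := hσN p; rwa [div_le_iff₀ (hN0 p)] at this
    -- basic differences
    have d1f : ∀ m, Sy N d m (fun p => Q p / N p) (fun p k => f p (k + 1) - f p k) :=
      fun m => (hf (m + 1)).diff
    have d1g : ∀ m, Sy N d m (fun p => Q p / σ p / N p) (fun p k => g p (k + 1) - g p k) :=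
      fun m => (hg (m + 1)).diff
    have d2f : ∀ m, Sy N d m (fun p => Q p / N p / N p)
        (fun p k => f p (k + 2) - 2 * f p (k + 1) + f p k) :=
      fun m => ((d1f (m + 1)).diff).congr fun p k _ => by ring_nf
    have d2g : ∀ m, Sy N d m (fun p => Q p / σ p / N p / N p)
        (fun p k => g p (k + 2) - 2 * g p (k + 1) + g p k) :=
      fun m => ((d1g (m + 1)).diff).congr fun p k _ => by ring_nf
    have e2f : ∀ m, Sy N d m (fun p => Q p / N p) (fun p k => f p (k + 2) - f p k) :=
      fun m => (((d1f m).shift 1).add (d1f m)).congr fun p k _ => by ring_nf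
    have e2g : ∀ m, Sy N d m (fun p => Q p / σ p / N p) (fun p k => g p (k + 2) - g p k) :=
      fun m => (((d1g m).shift 1).add (d1g m)).congr fun p k _ => by ring_nf
    -- the potential ζ = x b + γ
    let ζ : ι → ℕ → ℝ := fun p k => x p * b k + γ k
    have hζ : ∀ m, Sy N d m (fun p => 1 / N p ^ 2) ζ := fun m => by
      have h1 := (hb m).cmul x (fun _ => 1) hx
      simp only [one_mul] at h1
      exact h1.add (hγ m)
    have dζ : ∀ m, Sy N d m (fun p => 1 / N p ^ 2 / N p)
        (fun p k => ζ p (k + j + 2) - ζ p (k + j + 1)) :=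
      fun m => (((hζ (m + 1)).diff).shift (j + 1)).congr fun p k _ => by
        simp only [show k + (j + 1) + 1 = k + j + 2 by omega, show k + (j + 1) = k + j + 1 by omega]
    refine ⟨fun p k => (1 / 2 : ℝ) * (x p * (f p (k + 2) - 2 * f p (k + 1) + f p k)
        + b (k + (j + 1)) * (f p (k + 1) - f p k)
        - (1 - x p ^ 2) * (g p (k + 2) - g p k)
        - g p (k + 2) * (ζ p (k + j + 2) - ζ p (k + j + 1))
        - ζ p (k + (j + 1)) * (g p (k + 2) - g p k)),
      fun p k => (1 / 2 : ℝ) * ((f p (k + 2) - f p k)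
        + x p * (g p (k + 2) - 2 * g p (k + 1) + g p k)
        - (b (k + 1 + (j + 1)) * g p (k + 1 + 1) - b (k + (j + 1)) * g p (k + 1))),
      fun m => ?_, fun m => ?_, fun p k hk => ?_⟩
    · simp only [tf]
      have a1 := (d2f m).cmul x (fun _ => 1) hx
      have a1' := a1.mono hN0 1 zero_le_one (B' := fun p => Q p * σ p / N p) fun p => by
        rw [one_mul, one_mul, div_div, div_le_div_iff₀ (by have := hN0 p; positivity) (hN0 p)]
        have := hN0 p; have := hQ0 p; have := c1 p
        nlinarith [mul_pos (hQ0 p) (hN0 p)]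
      have a2 := ((hb m).shift (j + 1)).mul (d1f m)
      have a2' := a2.mono hN0 1 zero_le_one (B' := fun p => Q p * σ p / N p) fun p => by
        have h1 := hN0 p; have h2 := hQ0 p; have h3 := c1 p; have h4 := hN p; have h5 := hσ p
        have : 1 / N p ^ 2 * (Q p / N p) = (Q p / N p) * (1 / N p) * (1 / N p) := by
          field_simp
        rw [this]
        calc (Q p / N p) * (1 / N p) * (1 / N p) ≤ (Q p / N p) * σ p * 1 := by
              gcongr
              · exact hσN p
              · rw [div_le_one h1]; exact h4
          _ = _ := by ring
      have a3 := (e2g m).cmul (fun p => 1 - x p ^ 2) (fun p => σ p ^ 2) (fun p => by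
        rw [abs_of_nonneg]; exact hσx p
        have := hx p
        have := sq_abs (x p); nlinarith [abs_nonneg (x p)])
      have a3' := a3.mono hN0 1 zero_le_one (B' := fun p => Q p * σ p / N p) fun p => by
        have h1 := hN0 p; have h2 := hσ p
        apply le_of_eq; field_simp
      have a4 := ((hg m).shift 2).mul (dζ m)
      have a4' := a4.mono hN0 1 zero_le_one (B' := fun p => Q p * σ p / N p) fun p => by
        have h1 := hN0 p; have h2 := hσ p; have h3 := hQ0 p
        have hs : 1 / (N p * σ p) ≤ 1 := by
          rw [div_le_one (by positivity)]; have := c1 p; linarith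
        have : Q p / σ p * (1 / N p ^ 2 / N p) = (Q p / N p) * (1 / N p) * (1 / (N p * σ p)) := by
          field_simp
        have e : (σ p / N p) ^ j = Q p := rfl
        rw [e, this]
        calc (Q p / N p) * (1 / N p) * (1 / (N p * σ p)) ≤ (Q p / N p) * σ p * 1 := by
              gcongr
              exact hσN p
          _ = _ := by ring
      have a5 := ((hζ m).shift (j + 1)).mul (e2g m)
      have a5' := a5.mono hN0 1 zero_le_one (B' := fun p => Q p * σ p / N p) fun p => by
        have h1 := hN0 p; have h2 := hσ p; have h3 := hQ0 p
        have hs : 1 / (N p * σ p) ≤ 1 := by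
          rw [div_le_one (by positivity)]; have := c1 p; linarith
        have : 1 / N p ^ 2 * (Q p / σ p / N p) = (Q p / N p) * (1 / N p) * (1 / (N p * σ p)) := by
          field_simp
        rw [this]
        calc (Q p / N p) * (1 / N p) * (1 / (N p * σ p)) ≤ (Q p / N p) * σ p * 1 := by
              gcongr
              exact hσN p
          _ = _ := by ring
      have := ((((a1'.add a2').sub a3').sub a4').sub a5').cmul (fun _ => 1 / 2) (fun _ => 1)
        (fun _ => by norm_num [abs_of_pos])
      simpa only [one_mul] using this
    · simp only [tg]
      have a1 := e2f m
      have a2 := (d2g m).cmul x (fun _ => 1) hx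
      have a2' := a2.mono hN0 1 zero_le_one (B' := fun p => Q p / N p) fun p => by
        have h1 := hN0 p; have h2 := hσ p; have h3 := hQ0 p
        have hs : 1 / (N p * σ p) ≤ 1 := by
          rw [div_le_one (by positivity)]; have := c1 p; linarith
        have : Q p / σ p / N p / N p = (Q p / N p) * (1 / (N p * σ p)) := by
          field_simp
        rw [this, one_mul, one_mul]
        exact mul_le_of_le_one_right (by positivity) hs
      have a3 := (((hb (m + 1)).shift (j + 1)).mul ((hg (m + 1)).shift 1)).diff
      have a3' := a3.mono hN0 1 zero_le_one (B' := fun p => Q p / N p) fun p => by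
        have h1 := hN0 p; have h2 := hσ p; have h3 := hQ0 p
        have hs : 1 / (N p * σ p) ≤ 1 := by
          rw [div_le_one (by positivity)]; have := c1 p; linarith
        have hs' : 1 / N p ≤ 1 := by
          rw [div_le_one (by positivity)]; exact hN p
        have : 1 / N p ^ 2 * (Q p / σ p) / N p = (Q p / N p) * (1 / N p) * (1 / (N p * σ p)) := by
          field_simp
        have e : (σ p / N p) ^ j = Q p := rfl
        rw [e, this, one_mul]
        calc (Q p / N p) * (1 / N p) * (1 / (N p * σ p)) ≤ (Q p / N p) * 1 * 1 := by
              gcongr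
          _ = _ := by ring
      have := ((a1.add a2').sub a3').cmul (fun _ => 1 / 2) (fun _ => 1)
        (fun _ => by norm_num [abs_of_pos])
      simpa only [one_mul] using this
    · rw [Function.iterate_succ_apply']
      have hd1 := hd p
      have F0 := hF p k hk
      have F1 := hF p (k + 1) (by omega)
      have F2 := hF p (k + 2) (by omega)
      set F := (Tm b γ (x p))^[j] (fun k => f0 p k * v p k)
      simp only [Tm]
      rw [show k + (j + 1) + 1 = k + 2 + j by omega, show k + (j + 1) - 1 = k + j by omega,
        show k + (j + 1) = k + 1 + j by omega, F0, F1, F2]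
      have r1 := hv p (k + j) (by omega)
      have r2 := hv p (k + j + 1) (by omega)
      rw [show k + j + 2 = k + 2 + j by omega, show k + j + 1 = k + 1 + j by omega] at r1
      rw [show k + j + 1 + 2 = k + 2 + j + 1 by omega, show k + j + 1 + 1 = k + 2 + j by omega,
        show k + j + 1 = k + 1 + j by omega] at r2
      simp only [ζ]
      rw [show k + j + 2 = k + 2 + j by omega, show k + j + 1 = k + 1 + j by omega,
        show k + 1 + (j + 1) = k + 2 + j by omega, show k + 1 + 1 = k + 2 by omega,
        show k + 1 + j + 1 = k + 2 + j by omega]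
      rw [r2]
      have r1' : (1 + γ (k + 1 + j)) * v p (k + j) =
        (2 * x p - b (k + 1 + j)) * v p (k + 1 + j) - v p (k + 2 + j) := by rw [r1]; ring
      generalize v p (k + 2 + j) = v2 at *
      generalize v p (k + 1 + j) = v1 at *
      generalize v p (k + j) = v0 at *
      linear_combination (1 / 2 * (f p k - x p * g p k)) * r1'


/-! ### Algebra of Jacobi polynomials -/

lemma poch_zero (a : ℝ) : poch a 0 = 1 := by simp [poch]

lemma poch_succ (a : ℝ) (n : ℕ) : poch a (n + 1) = poch a n * (a + n) := by
  simp [poch, Finset.prod_range_succ]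

lemma poch_succ' (a : ℝ) (n : ℕ) : poch a (n + 1) = a * poch (a + 1) n := by
  simp only [poch, Finset.prod_range_succ']
  rw [mul_comm]
  congr 1
  · simp
  · refine Finset.prod_congr rfl fun i _ => ?_
    push_cast; ring

lemma poch_pos {a : ℝ} (ha : 0 < a) (n : ℕ) : 0 < poch a n :=
  Finset.prod_pos fun i _ => by positivity

lemma poch_neg_eq_zero {k i : ℕ} (h : k < i) : poch (-(k : ℝ)) i = 0 :=
  Finset.prod_eq_zero (Finset.mem_range.mpr h) (by simp)

/-- Leading factor. -/
def Ac (α β : ℝ) (k : ℕ) : ℝ :=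
  2 ^ k / poch ((k : ℝ) + α + β + 1) k * poch (α + 1) k

/-- Monic Jacobi polynomial. -/
def pm (α β : ℝ) (k : ℕ) (x : ℝ) : ℝ := k.factorial * J α β k x

/-- The coefficients of `pm` in powers of `x - 1`. -/
def mc (α β : ℝ) (k i : ℕ) : ℝ :=
  Ac α β k * (poch (-(k : ℝ)) i * poch ((k : ℝ) + α + β + 1) i /
    (poch (α + 1) i * i.factorial)) * (-1 / 2) ^ i

lemma mc_eq_zero (α β : ℝ) {k i : ℕ} (h : k < i) : mc α β k i = 0 := by
  simp [mc, poch_neg_eq_zero h]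

lemma J_eq (α β : ℝ) (k M : ℕ) (hM : k + 1 ≤ M) (x : ℝ) :
    pm α β k x = ∑ i ∈ Finset.range M, mc α β k i * (x - 1) ^ i := by
  rw [← Finset.sum_subset (Finset.range_mono hM)]
  · have hf : (k.factorial : ℝ) ≠ 0 := by exact_mod_cast k.factorial_ne_zero
    simp only [pm, J, JP, mc, Ac, Finset.mul_sum]
    refine Finset.sum_congr rfl fun i _ => ?_
    rw [show (1 - x) / 2 = (-1 / 2) * (x - 1) by ring, mul_pow]
    field_simp
  · intro i _ hi
    rw [mc_eq_zero α β (by simpa using hi), zero_mul]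

/-- Diagonal recurrence coefficient (doubled). -/
def bq (α β : ℝ) (k : ℕ) : ℝ :=
  if k = 0 then 2 * (β - α) / (α + β + 2)
  else 2 * (β ^ 2 - α ^ 2) / ((2 * k + α + β) * (2 * k + α + β + 2))

/-- Lower recurrence coefficient (times four). -/
def cq (α β : ℝ) (k : ℕ) : ℝ :=
  if k = 0 then 0
  else if k = 1 then 16 * (1 + α) * (1 + β) / ((2 + α + β) ^ 2 * (3 + α + β))
  else 16 * k * (k + α) * (k + β) * (k + α + β) /
    ((2 * k + α + β) ^ 2 * (2 * k + α + β + 1) * (2 * k + α + β - 1))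

lemma bq_symm (α β : ℝ) (k : ℕ) : bq β α k = - bq α β k := by
  unfold bq
  split_ifs
  · rw [show β + α + 2 = α + β + 2 by ring]; ring
  · rw [show 2 * (k : ℝ) + β + α = 2 * k + α + β by ring]; ring

lemma cq_symm (α β : ℝ) (k : ℕ) : cq β α k = cq α β k := by
  unfold cq
  split_ifs
  · rfl
  · rw [show 2 + β + α = 2 + α + β by ring, show 3 + β + α = 3 + α + β by ring]; ring
  · rw [show 2 * (k : ℝ) + β + α = 2 * k + α + β by ring]; ring

section alg
variable {α β : ℝ}

lemma Ac_succ (hα : -1 < α) (hβ : -1 < β) (k : ℕ) (hk : 1 ≤ k) :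
    Ac α β (k + 1) = Ac α β k * (2 * (α + 1 + k) * (k + α + β + 1) /
      ((2 * k + α + β + 1) * (2 * k + α + β + 2))) := by
  have hk' : (1 : ℝ) ≤ k := by exact_mod_cast hk
  have h1 : 0 < (k : ℝ) + α + β + 1 := by linarith
  have h2 : 0 < 2 * (k : ℝ) + α + β + 1 := by linarith
  have h3 : 0 < 2 * (k : ℝ) + α + β + 2 := by linarith
  have e : poch ((k : ℝ) + 1 + α + β + 1) (k + 1) * ((k : ℝ) + α + β + 1) =
      poch ((k : ℝ) + α + β + 1) k * (2 * k + α + β + 1) * (2 * k + α + β + 2) := by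
    have a1 := poch_succ' ((k : ℝ) + α + β + 1) (k + 1)
    rw [show (k : ℝ) + α + β + 1 + 1 = (k : ℝ) + 1 + α + β + 1 by ring] at a1
    rw [mul_comm, ← a1, poch_succ, poch_succ]
    push_cast; ring
  have e' : poch ((k : ℝ) + 1 + α + β + 1) (k + 1) =
      poch ((k : ℝ) + α + β + 1) k * (2 * k + α + β + 1) * (2 * k + α + β + 2) /
        ((k : ℝ) + α + β + 1) := by
    rw [← e]; field_simp
  have hp := poch_pos h1 k
  simp only [Ac, Nat.cast_add, Nat.cast_one, e', poch_succ, pow_succ]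
  field_simp

lemma rec_key (L D a i : ℝ) (h0 : D ≠ 0) (h1 : D + 1 ≠ 0) (h2 : D + 2 ≠ 0) (h3 : D - 1 ≠ 0) :
    4 * L * (a + 2 + i) * (i + 2) / ((D - 1) * D) + -2 * L * (i + 1 - L) * (D - L + 2 + i) / ((D - 1) * D)
    = 4 * (L + 1) * L * (a + 1 + L) * (D - L + 2 + i) * (D - L + 3 + i) / ((D - 1) * D * (D + 1) * (D + 2))
      + (D - 2 * L - 2 * a) * (D - 2 * L) / (D * (D + 2)) *
        (-2 * L * (i + 1 - L) * (D - L + 2 + i) / ((D - 1) * D))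
      + 4 * L * (D - L - a) * (D - L) * (i + 1 - L) * (i + 2 - L)
        / (D ^ 2 * (D + 1) * (D - 1)) := by
  field_simp
  ring

lemma bq_eq (k : ℕ) (hk : 1 ≤ k) (D : ℝ) (hD : D = 2 * k + α + β) :
    bq α β k / 2 = (D - 2 * k - 2 * α) * (D - 2 * k) / (D * (D + 2)) := by
  have : k ≠ 0 := by omega
  simp only [bq, this, if_false]
  rw [← hD, show β = D - 2 * k - α by rw [hD]; ring]; ring

lemma cq_eq (k : ℕ) (hk : 2 ≤ k) (D : ℝ) (hD : D = 2 * k + α + β) :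
    cq α β k / 4 = 4 * k * (k + α) * (D - k - α) * (D - k) / (D ^ 2 * (D + 1) * (D - 1)) := by
  have h1 : k ≠ 0 := by omega
  have h2 : k ≠ 1 := by omega
  simp only [cq, h1, h2, if_false]
  rw [← hD, show β = D - 2 * k - α by rw [hD]; ring]; ring

set_option maxHeartbeats 1000000 in
lemma mc_rec (hα : -1 < α) (hβ : -1 < β) (k i : ℕ) (hk : 2 ≤ k) :
    (if i = 0 then 0 else mc α β k (i - 1)) + mc α β k i =
      mc α β (k + 1) i + bq α β k / 2 * mc α β k i + cq α β k / 4 * mc α β (k - 1) i := by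
  obtain ⟨l, rfl⟩ : ∃ l, k = l + 1 := ⟨k - 1, by omega⟩
  have hl : (1 : ℝ) ≤ l := by exact_mod_cast (by omega : 1 ≤ l)
  obtain ⟨L, hL⟩ : ∃ L : ℝ, L = l + 1 := ⟨_, rfl⟩
  obtain ⟨D, hD⟩ : ∃ D : ℝ, D = 2 * L + α + β := ⟨_, rfl⟩
  have hβD : β = D - 2 * L - α := by rw [hD]; ring
  have hlL : (l : ℝ) = L - 1 := by rw [hL]; ring
  have d0 : D ≠ 0 := by linarith
  have d1 : D + 1 ≠ 0 := by linarith
  have d2 : D + 2 ≠ 0 := by linarith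
  have d3 : D - 1 ≠ 0 := by linarith
  have L0 : L ≠ 0 := by linarith
  have L1 : L + 1 ≠ 0 := by linarith
  have aL : α + L ≠ 0 := by linarith
  have A1 : Ac α β (l + 1) = Ac α β l * (2 * (α + L) * (D - L) / ((D - 1) * D)) := by
    rw [Ac_succ hα hβ l (by omega),
      show α + 1 + (l : ℝ) = α + L by rw [hL]; ring,
      show (l : ℝ) + α + β + 1 = D - L by rw [hD, hL]; ring,
      show 2 * (l : ℝ) + α + β + 1 = D - 1 by rw [hD, hL]; ring,
      show 2 * (l : ℝ) + α + β + 2 = D by rw [hD, hL]; ring]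
  have A2 : Ac α β (l + 1 + 1) = Ac α β l * (2 * (α + L) * (D - L) / ((D - 1) * D)) *
      (2 * (α + 1 + L) * (D - L + 1) / ((D + 1) * (D + 2))) := by
    rw [Ac_succ hα hβ (l + 1) (by omega), A1]
    push_cast
    rw [← hL, show L + α + β + 1 = D - L + 1 by rw [hD]; ring,
      show 2 * L + α + β + 1 = D + 1 by rw [hD],
      show 2 * L + α + β + 2 = D + 2 by rw [hD]]
  rw [bq_eq (l + 1) (by omega) D (by rw [hD, hL]; push_cast; ring),
    cq_eq (l + 1) (by omega) D (by rw [hD, hL]; push_cast; ring)]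
  simp only [Nat.add_sub_cancel, mc]
  rw [A2, A1]
  push_cast
  rw [← hL, show L + 1 + α + β + 1 = D - L + 2 by rw [hD]; ring,
    show L + α + β + 1 = D - L + 1 by rw [hD]; ring,
    show (l : ℝ) + α + β + 1 = D - L by rw [hD, hL]; ring, hlL]
  generalize Ac α β l = A
  rcases i with _ | _ | i
  · simp only [poch_zero, if_true, Nat.factorial_zero, pow_zero]
    field_simp
    ring
  · have q1 : α + 1 ≠ 0 := by linarith
    simp only [zero_add, poch_succ, poch_zero, Nat.factorial_zero, Nat.factorial_succ,
      Nat.cast_zero, Nat.sub_self, one_ne_zero, if_false, Nat.cast_one, Nat.cast_mul, Nat.cast_add, add_zero, mul_one, pow_one, pow_zero, one_mul]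
    field_simp
    ring
  · have q1 : poch (α + 1) i ≠ 0 := (poch_pos (by linarith) i).ne'
    have q2 : α + 1 + (i : ℝ) ≠ 0 := by have : (0 : ℝ) ≤ i := Nat.cast_nonneg i; linarith
    have q3 : α + 1 + ((i : ℝ) + 1) ≠ 0 := by have : (0 : ℝ) ≤ i := Nat.cast_nonneg i; linarith
    have q4 : (i.factorial : ℝ) ≠ 0 := by exact_mod_cast i.factorial_ne_zero
    have q5 : (i : ℝ) + 1 ≠ 0 := by positivity
    have q6 : (i : ℝ) + 1 + 1 ≠ 0 := by positivity
    obtain ⟨Y, hY⟩ : ∃ Y, Y = poch (-(L - 1)) i := ⟨_, rfl⟩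
    obtain ⟨Z, hZ⟩ : ∃ Z, Z = poch (D - L + 2) i := ⟨_, rfl⟩
    have y0 : poch (-(L - 1)) (i + 1 + 1) = Y * (i + 1 - L) * (i + 2 - L) := by
      rw [poch_succ, poch_succ, hY]; push_cast; ring
    have y1' : poch (-L) (i + 1) = (-L) * Y := by
      rw [poch_succ', show -L + 1 = -(L - 1) by ring, hY]
    have y1 : poch (-L) (i + 1 + 1) = (-L) * Y * (i + 1 - L) := by
      rw [poch_succ, y1']; push_cast; ring
    have y2 : poch (-(L + 1)) (i + 1 + 1) = (L + 1) * L * Y := by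
      rw [poch_succ', show -(L + 1) + 1 = -L by ring, y1']; ring
    have z2 : poch (D - L + 2) (i + 1 + 1) = Z * (D - L + 2 + i) * (D - L + 3 + i) := by
      rw [poch_succ, poch_succ, hZ]; push_cast; ring
    have z1' : poch (D - L + 1) (i + 1) = (D - L + 1) * Z := by
      rw [poch_succ', hZ, show D - L + 1 + 1 = D - L + 2 by ring]
    have z1 : poch (D - L + 1) (i + 1 + 1) = (D - L + 1) * Z * (D - L + 2 + i) := by
      rw [poch_succ, z1']; push_cast; ring
    have z0 : poch (D - L) (i + 1 + 1) = (D - L) * (D - L + 1) * Z := by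
      rw [poch_succ', z1']; ring
    rw [y0, y1, y2, z0, z1, z2]
    simp only [Nat.add_sub_cancel, Nat.succ_ne_zero, if_false]
    rw [y1', z1']
    simp only [poch_succ, Nat.factorial_succ, pow_succ, Nat.cast_mul, Nat.cast_add, Nat.cast_one]
    have key := rec_key L D α i d0 d1 d2 d3
    obtain ⟨Q, hQ⟩ : ∃ Q : ℝ, Q = A * Y * Z * ((-1 / 2) ^ i * (1 / 4)) * (α + L) * (D - L)
      * (D - L + 1) / (poch (α + 1) i * i.factorial * (α + 1 + i) * (α + 1 + (i + 1)) * (i + 1)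
      * (i + 1 + 1)) := ⟨_, rfl⟩
    have key2 : Q * (4 * L * (α + 2 + i) * (i + 2) / ((D - 1) * D))
        + Q * (-2 * L * (i + 1 - L) * (D - L + 2 + i) / ((D - 1) * D))
      = Q * (4 * (L + 1) * L * (α + 1 + L) * (D - L + 2 + i) * (D - L + 3 + i) /
          ((D - 1) * D * (D + 1) * (D + 2)))
        + (D - 2 * L - 2 * α) * (D - 2 * L) / (D * (D + 2)) *
        (Q * (-2 * L * (i + 1 - L) * (D - L + 2 + i) / ((D - 1) * D)))
        + Q * (4 * L * (D - L - α) * (D - L) * (i + 1 - L) * (i + 2 - L)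
        / (D ^ 2 * (D + 1) * (D - 1))) := by linear_combination Q * key
    clear key
    generalize ((-1 / 2 : ℝ) ^ i) = P at *
    convert key2 using 1
    · congr 1
      · rw [hQ]; field_simp; ring
      · rw [hQ]; field_simp; ring
    · congr 1
      · congr 1
        · rw [hQ]; field_simp
        · generalize (D - 2 * L - 2 * α) * (D - 2 * L) / (D * (D + 2)) = bb
          rw [hQ]; ring
      · rw [hQ]
        ring

lemma pm_rec (hα : -1 < α) (hβ : -1 < β) (k : ℕ) (x : ℝ) :
    x * pm α β k x = pm α β (k + 1) x + bq α β k / 2 * pm α β k x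
      + cq α β k / 4 * pm α β (k - 1) x := by
  have e2 : α + β + 2 ≠ 0 := by linarith
  have e3 : α + β + 3 ≠ 0 := by linarith
  have e4 : α + β + 4 ≠ 0 := by linarith
  have a1 : α + 1 ≠ 0 := by linarith
  have a2 : α + 2 ≠ 0 := by linarith
  rcases k with _ | _ | k
  · simp only [pm, J, JP, zero_add, Finset.sum_range_succ, Finset.sum_range_zero, poch_succ, poch_zero,
      bq, cq, Nat.factorial]
    simp
    have : 1 + α + β + 1 ≠ 0 := by linarith
    field_simp
    ring
  · obtain ⟨D, hD⟩ : ∃ D : ℝ, D = α + β + 2 := ⟨_, rfl⟩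
    have hβD : β = D - 2 - α := by rw [hD]; ring
    have d0 : D ≠ 0 := by rw [hD]; exact e2
    have d1 : D + 1 ≠ 0 := by rw [hD]; contrapose! e3; linarith
    have d2 : D + 2 ≠ 0 := by rw [hD]; contrapose! e4; linarith
    have p0 : pm α β 0 x = 1 := by simp [pm, J, JP, poch_zero]
    have p1 : pm α β 1 x = 2 * (α + 1) / D + (x - 1) := by
      rw [J_eq α β 1 2 (by omega)]
      simp only [Finset.sum_range_succ, Finset.sum_range_zero, mc, Ac, poch, Finset.prod_range_succ,
        Finset.prod_range_zero, Nat.factorial]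
      push_cast
      rw [show (1 : ℝ) + α + β + 1 + 0 = D by rw [hD]; ring]
      simp only [add_zero]
      field_simp
      ring
    have p2 : pm α β 2 x = 4 * (α + 1) * (α + 2) / ((D + 1) * (D + 2)) +
        4 * (α + 2) / (D + 2) * (x - 1) + (x - 1) ^ 2 := by
      rw [J_eq α β 2 3 (by omega)]
      simp only [Finset.sum_range_succ, Finset.sum_range_zero, mc, Ac, poch, Finset.prod_range_succ,
        Finset.prod_range_zero, Nat.factorial]
      push_cast
      rw [show (2 : ℝ) + α + β + 1 + 0 = D + 1 by rw [hD]; ring,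
        show (2 : ℝ) + α + β + 1 + 1 = D + 2 by rw [hD]; ring,
        show α + 1 + 1 = α + 2 by ring]
      simp only [add_zero]
      field_simp
      ring
    have hb : bq α β 1 / 2 = (D - 2 - 2 * α) * (D - 2) / (D * (D + 2)) := by
      rw [bq_eq 1 le_rfl D (by rw [hD]; push_cast; ring)]; push_cast; ring
    have hc : cq α β 1 / 4 = 4 * (1 + α) * (D - 1 - α) / (D ^ 2 * (D + 1)) := by
      simp only [cq, one_ne_zero, if_false, if_true]
      rw [show 2 + α + β = D by rw [hD]; ring, show 3 + α + β = D + 1 by rw [hD]; ring,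
        show 1 + β = D - 1 - α by rw [hD]; ring]
      ring
    rw [zero_add, hb, hc, p1, p2, show (1 - 1 : ℕ) = 0 from rfl, p0]
    field_simp
    ring
  · rw [J_eq α β (k + 2) (k + 5) (by omega), J_eq α β (k + 2 + 1) (k + 5) (by omega),
      J_eq α β (k + 2 - 1) (k + 5) (by omega)]
    have key : ∀ i, mc α β (k + 2 + 1) i + bq α β (k + 2) / 2 * mc α β (k + 2) i
        + cq α β (k + 2) / 4 * mc α β (k + 2 - 1) i =
        (if i = 0 then 0 else mc α β (k + 2) (i - 1)) + mc α β (k + 2) i := fun i =>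
      (mc_rec hα hβ (k + 2) i (by omega)).symm
    rw [Finset.mul_sum, Finset.mul_sum, Finset.mul_sum, ← Finset.sum_add_distrib,
      ← Finset.sum_add_distrib]
    have : ∀ i ∈ Finset.range (k + 5), mc α β (k + 2 + 1) i * (x - 1) ^ i +
        bq α β (k + 2) / 2 * (mc α β (k + 2) i * (x - 1) ^ i) +
        cq α β (k + 2) / 4 * (mc α β (k + 2 - 1) i * (x - 1) ^ i) =
        (if i = 0 then 0 else mc α β (k + 2) (i - 1)) * (x - 1) ^ i
          + mc α β (k + 2) i * (x - 1) ^ i := fun i _ => by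
      rw [← add_mul, ← key i]; ring
    rw [Finset.sum_congr rfl this, Finset.sum_add_distrib]
    have h2 : ∑ i ∈ Finset.range (k + 5), (if i = 0 then 0 else mc α β (k + 2) (i - 1)) *
        (x - 1) ^ i = ∑ i ∈ Finset.range (k + 5), (x - 1) * (mc α β (k + 2) i * (x - 1) ^ i) := by
      rw [Finset.sum_range_succ', Finset.sum_range_succ (n := k + 4),
        mc_eq_zero α β (by omega : k + 2 < k + 4)]
      simp only [if_true, zero_mul, mul_zero, add_zero]
      refine Finset.sum_congr rfl fun i _ => ?_
      simp only [Nat.succ_ne_zero, if_false, Nat.add_sub_cancel, pow_succ]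
      ring
    rw [h2, ← Finset.sum_add_distrib]
    exact Finset.sum_congr rfl fun i _ => by ring

lemma pm_zero (x : ℝ) : pm α β 0 x = 1 := by
  simp [pm, J, JP, poch_zero]

lemma pm_symm (hα : -1 < α) (hβ : -1 < β) (k : ℕ) (x : ℝ) : pm β α k (-x) = (-1) ^ k * pm α β k x := by
  induction k using Nat.strong_induction_on with
  | _ k ih =>
    rcases k with _ | k
    · rw [pm_zero, pm_zero]; simp
    · have h1 := pm_rec hα hβ k x
      have h2 := pm_rec hβ hα k (-x)
      rw [bq_symm, cq_symm, ih k (by omega)] at h2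
      rcases k with _ | k
      · have : cq α β 0 = 0 := by simp [cq]
        rw [this] at h1 h2
        simp at h1 h2 ⊢
        linarith
      · simp only [Nat.add_sub_cancel] at h1 h2
        rw [ih k (by omega)] at h2
        rw [pow_succ (-1 : ℝ) k] at h2
        rw [pow_succ (-1 : ℝ) (k + 1), pow_succ (-1 : ℝ) k]
        linear_combination (-1) * h2 + (-1) ^ k * h1
end alg


/-! ### The measure -/

lemma w_pos (α β : ℝ) {x : ℝ} (hx : x ∈ Ioo (-1 : ℝ) 1) : 0 < w α β x :=
  mul_pos (Real.rpow_pos_of_pos (by linarith [hx.2]) _) (Real.rpow_pos_of_pos (by linarith [hx.1]) _)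

lemma w_meas (α β : ℝ) : Measurable (w α β) := by
  unfold w; fun_prop

lemma w_symm (α β x : ℝ) : w β α (-x) = w α β x := by
  simp only [w]; rw [show 1 - -x = 1 + x by ring, show 1 + -x = 1 - x by ring, mul_comm]

lemma w_int_right (α β : ℝ) (hα : -1 < α) : IntervalIntegrable (w α β) volume 0 1 := by
  have h1 : IntervalIntegrable (fun x : ℝ => (1 - x) ^ α) volume 0 1 := by
    have := (intervalIntegral.intervalIntegrable_rpow' (a := 1) (b := 0) hα).comp_sub_left 1
    simpa using this
  refine h1.mul_continuousOn ?_
  refine ContinuousOn.rpow_const (by fun_prop) fun x hx => Or.inl ?_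
  rw [uIcc_of_le zero_le_one] at hx
  linarith [hx.1]

lemma w_ii (α β : ℝ) (hα : -1 < α) (hβ : -1 < β) : IntervalIntegrable (w α β) volume (-1) 1 := by
  refine IntervalIntegrable.trans (b := 0) ?_ (w_int_right α β hα)
  have := (w_int_right β α hβ).comp_sub_left 0
  simp only [zero_sub, sub_zero] at this
  exact this.symm.congr fun x _ => w_symm α β x

lemma w_io (α β : ℝ) (hα : -1 < α) (hβ : -1 < β) : IntegrableOn (w α β) (Ioo (-1 : ℝ) 1) :=
  ((intervalIntegrable_iff_integrableOn_Ioo_of_le (by norm_num)).1 (w_ii α β hα hβ))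

/-- The Jacobi measure. -/
def mu (α β : ℝ) : Measure ℝ :=
  (volume.restrict (Ioo (-1 : ℝ) 1)).withDensity fun x => ENNReal.ofReal (w α β x)

lemma mu_ae (α β : ℝ) : ∀ᵐ x ∂(mu α β), x ∈ Ioo (-1 : ℝ) 1 := by
  refine (withDensity_absolutelyContinuous _ _).ae_le ?_
  exact ae_restrict_mem measurableSet_Ioo

lemma int_mu (α β : ℝ) (f : ℝ → ℝ) :
    ∫ x, f x ∂(mu α β) = ∫ x in Ioo (-1 : ℝ) 1, f x * w α β x := by
  unfold mu
  rw [integral_withDensity_eq_integral_toReal_smul (w_meas α β).ennreal_ofReal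
    (Filter.Eventually.of_forall fun x => ENNReal.ofReal_lt_top)]
  refine setIntegral_congr_fun measurableSet_Ioo fun x hx => ?_
  simp only [smul_eq_mul, ENNReal.toReal_ofReal (w_pos α β hx).le]
  ring

lemma integrable_mu (α β : ℝ) (f : ℝ → ℝ) :
    Integrable f (mu α β) ↔ IntegrableOn (fun x => f x * w α β x) (Ioo (-1 : ℝ) 1) := by
  unfold mu
  rw [integrable_withDensity_iff (w_meas α β).ennreal_ofReal
    (Filter.Eventually.of_forall fun x => ENNReal.ofReal_lt_top)]
  refine integrableOn_congr_fun (fun x hx => ?_) measurableSet_Ioo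
  simp only [ENNReal.toReal_ofReal (w_pos α β hx).le]

lemma mu_finite {α β : ℝ} (hα : -1 < α) (hβ : -1 < β) : IsFiniteMeasure (mu α β) := by
  unfold mu
  exact isFiniteMeasure_withDensity_ofReal (w_io α β hα hβ).2

lemma mu_pos {α β : ℝ} (hα : -1 < α) (hβ : -1 < β) : 0 < ∫ _x, (1 : ℝ) ∂(mu α β) := by
  rw [int_mu]
  simp only [one_mul]
  rw [setIntegral_pos_iff_support_of_nonneg_ae]
  · have : Ioo (-1 : ℝ) 1 ⊆ Function.support (w α β) ∩ Ioo (-1 : ℝ) 1 := fun x hx =>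
      ⟨(w_pos α β hx).ne', hx⟩
    refine lt_of_lt_of_le ?_ (measure_mono this)
    simp
  · filter_upwards [ae_restrict_mem measurableSet_Ioo] with x hx using (w_pos α β hx).le
  · exact w_io α β hα hβ

lemma cont_int {α β : ℝ} (hα : -1 < α) (hβ : -1 < β) {f : ℝ → ℝ} (hf : Continuous f) :
    Integrable f (mu α β) := by
  have := mu_finite hα hβ
  obtain ⟨C, hC⟩ := isCompact_Icc.exists_bound_of_continuousOn (s := Icc (-1 : ℝ) 1) hf.continuousOn
  refine Integrable.of_bound hf.aestronglyMeasurable C ?_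
  filter_upwards [mu_ae α β] with x hx using hC x ⟨hx.1.le, hx.2.le⟩

lemma mul_int {α β : ℝ} {f g : ℝ → ℝ} (hf : Integrable f (mu α β)) (hg : Continuous g) :
    Integrable (fun x => f x * g x) (mu α β) := by
  obtain ⟨C, hC⟩ := isCompact_Icc.exists_bound_of_continuousOn (s := Icc (-1 : ℝ) 1) hg.continuousOn
  refine hf.mul_bdd (c := C) hg.aestronglyMeasurable ?_
  filter_upwards [mu_ae α β] with x hx using hC x ⟨hx.1.le, hx.2.le⟩

/-! ### Differential equation and orthogonality -/

open Polynomial in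
/-- `pm` as a polynomial in `x - 1`. -/
def QP (α β : ℝ) (k : ℕ) : Polynomial ℝ :=
  ∑ i ∈ Finset.range (k + 1), Polynomial.monomial i (mc α β k i)

lemma QP_coeff (α β : ℝ) (k i : ℕ) : (QP α β k).coeff i = mc α β k i := by
  simp only [QP, Polynomial.finsetSum_coeff, Polynomial.coeff_monomial]
  by_cases h : i ∈ Finset.range (k + 1)
  · simp [h]
  · rw [mc_eq_zero α β (by simpa using h)]
    refine Finset.sum_eq_zero fun j hj => ?_
    split_ifs with h3
    · subst h3; contradiction
    · rfl

lemma pm_eval (α β : ℝ) (k : ℕ) (x : ℝ) : pm α β k x = (QP α β k).eval (x - 1) := by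
  rw [J_eq α β k (k + 1) le_rfl, QP, Polynomial.eval_finsetSum]
  simp

lemma pm_cont (α β : ℝ) (k : ℕ) : Continuous (pm α β k) := by
  have : pm α β k = fun x => (QP α β k).eval (x - 1) := funext fun x => pm_eval α β k x
  rw [this]
  exact (QP α β k).continuous.comp (by fun_prop)

/-- Eigenvalue. -/
def lam (α β : ℝ) (k : ℕ) : ℝ := k * (k + α + β + 1)

lemma mc_ode {α : ℝ} (β : ℝ) (hα : -1 < α) (k i : ℕ) :
    mc α β k i * (lam α β k - lam α β i) = 2 * (i + 1) * (i + 1 + α) * mc α β k (i + 1) := by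
  have q1 : poch (α + 1) i ≠ 0 := (poch_pos (by linarith) i).ne'
  have q2 : α + 1 + (i : ℝ) ≠ 0 := by have : (0 : ℝ) ≤ i := Nat.cast_nonneg i; linarith
  have q4 : (i.factorial : ℝ) ≠ 0 := by exact_mod_cast i.factorial_ne_zero
  have q5 : (i : ℝ) + 1 ≠ 0 := by positivity
  simp only [mc, lam, poch_succ, Nat.factorial_succ, pow_succ, Nat.cast_mul, Nat.cast_add,
    Nat.cast_one]
  field_simp
  ring

open Polynomial in
lemma QP_ode {α : ℝ} (β : ℝ) (hα : -1 < α) (k : ℕ) :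
    X ^ 2 * derivative (derivative (QP α β k)) + C 2 * (X * derivative (derivative (QP α β k)))
      + C (2 * (α + 1)) * derivative (QP α β k) + C (α + β + 2) * (X * derivative (QP α β k))
      = C (lam α β k) * QP α β k := by
  ext i
  have h := mc_ode β hα k
  simp only [coeff_add, coeff_C_mul, coeff_X_pow_mul', coeff_derivative, QP_coeff]
  rcases i with _ | _ | i
  · have h0 := h 0
    simp [lam, coeff_X_mul_zero] at h0 ⊢
    linarith
  · have h0 := h 1
    simp [lam, coeff_X_mul, coeff_derivative, QP_coeff] at h0 ⊢
    linarith
  · have h0 := h (i + 2)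
    simp only [coeff_X_mul, coeff_derivative, QP_coeff]
    simp [lam, coeff_derivative, QP_coeff] at h0 ⊢
    push_cast at h0 ⊢
    linarith

lemma lam_inj {α β : ℝ} (hα : -1 < α) (hβ : -1 < β) {k l : ℕ} (h : k ≠ l) :
    lam α β k ≠ lam α β l := by
  intro he
  have : ((k : ℝ) - l) * (k + l + α + β + 1) = 0 := by
    simp only [lam] at he; linear_combination he
  rcases mul_eq_zero.1 this with h1 | h1
  · exact h (by exact_mod_cast (sub_eq_zero.1 h1))
  · have : 1 ≤ k + l := by omega
    have : (1 : ℝ) ≤ k + l := by exact_mod_cast this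
    linarith

lemma pm_orth {α β : ℝ} (hα : -1 < α) (hβ : -1 < β) {k l : ℕ} (h : k ≠ l) :
    ∫ x, pm α β k x * pm α β l x ∂(mu α β) = 0 := by
  set f : ℝ → ℝ := pm α β k with hf
  set g : ℝ → ℝ := pm α β l with hg
  set f1 : ℝ → ℝ := fun x => (Polynomial.derivative (QP α β k)).eval (x - 1) with hf1
  set g1 : ℝ → ℝ := fun x => (Polynomial.derivative (QP α β l)).eval (x - 1) with hg1
  set f2 : ℝ → ℝ := fun x => (Polynomial.derivative (Polynomial.derivative (QP α β k))).eval (x - 1)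
    with hf2
  set g2 : ℝ → ℝ := fun x => (Polynomial.derivative (Polynomial.derivative (QP α β l))).eval (x - 1)
    with hg2
  have hd : ∀ (P : Polynomial ℝ) (x : ℝ), HasDerivAt (fun x => P.eval (x - 1))
      ((Polynomial.derivative P).eval (x - 1)) x := fun P x => by
    simpa [Function.comp_def] using (P.hasDerivAt (x - 1)).comp x ((hasDerivAt_id x).sub_const 1)
  have df : ∀ x, HasDerivAt f (f1 x) x := fun x => by
    have : f = fun x => (QP α β k).eval (x - 1) := funext fun x => pm_eval α β k x
    rw [this]; exact hd _ x
  have dg : ∀ x, HasDerivAt g (g1 x) x := fun x => by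
    have : g = fun x => (QP α β l).eval (x - 1) := funext fun x => pm_eval α β l x
    rw [this]; exact hd _ x
  have df1 : ∀ x, HasDerivAt f1 (f2 x) x := fun x => hd _ x
  have dg1 : ∀ x, HasDerivAt g1 (g2 x) x := fun x => hd _ x
  have of : ∀ x, (x - 1) ^ 2 * f2 x + 2 * ((x - 1) * f2 x) + 2 * (α + 1) * f1 x
      + (α + β + 2) * ((x - 1) * f1 x) = lam α β k * f x := fun x => by
    have := congrArg (Polynomial.eval (x - 1)) (QP_ode β hα k)
    simpa [hf, pm_eval] using this
  have og : ∀ x, (x - 1) ^ 2 * g2 x + 2 * ((x - 1) * g2 x) + 2 * (α + 1) * g1 x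
      + (α + β + 2) * ((x - 1) * g1 x) = lam α β l * g x := fun x => by
    have := congrArg (Polynomial.eval (x - 1)) (QP_ode β hα l)
    simpa [hg, pm_eval] using this
  set W : ℝ → ℝ := fun x => (1 - x) ^ (α + 1) * (1 + x) ^ (β + 1) * (f1 x * g x - f x * g1 x)
  have hfc : Continuous f := pm_cont α β k
  have hgc : Continuous g := pm_cont α β l
  have hWc : ContinuousOn W (Icc (-1) 1) := by
    have c1 : Continuous f1 := by
      exact (Polynomial.continuous _).comp (by fun_prop)
    have c2 : Continuous g1 := by
      exact (Polynomial.continuous _).comp (by fun_prop)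
    refine Continuous.continuousOn ?_
    refine Continuous.mul (Continuous.mul ?_ ?_) (by fun_prop)
    · exact Continuous.rpow_const (by fun_prop) fun x => Or.inr (by linarith)
    · exact Continuous.rpow_const (by fun_prop) fun x => Or.inr (by linarith)
  have hWd : ∀ x ∈ Ioo (-1 : ℝ) 1,
      HasDerivAt W ((lam α β l - lam α β k) * (f x * g x * w α β x)) x := fun x hx => by
    have p1 : 0 < 1 - x := by linarith [hx.2]
    have p2 : 0 < 1 + x := by linarith [hx.1]
    have a1 : HasDerivAt (fun x : ℝ => (1 - x) ^ (α + 1)) (-1 * (α + 1) * (1 - x) ^ α) x := by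
      have := ((hasDerivAt_id x).const_sub 1).rpow_const (p := α + 1) (Or.inl p1.ne')
      simpa using this
    have a2 : HasDerivAt (fun x : ℝ => (1 + x) ^ (β + 1)) (1 * (β + 1) * (1 + x) ^ β) x := by
      have := ((hasDerivAt_id x).const_add 1).rpow_const (p := β + 1) (Or.inl p2.ne')
      simpa using this
    have a3 := (a1.mul a2).mul (((df1 x).mul (dg x)).sub ((df x).mul (dg1 x)))
    refine a3.congr_deriv ?_
    simp only [w, Pi.mul_apply, Pi.sub_apply]
    rw [Real.rpow_add p1, Real.rpow_add p2, Real.rpow_one, Real.rpow_one]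
    linear_combination (1 - x) ^ α * (1 + x) ^ β * (f x * og x - g x * of x)
  have hInt : IntervalIntegrable (fun x => (lam α β l - lam α β k) * (f x * g x * w α β x)) volume
      (-1) 1 := by
    refine IntervalIntegrable.const_mul ?_ _
    exact (w_ii α β hα hβ).continuousOn_mul (hfc.mul hgc).continuousOn
  have key := intervalIntegral.integral_eq_sub_of_hasDerivAt_of_le (by norm_num) hWc hWd hInt
  have e1 : W 1 = 0 := by
    simp only [W, sub_self]; rw [Real.zero_rpow (by linarith)]; simp
  have e2 : W (-1) = 0 := by
    simp only [W]; rw [show (1 : ℝ) + -1 = 0 by norm_num, Real.zero_rpow (by linarith)]; simp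
  rw [e1, e2, sub_zero, intervalIntegral.integral_const_mul,
    intervalIntegral.integral_of_le (by norm_num), integral_Ioc_eq_integral_Ioo] at key
  rw [int_mu]
  rcases mul_eq_zero.1 key with h1 | h1
  · exact absurd (sub_eq_zero.1 h1).symm (lam_inj hα hβ h)
  · exact h1


/-! ### Normalized polynomials -/

/-- Normalized polynomials. -/
def vv (α β : ℝ) (k : ℕ) (x : ℝ) : ℝ := 2 ^ k * pm α β k x

/-- Their squared norms. -/
def hv (α β : ℝ) (k : ℕ) : ℝ := ∫ x, vv α β k x * vv α β k x ∂(mu α β)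

lemma vv_cont (α β : ℝ) (k : ℕ) : Continuous (vv α β k) :=
  continuous_const.mul (pm_cont α β k)

lemma vv_zero (α β x : ℝ) : vv α β 0 x = 1 := by simp [vv, pm_zero]

lemma cq_zero (α β : ℝ) : cq α β 0 = 0 := by simp [cq]

lemma vv_J (α β : ℝ) (k : ℕ) (x : ℝ) : vv α β k x = 2 ^ k * k.factorial * J α β k x := by
  simp [vv, pm, mul_assoc]

section basic
variable {α β : ℝ}

lemma vv_rec (hα : -1 < α) (hβ : -1 < β) (k : ℕ) (x : ℝ) :
    vv α β (k + 1) x = (2 * x - bq α β k) * vv α β k x - cq α β k * vv α β (k - 1) x := by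
  have h := pm_rec hα hβ k x
  rcases k with _ | k
  · simp only [vv, cq_zero] at h ⊢
    simp at h ⊢
    linear_combination (-2) * h
  · simp only [vv, Nat.add_sub_cancel] at h ⊢
    simp only [pow_succ]
    linear_combination (-4 * 2 ^ k) * h

lemma vv_symm (hα : -1 < α) (hβ : -1 < β) (k : ℕ) (x : ℝ) : vv β α k (-x) = (-1) ^ k * vv α β k x := by
  simp only [vv, pm_symm hα hβ]; ring

lemma vv_orth (hα : -1 < α) (hβ : -1 < β) {k l : ℕ} (h : k ≠ l) : ∫ x, vv α β k x * vv α β l x ∂(mu α β) = 0 := by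
  have := pm_orth hα hβ h
  have e : (fun x => vv α β k x * vv α β l x) = fun x => (2 ^ k * 2 ^ l) * (pm α β k x * pm α β l x) := by
    funext x; simp only [vv]; ring
  rw [e, integral_const_mul, this, mul_zero]

lemma vv_int (hα : -1 < α) (hβ : -1 < β) (k l : ℕ) : Integrable (fun x => vv α β k x * vv α β l x) (mu α β) :=
  cont_int hα hβ ((vv_cont α β k).mul (vv_cont α β l))

lemma int3 (hα : -1 < α) (hβ : -1 < β) (a b : ℝ) (k l m k' l' m' : ℕ) : ∫ x, (vv α β k x * vv α β k' x
      + a * (vv α β l x * vv α β l' x) + b * (vv α β m x * vv α β m' x)) ∂(mu α β) =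
    (∫ x, vv α β k x * vv α β k' x ∂(mu α β)) + a * (∫ x, vv α β l x * vv α β l' x ∂(mu α β))
      + b * (∫ x, vv α β m x * vv α β m' x ∂(mu α β)) := by
  rw [integral_add, integral_add, integral_const_mul, integral_const_mul]
  · exact vv_int hα hβ _ _
  · exact (vv_int hα hβ _ _).const_mul _
  · exact (vv_int hα hβ _ _).add ((vv_int hα hβ _ _).const_mul _)
  · exact (vv_int hα hβ _ _).const_mul _

lemma cq_pos (hα : -1 < α) (hβ : -1 < β) (k : ℕ) (hk : 1 ≤ k) : 0 < cq α β k := by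
  have h0 : k ≠ 0 := by omega
  simp only [cq, h0, if_false]
  split_ifs with h1
  · have : 0 < 1 + α := by linarith
    have : 0 < 1 + β := by linarith
    have : 0 < 2 + α + β := by linarith
    have : 0 < 3 + α + β := by linarith
    positivity
  · have h2 : (2 : ℝ) ≤ k := by exact_mod_cast (by omega : 2 ≤ k)
    have : 0 < (k : ℝ) + α := by linarith
    have : 0 < (k : ℝ) + β := by linarith
    have : 0 < (k : ℝ) + α + β := by linarith
    have : 0 < 2 * (k : ℝ) + α + β := by linarith
    have : 0 < 2 * (k : ℝ) + α + β + 1 := by linarith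
    have : 0 < 2 * (k : ℝ) + α + β - 1 := by linarith
    positivity

lemma hv_succ (hα : -1 < α) (hβ : -1 < β) (k : ℕ) : hv α β (k + 1) = cq α β (k + 1) * hv α β k := by
  have i1 : ∫ x, 2 * x * vv α β k x * vv α β (k + 1) x ∂(mu α β) = hv α β (k + 1) := by
    have e : (fun x => 2 * x * vv α β k x * vv α β (k + 1) x) = fun x =>
        vv α β (k + 1) x * vv α β (k + 1) x + bq α β k * (vv α β k x * vv α β (k + 1) x)
          + cq α β k * (vv α β (k - 1) x * vv α β (k + 1) x) := by
      funext x
      linear_combination (-vv α β (k + 1) x) * vv_rec hα hβ k x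
    rw [e, int3 hα hβ,
      vv_orth hα hβ (by omega : k ≠ k + 1), vv_orth hα hβ (by omega : k - 1 ≠ k + 1)]
    simp [hv]
  have i2 : ∫ x, 2 * x * vv α β k x * vv α β (k + 1) x ∂(mu α β) = cq α β (k + 1) * hv α β k := by
    have e : (fun x => 2 * x * vv α β k x * vv α β (k + 1) x) = fun x =>
        vv α β k x * vv α β (k + 1 + 1) x + bq α β (k + 1) * (vv α β k x * vv α β (k + 1) x)
          + cq α β (k + 1) * (vv α β k x * vv α β k x) := by
      funext x
      have := vv_rec hα hβ (k + 1) x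
      simp only [Nat.add_sub_cancel] at this
      linear_combination (-vv α β k x) * this
    rw [e, int3 hα hβ,
      vv_orth hα hβ (by omega : k ≠ k + 1), vv_orth hα hβ (by omega : k ≠ k + 1 + 1)]
    simp [hv]
  rw [← i1, i2]

lemma hv_pos (hα : -1 < α) (hβ : -1 < β) (k : ℕ) : 0 < hv α β k := by
  induction k with
  | zero => simpa [hv, vv_zero] using mu_pos hα hβ
  | succ k ih => rw [hv_succ hα hβ]; exact mul_pos (cq_pos hα hβ _ (by omega)) ih

lemma coeff_eq (hα : -1 < α) (hβ : -1 < β) (k : ℕ) (f : ℝ → ℝ) (x : ℝ) : coeff α β k f * J α β k x =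
    (∫ y, f y * vv α β k y ∂(mu α β)) / hv α β k * vv α β k x := by
  have hc : (2 : ℝ) ^ k * k.factorial ≠ 0 := by positivity
  generalize hcc : (2 : ℝ) ^ k * k.factorial = c at hc
  have e1 : ∀ x, vv α β k x = c * J α β k x := fun x => by rw [vv_J, hcc]
  have e2 : ∫ y, f y * vv α β k y ∂(mu α β) = c * ip α β f (J α β k) := by
    rw [int_mu, ip, ← integral_const_mul]
    refine integral_congr_ae (Filter.Eventually.of_forall fun x => ?_)
    simp only [e1]; ring
  have e3 : hv α β k = c * c * hJ α β k := by
    rw [hv, hJ, int_mu, ip, ← integral_const_mul]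
    refine integral_congr_ae (Filter.Eventually.of_forall fun x => ?_)
    simp only [e1]; ring
  have hh := (hv_pos hα hβ k).ne'
  have hJ0 : hJ α β k ≠ 0 := by
    intro h; rw [h, mul_zero] at e3; exact hh e3
  rw [coeff, e2, e3, e1]
  field_simp

lemma V_eq (hα : -1 < α) (hβ : -1 < β) (η : ℝ → ℝ) (n : ℕ) (f : ℝ → ℝ) (x : ℝ) : V η α β n f x =
    ∑ k ∈ Finset.range (2 * n + 1), η ((k : ℝ) / n) *
      ((∫ y, f y * vv α β k y ∂(mu α β)) / hv α β k * vv α β k x) := by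
  unfold V
  refine Finset.sum_congr rfl fun k _ => ?_
  rw [mul_assoc, coeff_eq hα hβ]

lemma V_add (hα : -1 < α) (hβ : -1 < β) (η : ℝ → ℝ) (n : ℕ) (f g : ℝ → ℝ) (hf : Integrable f (mu α β))
    (hg : Integrable g (mu α β)) (x : ℝ) :
    V η α β n (fun y => f y + g y) x = V η α β n f x + V η α β n g x := by
  simp only [V_eq hα hβ, ← Finset.sum_add_distrib]
  refine Finset.sum_congr rfl fun k _ => ?_
  have : ∫ y, (f y + g y) * vv α β k y ∂(mu α β) = (∫ y, f y * vv α β k y ∂(mu α β)) +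
      ∫ y, g y * vv α β k y ∂(mu α β) := by
    rw [← integral_add (mul_int hf (vv_cont α β k)) (mul_int hg (vv_cont α β k))]
    refine integral_congr_ae (Filter.Eventually.of_forall fun x => ?_)
    simp only []; ring
  rw [this]; ring

lemma V_smul (hα : -1 < α) (hβ : -1 < β) (η : ℝ → ℝ) (n : ℕ) (c : ℝ) (f : ℝ → ℝ) (x : ℝ) :
    V η α β n (fun y => c * f y) x = c * V η α β n f x := by
  simp only [V_eq hα hβ, Finset.mul_sum]
  refine Finset.sum_congr rfl fun k _ => ?_
  have : ∫ y, (c * f y) * vv α β k y ∂(mu α β) = c * ∫ y, f y * vv α β k y ∂(mu α β) := by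
    rw [← integral_const_mul]
    refine integral_congr_ae (Filter.Eventually.of_forall fun x => ?_)
    simp only []; ring
  rw [this]; ring

lemma V_vv (hα : -1 < α) (hβ : -1 < β) (η : ℝ → ℝ) (hη : Admissible η) (n k : ℕ) (hn : 1 ≤ n) (hk : k ≤ n) (x : ℝ) :
    V η α β n (vv α β k) x = vv α β k x := by
  rw [V_eq hα hβ, Finset.sum_eq_single k]
  · have h1 : η ((k : ℝ) / n) = 1 := hη.2.1 _ (by positivity) (by
      have hn' : (0 : ℝ) < n := by exact_mod_cast hn
      rw [div_le_one hn']; exact_mod_cast hk)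
    have := (hv_pos hα hβ k).ne'
    rw [h1, show ∫ y, vv α β k y * vv α β k y ∂(mu α β) = hv α β k from rfl]
    field_simp
  · intro l _ hl
    rw [vv_orth hα hβ (Ne.symm hl)]; simp
  · intro h; simp at h; omega

/-- Span of the first polynomials. -/
lemma poly_span (hα : -1 < α) (hβ : -1 < β) (n : ℕ) (q : Polynomial ℝ) (hq : q.natDegree ≤ n) :
    (fun x => q.eval x) ∈ Submodule.span ℝ ((fun k => vv α β k) '' {k | k ≤ n}) := by
  have mono : ∀ m : ℕ, ∀ f : ℝ → ℝ, f ∈ Submodule.span ℝ ((fun k => vv α β k) '' {k | k ≤ m}) →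
      (fun x => x * f x) ∈ Submodule.span ℝ ((fun k => vv α β k) '' {k | k ≤ m + 1}) := by
    intro m f hf
    induction hf using Submodule.span_induction with
    | mem f hf =>
      obtain ⟨k, hk, rfl⟩ := hf
      have hk : k ≤ m := hk
      have e : (fun x => x * vv α β k x) = (1 / 2 : ℝ) • vv α β (k + 1) + (bq α β k / 2) • vv α β k
          + (cq α β k / 2) • vv α β (k - 1) := by
        funext x
        simp only [Pi.add_apply, Pi.smul_apply, smul_eq_mul]
        linear_combination (-1 / 2) * vv_rec hα hβ k x
      rw [e]
      refine Submodule.add_mem _ (Submodule.add_mem _ (Submodule.smul_mem _ _ ?_)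
        (Submodule.smul_mem _ _ ?_)) (Submodule.smul_mem _ _ ?_)
      · exact Submodule.subset_span ⟨k + 1, by simp; omega, rfl⟩
      · exact Submodule.subset_span ⟨k, by simp; omega, rfl⟩
      · exact Submodule.subset_span ⟨k - 1, by simp; omega, rfl⟩
    | zero =>
      have : (fun x : ℝ => x * (0 : ℝ → ℝ) x) = 0 := by funext x; simp
      rw [this]; exact Submodule.zero_mem _
    | add f g _ _ h1 h2 =>
      have := Submodule.add_mem _ h1 h2
      convert this using 1
      funext x; simp only [Pi.add_apply]; ring
    | smul c f _ h1 =>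
      have := Submodule.smul_mem _ c h1
      convert this using 1
      funext x; simp only [Pi.smul_apply, smul_eq_mul]; ring
  have pw : ∀ m : ℕ, (fun x : ℝ => x ^ m) ∈ Submodule.span ℝ ((fun k => vv α β k) '' {k | k ≤ m}) := by
    intro m
    induction m with
    | zero => exact Submodule.subset_span ⟨0, by simp, by funext x; simp [vv_zero]⟩
    | succ m ih =>
      have := mono m _ ih
      convert this using 1
      funext x; ring
  have e : (fun x => q.eval x) = ∑ i ∈ Finset.range (n + 1), q.coeff i • fun x : ℝ => x ^ i := by
    funext x
    rw [Polynomial.eval_eq_sum_range' (by omega : q.natDegree < n + 1)]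
    simp
  rw [e]
  refine Submodule.sum_mem _ fun i hi => Submodule.smul_mem _ _ ?_
  refine Submodule.span_mono (Set.image_mono fun k hk => ?_) (pw i)
  simp at hi hk ⊢
  omega

lemma V_poly (hα : -1 < α) (hβ : -1 < β) (η : ℝ → ℝ) (hη : Admissible η) (n : ℕ) (hn : 1 ≤ n) (q : Polynomial ℝ)
    (hq : q.natDegree ≤ n) (x : ℝ) : V η α β n (fun x => q.eval x) x = q.eval x := by
  have : ∀ f ∈ Submodule.span ℝ ((fun k => vv α β k) '' {k | k ≤ n}), Continuous f ∧
      ∀ x, V η α β n f x = f x := by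
    intro f hf
    induction hf using Submodule.span_induction with
    | mem f hf =>
      obtain ⟨k, hk, rfl⟩ := hf
      exact ⟨vv_cont α β k, fun x => V_vv hα hβ η hη n k hn hk x⟩
    | zero =>
      refine ⟨continuous_const, fun x => ?_⟩
      have := V_smul hα hβ η n 0 (fun _ => 0) x
      simp only [zero_mul] at this
      exact this
    | add f g _ _ h1 h2 =>
      refine ⟨h1.1.add h2.1, fun x => ?_⟩
      have := V_add hα hβ η n f g (cont_int hα hβ h1.1) (cont_int hα hβ h2.1) x
      rw [h1.2, h2.2] at this
      exact this
    | smul c f _ h1 =>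
      refine ⟨h1.1.const_smul c, fun x => ?_⟩
      have := V_smul hα hβ η n c f x
      rw [h1.2] at this
      exact this
  exact (this _ (poly_span hα hβ n q hq)).2 x
end basic


/-! ### Recurrence coefficients as symbols -/

lemma cq_sub_one {α β : ℝ} (hα : -1 < α) (hβ : -1 < β) (k : ℕ) (hk : 2 ≤ k) :
    cq α β k - 1 = (1 - (α + β) ^ 2 - (α - β) ^ 2) *
      (1 / (2 * (k : ℝ) + (α + β + 1)) * (1 / (2 * (k : ℝ) + (α + β - 1))))
      + ((α + β) ^ 2 * (α - β) ^ 2) * ((1 / (2 * (k : ℝ) + (α + β)) * (1 / (2 * (k : ℝ) + (α + β)))) *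
      (1 / (2 * (k : ℝ) + (α + β + 1)) * (1 / (2 * (k : ℝ) + (α + β - 1))))) := by
  have h2 : (2 : ℝ) ≤ k := by exact_mod_cast hk
  have h := cq_eq (α := α) (β := β) k hk _ rfl
  obtain ⟨D, hD⟩ : ∃ D : ℝ, D = 2 * k + α + β := ⟨_, rfl⟩
  rw [← hD] at h
  have d0 : D ≠ 0 := by rw [hD]; linarith
  have d1 : D + 1 ≠ 0 := by linarith
  have d2 : D - 1 ≠ 0 := by linarith
  rw [show 2 * (k : ℝ) + (α + β + 1) = D + 1 by rw [hD]; ring,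
    show 2 * (k : ℝ) + (α + β - 1) = D - 1 by rw [hD]; ring,
    show 2 * (k : ℝ) + (α + β) = D by rw [hD]; ring,
    show β = D - 2 * k - α by rw [hD]; ring] 
  have h' : cq α (D - 2 * k - α) k = 4 * (4 * k * (k + α) * (D - k - α) * (D - k) /
      (D ^ 2 * (D + 1) * (D - 1))) := by
    rw [← h, show D - 2 * k - α = β by rw [hD]; ring]; ring
  rw [h']
  field_simp
  ring

section sym
variable {ι : Type} {N : ι → ℝ} {d : ι → ℕ} {α β : ℝ}

lemma sy_inv_aux (hN : ∀ p, 1 ≤ N p) (hd : ∀ p, 2 ≤ d p) (c : ℝ) (hc : 0 < c)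
    (hdN : ∀ p, c * N p ≤ d p) (b : ℝ) (hb : -3 ≤ b) (m : ℕ) :
    Sy N d m (fun p => 1 / N p) (fun _ k => 1 / (2 * (k : ℝ) + b)) := by
  refine Sy.inv m 2 b (c / 2) (by positivity) (fun p => by linarith [hN p]) fun p k hk => ?_
  have h1 : (d p : ℝ) ≤ k := by exact_mod_cast hk
  have h2 : (2 : ℝ) ≤ d p := by exact_mod_cast hd p
  have h3 := hdN p
  linarith

lemma bq_sy (hα : -1 < α) (hβ : -1 < β) (hN : ∀ p, 1 ≤ N p) (hd : ∀ p, 2 ≤ d p) (c : ℝ)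
    (hc : 0 < c) (hdN : ∀ p, c * N p ≤ d p) (m : ℕ) :
    Sy N d m (fun p => 1 / N p ^ 2) (fun _ k => bq α β k) := by
  have hN0 : ∀ p, 0 < N p := fun p => by linarith [hN p]
  have h := ((sy_inv_aux hN hd c hc hdN (α + β) (by linarith) m).mul
    (sy_inv_aux hN hd c hc hdN (α + β + 2) (by linarith) m)).cmul
    (fun _ => 2 * (β ^ 2 - α ^ 2)) (fun _ => |2 * (β ^ 2 - α ^ 2)|) (fun p => le_rfl)
  refine (h.mono hN0 (B' := fun p => 1 / N p ^ 2) |2 * (β ^ 2 - α ^ 2)| (abs_nonneg _) fun p => ?_).congr ?_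
  · have := hN0 p
    apply le_of_eq; field_simp
  · intro p k hk
    have : k ≠ 0 := by have := hd p; omega
    simp only [bq, this, if_false]
    rw [show 2 * (k : ℝ) + (α + β) = 2 * k + α + β by ring,
      show 2 * (k : ℝ) + (α + β + 2) = 2 * k + α + β + 2 by ring]
    rw [one_div_mul_one_div, mul_one_div]

lemma gq_sy (hα : -1 < α) (hβ : -1 < β) (hN : ∀ p, 1 ≤ N p) (hd : ∀ p, 2 ≤ d p) (c : ℝ)
    (hc : 0 < c) (hdN : ∀ p, c * N p ≤ d p) (m : ℕ) :
    Sy N d m (fun p => 1 / N p ^ 2) (fun _ k => cq α β k - 1) := by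
  have hN0 : ∀ p, 0 < N p := fun p => by linarith [hN p]
  have i0 := sy_inv_aux hN hd c hc hdN (α + β) (by linarith) m
  have i1 := sy_inv_aux hN hd c hc hdN (α + β + 1) (by linarith) m
  have i2 := sy_inv_aux hN hd c hc hdN (α + β - 1) (by linarith) m
  set c1 := 1 - (α + β) ^ 2 - (α - β) ^ 2
  set c2 := (α + β) ^ 2 * (α - β) ^ 2
  have h1 := (i1.mul i2).cmul (fun _ => c1) (fun _ => |c1|) (fun p => le_rfl)
  have h2 := ((i0.mul i0).mul (i1.mul i2)).cmul (fun _ => c2) (fun _ => |c2|) (fun p => le_rfl)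
  have h1' := h1.mono hN0 (B' := fun p => 1 / N p ^ 2) |c1| (abs_nonneg _) fun p => by
    have := hN0 p
    apply le_of_eq; field_simp
  have h2' := h2.mono hN0 (B' := fun p => 1 / N p ^ 2) |c2| (abs_nonneg _) fun p => by
    have := hN0 p
    have h1 : 1 / N p ≤ 1 := by rw [div_le_one this]; exact hN p
    have h0 : 0 ≤ 1 / N p := by positivity
    have : 1 / N p * (1 / N p) ≤ 1 := by nlinarith
    have e : 1 / N p ^ 2 = 1 / N p * (1 / N p) := by rw [one_div_mul_one_div]; ring
    rw [e]
    refine mul_le_mul_of_nonneg_left ?_ (abs_nonneg _)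
    have h00 : 0 ≤ 1 / N p * (1 / N p) := by positivity
    nlinarith
  refine (h1'.add h2').congr fun p k hk => ?_
  exact cq_sub_one hα hβ k ((hd p).trans hk)
end sym

section pt
variable {α β : ℝ}

lemma bg_bound (hα : -1 < α) (hβ : -1 < β) : ∃ C : ℝ, 0 < C ∧ ∀ k : ℕ, 1 ≤ k → |bq α β k| ≤ C / (k : ℝ) ^ 2 ∧
    |cq α β k - 1| ≤ C / (k : ℝ) ^ 2 := by
  have hN : ∀ p : ℕ, (1 : ℝ) ≤ (p : ℝ) + 2 := fun p => by have := Nat.cast_nonneg (α := ℝ) p; linarith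
  obtain ⟨C1, hC1, h1⟩ := (bq_sy hα hβ (N := fun p : ℕ => (p : ℝ) + 2) (d := fun p => p + 2) hN
    (fun p => by omega) 1 one_pos (fun p => by push_cast; linarith) 0).bound
  obtain ⟨C2, hC2, h2⟩ := (gq_sy hα hβ (N := fun p : ℕ => (p : ℝ) + 2) (d := fun p => p + 2) hN
    (fun p => by omega) 1 one_pos (fun p => by push_cast; linarith) 0).bound
  refine ⟨C1 + C2 + |bq α β 1| + |cq α β 1 - 1| + 1, by positivity, fun k hk => ?_⟩
  rcases Nat.lt_or_ge k 2 with hk2 | hk2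
  · have : k = 1 := by omega
    subst this
    have := abs_nonneg (bq α β 1)
    have := abs_nonneg (cq α β 1 - 1)
    constructor <;> · simp; linarith
  · obtain ⟨p, rfl⟩ : ∃ p, k = p + 2 := ⟨k - 2, by omega⟩
    have a1 := h1 p (p + 2) le_rfl
    have a2 := h2 p (p + 2) le_rfl
    push_cast
    have hp : (0 : ℝ) ≤ 1 / ((p : ℝ) + 2) ^ 2 := by positivity
    have := abs_nonneg (bq α β 1)
    have := abs_nonneg (cq α β 1 - 1)
    rw [div_eq_mul_one_div]
    constructor
    · refine a1.trans (mul_le_mul_of_nonneg_right (by linarith) hp)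
    · refine a2.trans (mul_le_mul_of_nonneg_right (by linarith) hp)
end pt

lemma seq_lower (a : ℕ → ℝ) (C : ℝ) (hC : 0 < C) (ha : ∀ k, 0 < a k)
    (hr : ∀ k : ℕ, (1 - C / ((k : ℝ) + 1) ^ 2) * a k ≤ a (k + 1)) : ∃ c, 0 < c ∧ ∀ k, c ≤ a k := by
  obtain ⟨K, hK⟩ := exists_nat_gt (2 * C)
  have hK0 : (0 : ℝ) < K := by linarith
  have key : ∀ j, a K / 2 * (1 + 2 * C / ((K + j : ℕ) : ℝ)) ≤ a (K + j) := by
    intro j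
    induction j with
    | zero =>
      have : 2 * C / (K : ℝ) ≤ 1 := by rw [div_le_one hK0]; exact hK.le
      have := ha K
      simp only [add_zero]
      nlinarith
    | succ j ih =>
      refine le_trans ?_ (hr (K + j))
      set k : ℝ := ((K + j : ℕ) : ℝ) with hk
      have hkK : (K : ℝ) ≤ k := by rw [hk]; push_cast; have := Nat.cast_nonneg (α := ℝ) j; linarith
      have hk0 : 0 < k := by linarith
      have e : ((K + (j + 1) : ℕ) : ℝ) = k + 1 := by rw [hk]; push_cast; ring
      rw [e]
      have p1 : 0 ≤ 1 - C / (k + 1) ^ 2 := by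
        rw [sub_nonneg, div_le_one (by positivity)]
        nlinarith
      refine le_trans ?_ (mul_le_mul_of_nonneg_left ih p1)
      have hA := ha K
      have : 1 + 2 * C / (k + 1) ≤ (1 - C / (k + 1) ^ 2) * (1 + 2 * C / k) := by
        have : (1 - C / (k + 1) ^ 2) * (1 + 2 * C / k) - (1 + 2 * C / (k + 1)) =
            C * (k + 2 - 2 * C) / (k * (k + 1) ^ 2) := by field_simp; ring
        have h2 : 0 ≤ C * (k + 2 - 2 * C) / (k * (k + 1) ^ 2) := by
          have : 0 ≤ k + 2 - 2 * C := by linarith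
          positivity
        linarith
      calc a K / 2 * (1 + 2 * C / (k + 1)) ≤ a K / 2 * ((1 - C / (k + 1) ^ 2) * (1 + 2 * C / k)) :=
            mul_le_mul_of_nonneg_left this (by positivity)
        _ = _ := by ring
  obtain ⟨m, _, hm⟩ := Finset.exists_min_image (Finset.range (K + 1)) a ⟨0, by simp⟩
  refine ⟨min (a K / 2) (a m), lt_min (by have := ha K; positivity) (ha m), fun k => ?_⟩
  rcases Nat.lt_or_ge k K with h | h
  · exact (min_le_right _ _).trans (hm k (by simp; omega))
  · obtain ⟨j, rfl⟩ := Nat.exists_eq_add_of_le h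
    refine (min_le_left _ _).trans (le_trans ?_ (key j))
    have : 0 ≤ 2 * C / ((K + j : ℕ) : ℝ) := by positivity
    have := ha K
    nlinarith

lemma seq_upper (a : ℕ → ℝ) (D : ℝ) (k0 : ℕ) (hk0 : 1 ≤ k0) (hD : 0 ≤ D) (ha : ∀ k, 0 ≤ a k)
    (hr : ∀ k : ℕ, k0 ≤ k → a (k + 1) ≤ (1 + D / (k : ℝ) ^ 2) * a k) (k : ℕ) (hk : k0 ≤ k) :
    a k ≤ Real.exp (2 * D / k0) * a k0 := by
  have key : ∀ k, k0 ≤ k → a k ≤ Real.exp (2 * D * (1 / (k0 : ℝ) - 1 / k)) * a k0 := by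
    intro k hk
    induction k, hk using Nat.le_induction with
    | base => simp
    | succ k hk ih =>
      have hk1 : (1 : ℝ) ≤ k := by exact_mod_cast hk0.trans hk
      have h1 : 1 + D / (k : ℝ) ^ 2 ≤ Real.exp (2 * D * (1 / (k : ℝ) - 1 / (k + 1))) := by
        refine le_trans ?_ (Real.add_one_le_exp _)
        have : 2 * D * (1 / (k : ℝ) - 1 / (k + 1)) - D / (k : ℝ) ^ 2 = D * (k - 1) / (k ^ 2 * (k + 1)) := by
          field_simp; ring
        have : 0 ≤ D * ((k : ℝ) - 1) / (k ^ 2 * (k + 1)) := by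
          have : (0 : ℝ) ≤ k - 1 := by linarith
          positivity
        linarith
      calc a (k + 1) ≤ (1 + D / (k : ℝ) ^ 2) * a k := hr k hk
        _ ≤ Real.exp (2 * D * (1 / (k : ℝ) - 1 / (k + 1))) *
            (Real.exp (2 * D * (1 / (k0 : ℝ) - 1 / k)) * a k0) := by
            gcongr
            exact ha k
        _ = _ := by
            rw [← mul_assoc, ← Real.exp_add]; push_cast; congr 2; ring
  refine (key k hk).trans (mul_le_mul_of_nonneg_right (Real.exp_le_exp.2 ?_) (ha k0))
  rw [show 2 * D / (k0 : ℝ) = 2 * D * (1 / (k0 : ℝ)) by ring]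
  refine mul_le_mul_of_nonneg_left ?_ (by positivity)
  have : (0 : ℝ) ≤ 1 / k := by positivity
  linarith

lemma hv_lower {α β : ℝ} (hα : -1 < α) (hβ : -1 < β) : ∃ c, 0 < c ∧ ∀ k, c ≤ hv α β k := by
  obtain ⟨C, hC, h⟩ := bg_bound hα hβ
  refine seq_lower _ C hC (hv_pos hα hβ) fun k => ?_
  rw [hv_succ hα hβ]
  refine mul_le_mul_of_nonneg_right ?_ (hv_pos hα hβ k).le
  have := (abs_le.1 (h (k + 1) (by omega)).2).1
  push_cast at this
  linarith


/-! ### Pointwise bounds near the endpoint -/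

section near
variable {α β : ℝ}

lemma Ac_pos (hα : -1 < α) (hβ : -1 < β) (k : ℕ) : 0 < Ac α β k := by
  unfold Ac
  have h1 : 0 < poch (α + 1) k := poch_pos (by linarith) k
  rcases k with _ | k
  · simp [poch_zero]
  · have : 0 < poch (((k + 1 : ℕ) : ℝ) + α + β + 1) (k + 1) := poch_pos (by
      push_cast; have := Nat.cast_nonneg (α := ℝ) k; linarith) _
    positivity

lemma mc_zero (k : ℕ) : mc α β k 0 = Ac α β k := by simp [mc, poch_zero]

lemma vv_one (k : ℕ) : vv α β k 1 = 2 ^ k * Ac α β k := by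
  rw [vv, pm_eval, sub_self, ← Polynomial.coeff_zero_eq_eval_zero, QP_coeff, mc_zero]

lemma vv_one_pos (hα : -1 < α) (hβ : -1 < β) (k : ℕ) : 0 < vv α β k 1 := by
  rw [vv_one]; have := Ac_pos hα hβ k; positivity

lemma mc_one (hα : -1 < α) (k : ℕ) : mc α β k 1 = Ac α β k * lam α β k / (2 * (α + 1)) := by
  have h := mc_ode β hα k 0
  rw [mc_zero] at h
  have : α + 1 ≠ 0 := by linarith
  simp [lam] at h ⊢
  field_simp
  linarith

open Polynomial in
lemma QP_rec (hα : -1 < α) (hβ : -1 < β) (k : ℕ) : (X + 1) * QP α β k =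
    QP α β (k + 1) + C (bq α β k / 2) * QP α β k + C (cq α β k / 4) * QP α β (k - 1) := by
  refine Polynomial.funext fun r => ?_
  have h := pm_rec hα hβ k (r + 1)
  simp only [pm_eval, add_sub_cancel_right] at h
  simpa using h

lemma lam_key (hα : -1 < α) (hβ : -1 < β) (k : ℕ) : vv α β (k + 1) 1 * (lam α β (k + 1) - lam α β k)
    - cq α β k * vv α β (k - 1) 1 * (lam α β k - lam α β (k - 1)) = 4 * (α + 1) * vv α β k 1 := by
  have h := congrArg (fun q => Polynomial.coeff q 1) (QP_rec hα hβ k)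
  have h0 := vv_rec hα hβ k 1
  simp only [add_mul, one_mul, Polynomial.coeff_add, Polynomial.coeff_C_mul, QP_coeff,
    Polynomial.coeff_X_mul] at h
  rw [mc_zero, mc_one hα, mc_one hα, mc_one hα] at h
  rw [vv_one, vv_one, vv_one] at *
  have h1 : α + 1 ≠ 0 := by linarith
  have h2 : Ac α β k * (2 * (α + 1)) + Ac α β k * lam α β k = Ac α β (k + 1) * lam α β (k + 1)
     + bq α β k / 2 * (Ac α β k * lam α β k) + cq α β k / 4 * (Ac α β (k - 1) * lam α β (k - 1)) := by
    field_simp at h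
    field_simp
    linarith
  rcases k with _ | k
  · rw [cq_zero] at *
    simp only [pow_succ] at *
    simp only [lam] at *
    push_cast at *
    linear_combination (-2) * h2
  · simp only [Nat.add_sub_cancel, pow_succ] at *
    linear_combination (-4 * 2 ^ k) * h2 - lam α β (k + 1) * h0

/-- Growth factor. -/
def Dg (α β x : ℝ) (k : ℕ) : ℝ := Real.exp ((1 - x) * lam α β k / (2 * (α + 1)))

lemma lam_diff (hα : -1 < α) (hβ : -1 < β) (k : ℕ) : 0 < lam α β (k + 1) - lam α β k := by
  simp only [lam]; push_cast
  have := Nat.cast_nonneg (α := ℝ) k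
  nlinarith

lemma near_aux (hα : -1 < α) (hβ : -1 < β) (x : ℝ) (hx : x ≤ 1) (k : ℕ) : |vv α β k x| ≤ vv α β k 1 * Dg α β x k ∧
    |vv α β (k + 1) x * vv α β k 1 - vv α β k x * vv α β (k + 1) 1| ≤
      (1 - x) * (vv α β k 1 * vv α β (k + 1) 1 * (lam α β (k + 1) - lam α β k)) / (2 * (α + 1))
        * Dg α β x k := by
  have hx' : 0 ≤ 1 - x := by linarith
  have ha : 0 < α + 1 := by linarith
  have W : ∀ k, vv α β (k + 1) x * vv α β k 1 - vv α β k x * vv α β (k + 1) 1 =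
      -2 * (1 - x) * vv α β k x * vv α β k 1 +
      cq α β k * (vv α β k x * vv α β (k - 1) 1 - vv α β (k - 1) x * vv α β k 1) := by
    intro k
    rw [vv_rec hα hβ k x, vv_rec hα hβ k 1]; ring
  have D1 : ∀ k, Dg α β x k * (1 + (1 - x) * (lam α β (k + 1) - lam α β k) / (2 * (α + 1))) ≤
      Dg α β x (k + 1) := by
    intro k
    have : Dg α β x (k + 1) = Dg α β x k *
        Real.exp ((1 - x) * (lam α β (k + 1) - lam α β k) / (2 * (α + 1))) := by
      simp only [Dg, ← Real.exp_add]; congr 1; ring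
    rw [this]
    refine mul_le_mul_of_nonneg_left ?_ (Real.exp_pos _).le
    rw [add_comm]; exact Real.add_one_le_exp _
  induction k with
  | zero =>
    have e : Dg α β x 0 = 1 := by simp [Dg, lam]
    refine ⟨by simp [vv_zero, e], ?_⟩
    have h := lam_key hα hβ 0
    rw [W 0, e]
    rw [cq_zero] at *
    simp only [vv_zero] at *
    rw [show 1 * vv α β (0 + 1) 1 * (lam α β (0 + 1) - lam α β 0) = 4 * (α + 1) by linarith, zero_mul]
    rw [show -2 * (1 - x) * 1 * 1 + 0 = -(2 * (1 - x)) by ring, abs_neg,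
      abs_of_nonneg (by positivity)]
    apply le_of_eq; field_simp; ring
  | succ k ih =>
    obtain ⟨i1, i2⟩ := ih
    have hk := vv_one_pos hα hβ k
    have hk1 := vv_one_pos hα hβ (k + 1)
    have hl := lam_diff hα hβ k
    have hD : 0 < Dg α β x k := Real.exp_pos _
    have hD' : 0 < Dg α β x (k + 1) := Real.exp_pos _
    have hDD : Dg α β x k ≤ Dg α β x (k + 1) := by
      refine le_trans ?_ (D1 k)
      have : 0 ≤ (1 - x) * (lam α β (k + 1) - lam α β k) / (2 * (α + 1)) := by positivity
      nlinarith
    have j1 : |vv α β (k + 1) x| ≤ vv α β (k + 1) 1 * Dg α β x (k + 1) := by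
      have : |vv α β (k + 1) x| * vv α β k 1 ≤ vv α β (k + 1) 1 * Dg α β x (k + 1) * vv α β k 1 := by
        calc |vv α β (k + 1) x| * vv α β k 1 = |vv α β (k + 1) x * vv α β k 1| := by
              rw [abs_mul, abs_of_pos hk]
          _ = |(vv α β (k + 1) x * vv α β k 1 - vv α β k x * vv α β (k + 1) 1)
              + vv α β k x * vv α β (k + 1) 1| := by ring_nf
          _ ≤ (1 - x) * (vv α β k 1 * vv α β (k + 1) 1 * (lam α β (k + 1) - lam α β k)) / (2 * (α + 1))
        * Dg α β x k + vv α β k 1 * Dg α β x k * vv α β (k + 1) 1 := by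
              refine (abs_add_le _ _).trans (add_le_add i2 ?_)
              rw [abs_mul, abs_of_pos hk1]
              exact mul_le_mul_of_nonneg_right i1 hk1.le
          _ = vv α β (k + 1) 1 * (Dg α β x k * (1 + (1 - x) * (lam α β (k + 1) - lam α β k) /
                (2 * (α + 1)))) * vv α β k 1 := by field_simp; ring
          _ ≤ _ := by gcongr; exact D1 k
      exact le_of_mul_le_mul_right this hk
    refine ⟨j1, ?_⟩
    rw [W (k + 1)]
    have hc := cq_pos hα hβ (k + 1) (by omega)
    have key := lam_key hα hβ (k + 1)
    rw [Nat.add_sub_cancel] at *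
    calc _ ≤ |-2 * (1 - x) * vv α β (k + 1) x * vv α β (k + 1) 1| + |cq α β (k + 1) *
          (vv α β (k + 1) x * vv α β k 1 - vv α β k x * vv α β (k + 1) 1)| := abs_add_le _ _
      _ = 2 * (1 - x) * |vv α β (k + 1) x| * vv α β (k + 1) 1 + cq α β (k + 1) *
          |vv α β (k + 1) x * vv α β k 1 - vv α β k x * vv α β (k + 1) 1| := by
          rw [abs_mul, abs_mul, abs_mul, abs_mul, abs_of_pos hk1, abs_of_pos hc, abs_of_nonneg hx']
          norm_num
      _ ≤ 2 * (1 - x) * (vv α β (k + 1) 1 * Dg α β x (k + 1)) * vv α β (k + 1) 1 + cq α β (k + 1) *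
          ((1 - x) * (vv α β k 1 * vv α β (k + 1) 1 * (lam α β (k + 1) - lam α β k)) / (2 * (α + 1))
        * Dg α β x (k + 1)) := by
          gcongr
          exact i2.trans (by gcongr)
      _ = (1 - x) * vv α β (k + 1) 1 * Dg α β x (k + 1) / (2 * (α + 1)) * (4 * (α + 1) * vv α β (k + 1) 1
          + cq α β (k + 1) * vv α β k 1 * (lam α β (k + 1) - lam α β k)) := by
          field_simp; ring
      _ = _ := by rw [← key]; ring

/-- ratio at the endpoint. -/
lemma vv_one_succ (hα : -1 < α) (hβ : -1 < β) (k : ℕ) (hk : 1 ≤ k) : ∃ r : ℝ, vv α β (k + 1) 1 = vv α β k 1 * r ∧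
    r = 1 + (2 * k * (2 * α + 1) + ((2 * α + 2) * (2 * α + 2 * β + 2)
      - (α + β + 1) * (α + β + 2))) / ((2 * k + α + β + 1) * (2 * k + α + β + 2)) := by
  refine ⟨_, ?_, rfl⟩
  rw [vv_one, vv_one, Ac_succ hα hβ k hk]
  have hk' : (1 : ℝ) ≤ k := by exact_mod_cast hk
  have h1 : 2 * (k : ℝ) + α + β + 1 ≠ 0 := by linarith
  have h2 : 2 * (k : ℝ) + α + β + 2 ≠ 0 := by linarith
  field_simp
  ring

lemma ratio_bound (hα : -1 < α) (hβ : -1 < β) : ∃ C : ℝ, 0 < C ∧ ∀ k : ℕ, 1 ≤ k → ∃ r : ℝ, vv α β (k + 1) 1 = vv α β k 1 * r ∧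
    |r - 1 - (α + 1 / 2) / k| ≤ C / (k : ℝ) ^ 2 := by
  set c0 := (2 * α + 2) * (2 * α + 2 * β + 2) - (α + β + 1) * (α + β + 2) with hc0
  set e := α + 1 / 2 with he
  set σ := α + β with hs
  refine ⟨|c0| + |e| * (|2 * (2 * σ + 3)| + |(σ + 1) * (σ + 2)|) + 1, by positivity, fun k hk => ?_⟩
  obtain ⟨r, h1, h2⟩ := vv_one_succ hα hβ k hk
  refine ⟨r, h1, ?_⟩
  have hk' : (1 : ℝ) ≤ k := by exact_mod_cast hk
  have p1 : 0 < 2 * (k : ℝ) + σ + 1 := by rw [hs]; linarith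
  have p2 : 0 < 2 * (k : ℝ) + σ + 2 := by rw [hs]; linarith
  have h3 : r - 1 - e / k = (c0 - e * (2 * (2 * σ + 3)) - e * ((σ + 1) * (σ + 2)) / k) /
      ((2 * k + σ + 1) * (2 * k + σ + 2)) := by
    rw [h2, show 2 * (k : ℝ) + α + β + 1 = 2 * k + σ + 1 by rw [hs]; ring,
      show 2 * (k : ℝ) + α + β + 2 = 2 * k + σ + 2 by rw [hs]; ring,
      show 2 * α + 1 = 2 * e by rw [he]; ring]
    field_simp
    ring
  rw [h3, abs_div, abs_of_pos (mul_pos p1 p2)]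
  have h4 : |c0 - e * (2 * (2 * σ + 3)) - e * ((σ + 1) * (σ + 2)) / k| ≤
      |c0| + |e| * (|2 * (2 * σ + 3)| + |(σ + 1) * (σ + 2)|) + 1 := by
    have a1 : |e * ((σ + 1) * (σ + 2)) / k| ≤ |e| * |(σ + 1) * (σ + 2)| := by
      rw [abs_div, abs_mul]
      refine div_le_self (by positivity) ?_
      rw [abs_of_pos (by linarith)]; exact hk'
    have a2 := abs_sub (c0 - e * (2 * (2 * σ + 3))) (e * ((σ + 1) * (σ + 2)) / k)
    have a3 := abs_sub c0 (e * (2 * (2 * σ + 3)))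
    rw [abs_mul e] at a3
    linarith
  have h5 : (k : ℝ) ^ 2 ≤ (2 * k + σ + 1) * (2 * k + σ + 2) := by
    have : (k : ℝ) ≤ 2 * k + σ + 1 := by rw [hs]; linarith
    have : (k : ℝ) ≤ 2 * k + σ + 2 := by rw [hs]; linarith
    nlinarith
  gcongr

lemma rpow_cmp (a : ℝ) {y T M : ℝ} (hy : 0 < y) (h1 : y ≤ T) (h2 : T ≤ M * y) (hM : 1 ≤ M) :
    y ^ a ≤ M ^ |a| * T ^ a ∧ T ^ a ≤ M ^ |a| * y ^ a := by
  have hT : 0 < T := hy.trans_le h1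
  have hM0 : 0 < M := by linarith
  have hMa : 1 ≤ M ^ |a| := Real.one_le_rpow hM (abs_nonneg a)
  have hTa := Real.rpow_pos_of_pos hT a
  have hya := Real.rpow_pos_of_pos hy a
  rcases le_total 0 a with ha | ha
  · have i1 := Real.rpow_le_rpow hy.le h1 ha
    have i2 := Real.rpow_le_rpow hT.le h2 ha
    rw [Real.mul_rpow hM0.le hy.le] at i2
    rw [abs_of_nonneg ha] at *
    exact ⟨by nlinarith, i2⟩
  · have i1 := Real.rpow_le_rpow_of_nonpos hy h1 ha
    have i2 := Real.rpow_le_rpow_of_nonpos hT h2 ha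
    rw [Real.mul_rpow hM0.le hy.le] at i2
    rw [abs_of_nonpos ha] at *
    refine ⟨?_, by nlinarith⟩
    rw [Real.rpow_neg hM0.le] at *
    have := Real.rpow_pos_of_pos hM0 a
    rw [inv_mul_eq_div, le_div_iff₀ this]
    linarith

lemma vv_one_upper (hα : -1 < α) (hβ : -1 < β) : ∃ C : ℝ, 0 < C ∧ ∀ k : ℕ, vv α β k 1 ≤ C * ((k : ℝ) + 1) ^ (α + 1 / 2) := by
  obtain ⟨C, hC, h⟩ := ratio_bound hα hβ
  set e := α + 1 / 2 with he
  set B := C + |e|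
  have hB : 0 ≤ B := by positivity
  have key := seq_upper (fun k => vv α β k 1 * (k : ℝ) ^ (-e)) (B * Real.exp B) 1 le_rfl (by positivity)
    (fun k => mul_nonneg (vv_one_pos hα hβ k).le (by positivity)) (by
      intro k hk
      obtain ⟨r, h1, h2⟩ := h k hk
      have hk' : (1 : ℝ) ≤ k := by exact_mod_cast hk
      have hk0 : (0 : ℝ) < k := by linarith
      have hv := vv_one_pos hα hβ k
      have hr : r ≤ Real.exp (e / k + C / (k : ℝ) ^ 2) := by
        refine le_trans ?_ (Real.add_one_le_exp _)
        have := (abs_le.1 h2).2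
        linarith
      have hl : -e * Real.log (1 + 1 / k) ≤ -e / k + |e| / (k : ℝ) ^ 2 := by
        have l1 : Real.log (1 + 1 / k) ≤ 1 / k := by
          have := Real.log_le_sub_one_of_pos (show (0 : ℝ) < 1 + 1 / k by positivity)
          linarith
        have l2 : 1 / (k : ℝ) - 1 / (k : ℝ) ^ 2 ≤ Real.log (1 + 1 / k) := by
          have := Real.one_sub_inv_le_log_of_pos (show (0 : ℝ) < 1 + 1 / k by positivity)
          refine le_trans ?_ this
          have : 1 - (1 + 1 / (k : ℝ))⁻¹ - (1 / (k : ℝ) - 1 / (k : ℝ) ^ 2) = 1 / (k ^ 2 * (k + 1)) := by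
            field_simp; ring
          have : 0 ≤ 1 / ((k : ℝ) ^ 2 * (k + 1)) := by positivity
          linarith
        have l3 : |1 / (k : ℝ) - Real.log (1 + 1 / k)| ≤ 1 / (k : ℝ) ^ 2 := by
          rw [abs_le]; constructor <;> linarith [show (0 : ℝ) ≤ 1 / (k : ℝ) ^ 2 by positivity]
        have l4 := le_abs_self (e * (1 / (k : ℝ) - Real.log (1 + 1 / k)))
        rw [abs_mul] at l4
        have l5 := mul_le_mul_of_nonneg_left l3 (abs_nonneg e)
        calc _ = -e / k + e * (1 / (k : ℝ) - Real.log (1 + 1 / k)) := by ring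
          _ ≤ -e / k + |e| * (1 / (k : ℝ) ^ 2) := by linarith
          _ = _ := by ring
      have hp : (((k + 1 : ℕ)) : ℝ) ^ (-e) = (k : ℝ) ^ (-e) * Real.exp (-e * Real.log (1 + 1 / k)) := by
        rw [show (((k + 1 : ℕ)) : ℝ) = k * (1 + 1 / k) by push_cast; field_simp,
          Real.mul_rpow hk0.le (by positivity), Real.rpow_def_of_pos (show (0 : ℝ) < 1 + 1 / k by positivity),
          mul_comm (Real.log _)]
      have hkp : 0 < (k : ℝ) ^ (-e) := Real.rpow_pos_of_pos hk0 _
      have hexp : Real.exp (B / (k : ℝ) ^ 2) ≤ 1 + B * Real.exp B / (k : ℝ) ^ 2 := by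
        have t1 : B / (k : ℝ) ^ 2 ≤ B := div_le_self hB (one_le_pow₀ hk')
        have t2 := Real.exp_le_exp.2 t1
        have t0 : 0 ≤ B / (k : ℝ) ^ 2 := by positivity
        have t3 := Real.add_one_le_exp (-(B / (k : ℝ) ^ 2))
        have t4 := Real.exp_pos (B / (k : ℝ) ^ 2)
        have t5 : Real.exp (B / (k : ℝ) ^ 2) * Real.exp (-(B / (k : ℝ) ^ 2)) = 1 := by
          rw [← Real.exp_add]; simp
        calc Real.exp (B / (k : ℝ) ^ 2) ≤ 1 + B / (k : ℝ) ^ 2 * Real.exp (B / (k : ℝ) ^ 2) := by nlinarith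
          _ ≤ 1 + B / (k : ℝ) ^ 2 * Real.exp B := by gcongr
          _ = _ := by ring
      calc vv α β (k + 1) 1 * (((k + 1 : ℕ)) : ℝ) ^ (-e)
          = vv α β k 1 * (k : ℝ) ^ (-e) * (r * Real.exp (-e * Real.log (1 + 1 / k))) := by
            rw [h1, hp]; ring
        _ ≤ vv α β k 1 * (k : ℝ) ^ (-e) * (Real.exp (e / k + C / (k : ℝ) ^ 2) *
            Real.exp (-e / k + |e| / (k : ℝ) ^ 2)) := by gcongr
        _ = vv α β k 1 * (k : ℝ) ^ (-e) * Real.exp (B / (k : ℝ) ^ 2) := by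
            rw [← Real.exp_add]; congr 2; simp only [B]; ring
        _ ≤ vv α β k 1 * (k : ℝ) ^ (-e) * (1 + B * Real.exp B / (k : ℝ) ^ 2) := by gcongr
        _ = _ := by ring)
  set G := Real.exp (2 * (B * Real.exp B) / ((1 : ℕ) : ℝ)) with hG
  set A := vv α β 1 1 with hA
  have hA0 : 0 < A := vv_one_pos hα hβ 1
  have hG0 : 0 < G := Real.exp_pos _
  refine ⟨G * A * 2 ^ |e| + 1, by positivity, fun k => ?_⟩
  rcases Nat.eq_zero_or_pos k with rfl | hk
  · simp [vv_zero]; positivity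
  · have h3 := key k hk
    have hk' : (1 : ℝ) ≤ k := by exact_mod_cast hk
    have hk0 : (0 : ℝ) < k := by linarith
    simp only [Nat.cast_one, Real.one_rpow, mul_one] at h3
    rw [Real.rpow_neg hk0.le, ← div_eq_mul_inv, div_le_iff₀ (by positivity)] at h3
    have h4 := (rpow_cmp e hk0 (T := (k : ℝ) + 1) (M := 2) (by linarith) (by linarith) (by norm_num)).1
    have h5 : (0 : ℝ) < ((k : ℝ) + 1) ^ e := by positivity
    calc vv α β k 1 ≤ G * A * (k : ℝ) ^ e := h3
      _ ≤ G * A * (2 ^ |e| * ((k : ℝ) + 1) ^ e) := by gcongr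
      _ ≤ _ := by nlinarith

set_option maxHeartbeats 1000000 in
lemma near_bound (hα : -1 < α) (hβ : -1 < β) : ∃ C : ℝ, 0 < C ∧ ∀ x : ℝ, 0 ≤ x → x ≤ 1 → ∀ k : ℕ, (k : ℝ) * √(1 - x ^ 2) ≤ 2 →
    |vv α β k x| ≤ C * ((k : ℝ) + 1) ^ (α + 1 / 2) ∧
    |vv α β (k + 1) x - x * vv α β k x| ≤ C * (((k : ℝ) + 1) ^ (α + 1 / 2) / ((k : ℝ) + 1)) := by
  obtain ⟨C1, hC1, hV⟩ := vv_one_upper hα hβ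
  obtain ⟨C, hC, h⟩ := ratio_bound hα hβ
  set e := α + 1 / 2 with he
  have ha : 0 < α + 1 := by linarith
  set G := Real.exp (4 * (α + β + 3) / (2 * (α + 1))) with hG
  have hG0 : 0 < G := Real.exp_pos _
  have hs4 : 0 < α + β + 4 := by linarith
  set B := 4 * (1 + |e| + C) * (α + β + 4) / (2 * (α + 1)) + (|e| + C) + 4 with hB
  have hB0 : 0 < B := by positivity
  clear_value e B
  refine ⟨G * C1 + G * C1 * B * 2 + 2 + |bq α β 0|, by positivity, fun x hx0 hx1 k hk => ?_⟩
  have hkp : (0 : ℝ) < ((k : ℝ) + 1) ^ e := by positivity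
  have hx' : 0 ≤ 1 - x := by linarith
  rcases Nat.eq_zero_or_pos k with rfl | hk0
  · have e1 := vv_rec hα hβ 0 x
    rw [cq_zero, vv_zero] at e1
    have hb := abs_nonneg (bq α β 0)
    have e2 : vv α β (0 + 1) x - x * 1 = x - bq α β 0 := by linarith
    simp only [vv_zero, e2]
    have : |x - bq α β 0| ≤ 1 + |bq α β 0| := (abs_sub _ _).trans (by rw [abs_of_nonneg hx0]; linarith)
    have : 0 < G * C1 := by positivity
    have : 0 < G * C1 * B * 2 := by positivity
    constructor <;> simp <;> linarith
  · have hk' : (1 : ℝ) ≤ k := by exact_mod_cast hk0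
    have hkpos : (0 : ℝ) < k := by linarith
    have hs : 0 ≤ 1 - x ^ 2 := by nlinarith
    have hks : (k : ℝ) ^ 2 * (1 - x) ≤ 4 := by
      have h1 := Real.sq_sqrt hs
      have h2 := Real.sqrt_nonneg (1 - x ^ 2)
      have h3 : (k * √(1 - x ^ 2)) ^ 2 ≤ 2 ^ 2 := pow_le_pow_left₀ (by positivity) hk 2
      rw [mul_pow, h1] at h3
      have : 1 - x ≤ 1 - x ^ 2 := by nlinarith
      nlinarith [sq_nonneg (k : ℝ)]
    have hx4 : 1 - x ≤ 4 / (k : ℝ) ^ 2 := by rw [le_div_iff₀ (by positivity)]; linarith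
    have hD : Dg α β x k ≤ G := by
      simp only [Dg, hG]
      apply Real.exp_le_exp.2
      refine div_le_div_of_nonneg_right ?_ (by positivity)
      have : lam α β k ≤ (k : ℝ) ^ 2 * (α + β + 3) := by
        simp only [lam]
        have : 0 ≤ ((k : ℝ) - 1) * (α + β + 2) := mul_nonneg (by linarith) (by linarith)
        nlinarith
      calc (1 - x) * lam α β k ≤ (1 - x) * ((k : ℝ) ^ 2 * (α + β + 3)) := by gcongr
        _ = ((k : ℝ) ^ 2 * (1 - x)) * (α + β + 3) := by ring
        _ ≤ _ := by
          apply mul_le_mul_of_nonneg_right hks; linarith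
    have hD0 : 0 < Dg α β x k := Real.exp_pos _
    clear_value G
    obtain ⟨n1, n2⟩ := near_aux hα hβ x hx1 k
    obtain ⟨r, r1, r2⟩ := h k hk0
    have hvk := vv_one_pos hα hβ k
    have m1 : |vv α β k x| ≤ vv α β k 1 * G := n1.trans (by gcongr)
    have hr : |r - 1| ≤ (|e| + C) / k := by
      have : r - 1 = (r - 1 - e / k) + e / k := by ring
      rw [this]
      refine (abs_add_le _ _).trans ?_
      have : |e / k| = |e| / k := by rw [abs_div, abs_of_pos hkpos]
      rw [this, add_div]
      have : C / (k : ℝ) ^ 2 ≤ C / k := by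
        gcongr
        nlinarith
      linarith
    have hr2 : r ≤ 1 + |e| + C := by
      have := (abs_le.1 hr).2
      have : (|e| + C) / k ≤ |e| + C := div_le_self (by positivity) hk'
      linarith
    have hld : lam α β (k + 1) - lam α β k ≤ k * (α + β + 4) := by
      simp only [lam]; push_cast
      have : 0 ≤ ((k : ℝ) - 1) * (α + β + 2) := mul_nonneg (by linarith) (by linarith)
      nlinarith
    have hld0 := lam_diff hα hβ k
    have hr0 : 0 < r := by
      have := vv_one_pos hα hβ (k + 1)
      rw [r1] at this
      exact (mul_pos_iff_of_pos_left hvk).1 this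
    have m2 : |vv α β (k + 1) x - x * vv α β k x| ≤ vv α β k 1 * G * B / k := by
      have id : (vv α β (k + 1) x - x * vv α β k x) * vv α β k 1 =
          (vv α β (k + 1) x * vv α β k 1 - vv α β k x * vv α β (k + 1) 1)
          + vv α β k x * vv α β k 1 * (r - 1) + (1 - x) * (vv α β k x * vv α β k 1) := by
        rw [r1]; ring
      have : |vv α β (k + 1) x - x * vv α β k x| * vv α β k 1 ≤ vv α β k 1 * G * B / k * vv α β k 1 := by
        calc _ = |(vv α β (k + 1) x - x * vv α β k x) * vv α β k 1| := by rw [abs_mul, abs_of_pos hvk]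
          _ ≤ |vv α β (k + 1) x * vv α β k 1 - vv α β k x * vv α β (k + 1) 1| +
              |vv α β k x * vv α β k 1 * (r - 1)| + |(1 - x) * (vv α β k x * vv α β k 1)| := by
              rw [id]; exact abs_add_three _ _ _
          _ ≤ (4 / (k : ℝ) ^ 2) * (vv α β k 1 * (vv α β k 1 * (1 + |e| + C)) * (k * (α + β + 4))) / (2 * (α + 1))
                * G + (vv α β k 1 * G) * vv α β k 1 * ((|e| + C) / k) +
                (4 / (k : ℝ) ^ 2) * ((vv α β k 1 * G) * vv α β k 1) := by
              refine add_le_add (add_le_add (n2.trans ?_) ?_) ?_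
              · rw [r1]
                gcongr
              · rw [abs_mul, abs_mul, abs_of_pos hvk]; gcongr
              · rw [abs_mul, abs_mul, abs_of_pos hvk, abs_of_nonneg hx']; gcongr
          _ ≤ (4 / (k : ℝ) ^ 2) * (vv α β k 1 * (vv α β k 1 * (1 + |e| + C)) * (k * (α + β + 4))) / (2 * (α + 1))
                * G + (vv α β k 1 * G) * vv α β k 1 * ((|e| + C) / k) +
                (4 / (k : ℝ)) * ((vv α β k 1 * G) * vv α β k 1) := by
              gcongr
              nlinarith
          _ = _ := by
              rw [hB]; field_simp
      exact le_of_mul_le_mul_right this hvk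
    have q1 : |vv α β k x| ≤ G * C1 * ((k : ℝ) + 1) ^ e := by
      refine m1.trans ?_
      have := mul_le_mul_of_nonneg_right (hV k) hG0.le
      linarith
    have q2 : |vv α β (k + 1) x - x * vv α β k x| ≤ G * C1 * B * 2 * (((k : ℝ) + 1) ^ e / ((k : ℝ) + 1)) := by
      refine m2.trans ?_
      have : 1 / (k : ℝ) ≤ 2 / ((k : ℝ) + 1) := by
        rw [div_le_div_iff₀ hkpos (by positivity)]; linarith
      calc vv α β k 1 * G * B / k = vv α β k 1 * G * B * (1 / k) := by ring
        _ ≤ (C1 * ((k : ℝ) + 1) ^ e) * G * B * (2 / ((k : ℝ) + 1)) := by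
          gcongr
          exact hV k
        _ = _ := by ring
    have hb := abs_nonneg (bq α β 0)
    have z1 : 0 < G * C1 := by positivity
    have z2 : 0 < G * C1 * B * 2 := by positivity
    exact ⟨q1.trans (mul_le_mul_of_nonneg_right (by linarith) hkp.le),
      q2.trans (mul_le_mul_of_nonneg_right (by linarith) (by positivity))⟩
end near


/-! ### Energy bounds away from the endpoint -/

lemma sqrt_pert (p q δ : ℝ) : √((p - δ) ^ 2 + q ^ 2) ≤ √(p ^ 2 + q ^ 2) + |δ| := by
  have h0 : 0 ≤ p ^ 2 + q ^ 2 := by positivity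
  have h1 := Real.sq_sqrt h0
  have h2 := Real.sqrt_nonneg (p ^ 2 + q ^ 2)
  have h3 : |p| ≤ √(p ^ 2 + q ^ 2) := Real.abs_le_sqrt (by nlinarith [sq_nonneg q])
  rw [Real.sqrt_le_iff]
  refine ⟨by positivity, ?_⟩
  have h4 : -(p * δ) ≤ |p| * |δ| := by rw [← abs_mul]; exact neg_le_abs _
  have h5 := mul_le_mul_of_nonneg_right h3 (abs_nonneg δ)
  have h6 := sq_abs δ
  nlinarith

section far
variable {α β : ℝ}

set_option maxHeartbeats 1000000 in
lemma energy_step (hα : -1 < α) (hβ : -1 < β) : ∃ C : ℝ, 0 < C ∧ ∀ x s : ℝ, 0 ≤ x → x ≤ 1 → 0 < s → s ^ 2 = 1 - x ^ 2 → ∀ k : ℕ,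
    1 ≤ k → √((vv α β (k + 2) x - x * vv α β (k + 1) x) ^ 2 + (s * vv α β (k + 1) x) ^ 2) ≤
      (1 + C / s / (k : ℝ) ^ 2) * √((vv α β (k + 1) x - x * vv α β k x) ^ 2 + (s * vv α β k x) ^ 2) := by
  obtain ⟨C, hC, h⟩ := bg_bound hα hβ
  refine ⟨3 * C, by positivity, fun x s hx0 hx1 hs hsx k hk => ?_⟩
  obtain ⟨h1, h2⟩ := h (k + 1) (by omega)
  have hk' : (1 : ℝ) ≤ k := by exact_mod_cast hk
  have hr := vv_rec hα hβ (k + 1) x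
  rw [Nat.add_sub_cancel] at hr
  set b := bq α β (k + 1)
  set c := cq α β (k + 1)
  set v := vv α β k x with hv
  obtain ⟨u, hu⟩ : ∃ u, u = vv α β (k + 1) x - x * v := ⟨_, rfl⟩
  have hv1 : vv α β (k + 1) x = x * v + u := by linarith
  rw [show k + 2 = k + 1 + 1 by ring, hr, hv1]
  rw [show x * v + u - x * v = u by ring]
  have hs1 : s ≤ 1 := by nlinarith
  have e1 : ((2 * x - b) * (x * v + u) - c * v - x * (x * v + u)) ^ 2 + (s * (x * v + u)) ^ 2 =
      ((x * u - s ^ 2 * v) - (b * (x * v + u) + (c - 1) * v)) ^ 2 + (s * (x * v + u)) ^ 2 := by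
    rw [hsx]; ring
  have e2 : (x * u - s ^ 2 * v) ^ 2 + (s * (x * v + u)) ^ 2 = u ^ 2 + (s * v) ^ 2 := by
    have : x ^ 2 = 1 - s ^ 2 := by linarith
    linear_combination (u ^ 2 + s ^ 2 * v ^ 2) * this
  rw [e1]
  refine (sqrt_pert _ _ _).trans ?_
  rw [e2]
  set R := √(u ^ 2 + (s * v) ^ 2) with hR
  have hR0 : 0 ≤ R := Real.sqrt_nonneg _
  have bu : |u| ≤ R := Real.abs_le_sqrt (by nlinarith [sq_nonneg (s * v)])
  have bv : |s * v| ≤ R := Real.abs_le_sqrt (by nlinarith [sq_nonneg u])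
  rw [abs_mul, abs_of_pos hs] at bv
  have bv' : |v| ≤ R / s := by rw [le_div_iff₀ hs]; linarith
  have bu' : |u| ≤ R / s := bu.trans (by rw [le_div_iff₀ hs]; nlinarith)
  have hK : C / ((k + 1 : ℕ) : ℝ) ^ 2 ≤ C / (k : ℝ) ^ 2 := by
    push_cast; gcongr; linarith
  have hRs : 0 ≤ R / s := by positivity
  have d : |b * (x * v + u) + (c - 1) * v| ≤ C / (k : ℝ) ^ 2 * (3 * (R / s)) := by
    have hb := h1.trans hK
    have hc := h2.trans hK
    have t1 : |x * v + u| ≤ R / s + R / s := by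
      refine (abs_add_le _ _).trans (add_le_add ?_ bu')
      rw [abs_mul, abs_of_nonneg hx0]
      exact (mul_le_of_le_one_left (abs_nonneg v) hx1).trans bv'
    calc _ ≤ |b * (x * v + u)| + |(c - 1) * v| := abs_add_le _ _
      _ = |b| * |x * v + u| + |c - 1| * |v| := by rw [abs_mul, abs_mul]
      _ ≤ C / (k : ℝ) ^ 2 * (R / s + R / s) + C / (k : ℝ) ^ 2 * (R / s) := by gcongr
      _ = _ := by ring
  calc R + |b * (x * v + u) + (c - 1) * v| ≤ R + C / (k : ℝ) ^ 2 * (3 * (R / s)) := by linarith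
    _ = _ := by field_simp

set_option maxHeartbeats 1000000 in
lemma pt_bound (hα : -1 < α) (hβ : -1 < β) : ∃ C : ℝ, 0 < C ∧ ∀ x : ℝ, 0 ≤ x → x ≤ 1 → ∀ k : ℕ,
    |vv α β k x| ≤ C * (√(1 - x ^ 2) + 1 / ((k : ℝ) + 1)) ^ (-(α + 1 / 2)) ∧
    |vv α β (k + 1) x - x * vv α β k x| ≤ C * ((√(1 - x ^ 2) + 1 / ((k : ℝ) + 1)) ^ (-(α + 1 / 2)) *
      (√(1 - x ^ 2) + 1 / ((k : ℝ) + 1))) := by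
  obtain ⟨C1, hC1, hn⟩ := near_bound hα hβ
  obtain ⟨C2, hC2, hf⟩ := energy_step hα hβ
  set e := α + 1 / 2 with he
  clear_value e
  set G := Real.exp (2 * C2) with hG
  have hG0 : 0 < G := Real.exp_pos _
  clear_value G
  refine ⟨C1 * 4 ^ |e| + G * (2 * C1 * 3 ^ |e|) * 2 ^ |e|, by positivity, fun x hx0 hx1 k => ?_⟩
  set s := √(1 - x ^ 2) with hs
  have hsn : 0 ≤ 1 - x ^ 2 := by nlinarith
  have hs0 : 0 ≤ s := Real.sqrt_nonneg _
  have hss : s ^ 2 = 1 - x ^ 2 := Real.sq_sqrt hsn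
  have hs1 : s ≤ 1 := by nlinarith
  clear_value s
  have hk1 : (0 : ℝ) < (k : ℝ) + 1 := by positivity
  have hkk : (0 : ℝ) ≤ (k : ℝ) := by positivity
  set y := 1 / ((k : ℝ) + 1) with hy
  have hy0 : 0 < y := by positivity
  have hTpos : 0 < s + y := by linarith
  have hTp : 0 < (s + y) ^ (-e) := Real.rpow_pos_of_pos hTpos _
  have small : s * ((k : ℝ) + 1) ≤ 3 → (k : ℝ) * s ≤ 2 →
      (|vv α β k x| ≤ (C1 * 4 ^ |e| + G * (2 * C1 * 3 ^ |e|) * 2 ^ |e|) * (s + y) ^ (-e) ∧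
    |vv α β (k + 1) x - x * vv α β k x| ≤
      (C1 * 4 ^ |e| + G * (2 * C1 * 3 ^ |e|) * 2 ^ |e|) * ((s + y) ^ (-e) * (s + y))) := by
    intro h3 h2
    obtain ⟨a1, a2⟩ := hn x hx0 hx1 k (by rw [← hs]; exact h2)
    have hy' : ((k : ℝ) + 1) ^ e = y ^ (-e) := by
      rw [hy, one_div, Real.inv_rpow hk1.le, ← Real.rpow_neg hk1.le, neg_neg]
    have h3' : s ≤ 3 * y := by rw [hy, mul_one_div, le_div_iff₀ hk1]; exact h3
    have hc := (rpow_cmp (-e) hy0 (T := s + y) (M := 4) (by linarith) (by linarith) (by norm_num)).1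
    rw [abs_neg] at hc
    rw [hy'] at a1 a2
    have h0 : 0 ≤ G * (2 * C1 * 3 ^ |e|) * 2 ^ |e| := by positivity
    have hyT : y ≤ s + y := by linarith
    constructor
    · calc |vv α β k x| ≤ C1 * y ^ (-e) := a1
        _ ≤ C1 * (4 ^ |e| * (s + y) ^ (-e)) := by gcongr
        _ ≤ (C1 * 4 ^ |e| + G * (2 * C1 * 3 ^ |e|) * 2 ^ |e|) * (s + y) ^ (-e) := by nlinarith
    · calc |vv α β (k + 1) x - x * vv α β k x| ≤ C1 * (y ^ (-e) / ((k : ℝ) + 1)) := a2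
        _ = C1 * (y ^ (-e) * y) := by rw [hy]; ring
        _ ≤ C1 * ((4 ^ |e| * (s + y) ^ (-e)) * (s + y)) := by gcongr
        _ = C1 * 4 ^ |e| * ((s + y) ^ (-e) * (s + y)) := by ring
        _ ≤ (C1 * 4 ^ |e| + G * (2 * C1 * 3 ^ |e|) * 2 ^ |e|) * ((s + y) ^ (-e) * (s + y)) := by
          gcongr; linarith
  rcases hs0.eq_or_lt with h0 | hspos
  · exact small (by rw [← h0]; norm_num) (by rw [← h0]; norm_num)
  set k0 := ⌈1 / s⌉₊ with hk0
  have c1 : 1 / s ≤ k0 := Nat.le_ceil _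
  have c2 : (k0 : ℝ) < 1 / s + 1 := Nat.ceil_lt_add_one (by positivity)
  have c3 : (1 : ℝ) ≤ k0 := le_trans (by rw [le_div_iff₀ hspos]; linarith) c1
  have c1' : 1 ≤ k0 * s := by rwa [div_le_iff₀ hspos] at c1
  have c2' : k0 * s ≤ 1 + s := by
    have := mul_le_mul_of_nonneg_right c2.le hspos.le
    rwa [add_mul, one_mul, div_mul_cancel₀ _ hspos.ne'] at this
  rcases le_total k k0 with hle | hle
  · have : (k : ℝ) ≤ k0 := by exact_mod_cast hle
    have : k * s ≤ 1 + s := (mul_le_mul_of_nonneg_right this hspos.le).trans c2'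
    exact small (by linarith) (by linarith)
  · have hkk0 : (k0 : ℝ) ≤ k := by exact_mod_cast hle
    have hk01 : 1 ≤ k0 := by exact_mod_cast c3
    have en := seq_upper (fun k => √((vv α β (k + 1) x - x * vv α β k x) ^ 2 + (s * vv α β k x) ^ 2))
      (C2 / s) k0 hk01 (by positivity) (fun _ => Real.sqrt_nonneg _)
      (fun k hk => hf x s hx0 hx1 hspos hss k (hk01.trans hk)) k hle
    obtain ⟨a1, a2⟩ := hn x hx0 hx1 k0 (by rw [← hs]; linarith)
    have hexp : Real.exp (2 * (C2 / s) / k0) ≤ G := by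
      rw [hG]; apply Real.exp_le_exp.2
      rw [div_le_iff₀ (by linarith)]
      have : 2 * (C2 / s) = 2 * C2 * (1 / s) := by ring
      rw [this]; gcongr
    have hk0p : (0 : ℝ) < (k0 : ℝ) + 1 := by positivity
    have hy' : ((k0 : ℝ) + 1) ^ e ≤ 3 ^ |e| * s ^ (-e) := by
      have := (rpow_cmp e (y := 1 / s) (T := (k0 : ℝ) + 1) (M := 3) (by positivity) (by linarith)
        (by
          have : 1 ≤ 1 / s := by rw [le_div_iff₀ hspos]; linarith
          linarith) (by norm_num)).2
      rwa [one_div, Real.inv_rpow hspos.le, ← Real.rpow_neg hspos.le] at this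
    have hsp : 0 < s ^ (-e) := Real.rpow_pos_of_pos hspos _
    have E0 : √((vv α β (k0 + 1) x - x * vv α β k0 x) ^ 2 + (s * vv α β k0 x) ^ 2) ≤
        2 * C1 * 3 ^ |e| * s ^ (-e) * s := by
      have t : √((vv α β (k0 + 1) x - x * vv α β k0 x) ^ 2 + (s * vv α β k0 x) ^ 2) ≤
          |vv α β (k0 + 1) x - x * vv α β k0 x| + s * |vv α β k0 x| := by
        rw [Real.sqrt_le_iff]
        refine ⟨by positivity, ?_⟩
        have := sq_abs (vv α β (k0 + 1) x - x * vv α β k0 x)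
        have := sq_abs (vv α β k0 x)
        have : 0 ≤ |vv α β (k0 + 1) x - x * vv α β k0 x| * (s * |vv α β k0 x|) := by positivity
        nlinarith
      have i1 : 1 / ((k0 : ℝ) + 1) ≤ s := by
        rw [div_le_iff₀ hk0p]; nlinarith
      calc _ ≤ _ := t
        _ ≤ C1 * (((k0 : ℝ) + 1) ^ e / ((k0 : ℝ) + 1)) + s * (C1 * ((k0 : ℝ) + 1) ^ e) := by gcongr
        _ = C1 * (((k0 : ℝ) + 1) ^ e * (1 / ((k0 : ℝ) + 1) + s)) := by ring
        _ ≤ C1 * ((3 ^ |e| * s ^ (-e)) * (s + s)) := by gcongr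
        _ = _ := by ring
    have Ek : √((vv α β (k + 1) x - x * vv α β k x) ^ 2 + (s * vv α β k x) ^ 2) ≤
        G * (2 * C1 * 3 ^ |e|) * s ^ (-e) * s := by
      calc _ ≤ _ := en
        _ ≤ G * (2 * C1 * 3 ^ |e| * s ^ (-e) * s) := by gcongr
        _ = _ := by ring
    have yT : y ≤ s := by
      rw [hy, div_le_iff₀ hk1]
      have : k0 * s ≤ k * s := mul_le_mul_of_nonneg_right hkk0 hspos.le
      linarith
    have hc := (rpow_cmp (-e) hspos (T := s + y) (M := 2) (by linarith) (by linarith) (by norm_num)).1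
    rw [abs_neg] at hc
    have bu : |vv α β (k + 1) x - x * vv α β k x| ≤ _ := (Real.abs_le_sqrt (by nlinarith [sq_nonneg (s * vv α β k x)])).trans Ek
    have bv : |s * vv α β k x| ≤ _ := (Real.abs_le_sqrt (by nlinarith [sq_nonneg (vv α β (k + 1) x - x * vv α β k x)])).trans Ek
    rw [abs_mul, abs_of_pos hspos] at bv
    have bv' : |vv α β k x| ≤ G * (2 * C1 * 3 ^ |e|) * s ^ (-e) := by
      refine le_of_mul_le_mul_left ?_ hspos; linarith
    have hcc : 0 ≤ C1 * 4 ^ |e| := by positivity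
    constructor
    · calc _ ≤ _ := bv'
        _ ≤ G * (2 * C1 * 3 ^ |e|) * (2 ^ |e| * (s + y) ^ (-e)) := by gcongr
        _ ≤ (C1 * 4 ^ |e| + G * (2 * C1 * 3 ^ |e|) * 2 ^ |e|) * (s + y) ^ (-e) := by nlinarith
    · calc _ ≤ _ := bu
        _ ≤ G * (2 * C1 * 3 ^ |e|) * (2 ^ |e| * (s + y) ^ (-e)) * (s + y) := by gcongr; linarith
        _ = G * (2 * C1 * 3 ^ |e|) * 2 ^ |e| * ((s + y) ^ (-e) * (s + y)) := by ring
        _ ≤ (C1 * 4 ^ |e| + G * (2 * C1 * 3 ^ |e|) * 2 ^ |e|) * ((s + y) ^ (-e) * (s + y)) := by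
          gcongr; linarith
end far


/-! ### The kernel and its moments -/

/-- Kernel of the operator `V`. -/
def Kn (η : ℝ → ℝ) (α β : ℝ) (n : ℕ) (x y : ℝ) : ℝ :=
  ∑ k ∈ Finset.range (2 * n + 1), η ((k : ℝ) / n) * vv α β k x * vv α β k y / hv α β k

/-- The operator acting on coefficients. -/
def Tq (α β x : ℝ) : (ℕ → ℝ) → ℕ → ℝ := Tm (bq α β) (fun k => cq α β k - 1) x

lemma Tq_apply (α β x : ℝ) (F : ℕ → ℝ) (K : ℕ) : Tq α β x F K =
    (F (K + 1) + (bq α β K - 2 * x) * F K + cq α β K * F (K - 1)) / 2 := by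
  simp only [Tq, Tm]; ring

section kern
variable {α β : ℝ}

lemma parts (hα : -1 < α) (hβ : -1 < β) (F : ℕ → ℝ) (x y : ℝ) (M : ℕ) :
    (y - x) * ∑ K ∈ Finset.range M, F K * vv α β K y / hv α β K =
      ∑ K ∈ Finset.range M, Tq α β x F K * vv α β K y / hv α β K +
      cq α β M * (F (M - 1) * vv α β M y - F M * vv α β (M - 1) y) / (2 * hv α β M) := by
  induction M with
  | zero => simp [cq_zero]
  | succ M ih =>
    rw [Finset.sum_range_succ, Finset.sum_range_succ, mul_add, ih, Nat.add_sub_cancel, Tq_apply,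
      hv_succ hα hβ, vv_rec hα hβ M y]
    have h1 := (hv_pos hα hβ M).ne'
    have h2 := (cq_pos hα hβ (M + 1) (by omega)).ne'
    field_simp
    ring

lemma Tq_high (x : ℝ) (F : ℕ → ℝ) (M : ℕ) (hF : ∀ K, M ≤ K → F K = 0) (j : ℕ) :
    ∀ K, M + j ≤ K → (Tq α β x)^[j] F K = 0 := by
  induction j with
  | zero => simpa using hF
  | succ j ih =>
    intro K hK
    rw [Function.iterate_succ_apply', Tq_apply, ih _ (by omega), ih _ (by omega), ih _ (by omega)]
    simp

lemma parts_iter (hα : -1 < α) (hβ : -1 < β) (F : ℕ → ℝ) (x y : ℝ) (M : ℕ) (hF : ∀ K, M ≤ K → F K = 0) (j : ℕ) :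
    (y - x) ^ j * ∑ K ∈ Finset.range M, F K * vv α β K y / hv α β K =
      ∑ K ∈ Finset.range (M + j), (Tq α β x)^[j] F K * vv α β K y / hv α β K := by
  induction j with
  | zero => simp
  | succ j ih =>
    have hz := Tq_high (α := α) (β := β) x F M hF j
    have e : ∑ K ∈ Finset.range (M + j), (Tq α β x)^[j] F K * vv α β K y / hv α β K =
        ∑ K ∈ Finset.range (M + (j + 1)), (Tq α β x)^[j] F K * vv α β K y / hv α β K := by
      rw [← add_assoc, Finset.sum_range_succ, hz _ le_rfl]; simp
    rw [pow_succ', mul_assoc, ih, e, parts hα hβ, hz _ (by omega), hz (M + (j + 1)) (by omega)]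
    simp only [Function.iterate_succ_apply']
    simp

lemma Tq_low (hα : -1 < α) (hβ : -1 < β) (x : ℝ) (F : ℕ → ℝ) (m : ℕ) (hF : ∀ K, K ≤ m → F K = vv α β K x) (j : ℕ) :
    ∀ K, K + (j + 1) ≤ m → (Tq α β x)^[j + 1] F K = 0 := by
  induction j with
  | zero =>
    intro K hK
    simp only [zero_add, Function.iterate_one]
    rw [Tq_apply, hF _ (by omega), hF _ (by omega), hF _ (by omega), vv_rec hα hβ]
    ring
  | succ j ih =>
    intro K hK
    rw [Function.iterate_succ_apply', Tq_apply, ih _ (by omega), ih _ (by omega), ih _ (by omega)]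
    simp

lemma parseval (hα : -1 < α) (hβ : -1 < β) (a : ℕ → ℝ) (M : ℕ) :
    ∫ y, (∑ K ∈ Finset.range M, a K * vv α β K y / hv α β K) ^ 2 ∂(mu α β) =
      ∑ K ∈ Finset.range M, a K ^ 2 / hv α β K := by
  have e : ∀ y, (∑ K ∈ Finset.range M, a K * vv α β K y / hv α β K) ^ 2 =
      ∑ K ∈ Finset.range M, ∑ L ∈ Finset.range M, (a K / hv α β K * (a L / hv α β L)) *
        (vv α β K y * vv α β L y) := by
    intro y
    rw [pow_two, Finset.sum_mul_sum]
    refine Finset.sum_congr rfl fun K _ => Finset.sum_congr rfl fun L _ => by ring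
  simp only [e]
  rw [integral_finsetSum _ fun K _ => integrable_finsetSum _ fun L _ => (vv_int hα hβ K L).const_mul _]
  refine Finset.sum_congr rfl fun K hK => ?_
  rw [integral_finsetSum _ fun L _ => (vv_int hα hβ K L).const_mul _, Finset.sum_eq_single K]
  · rw [integral_const_mul]
    have h1 := (hv_pos hα hβ K).ne'
    change _ * hv α β K = _
    field_simp
  · intro L _ hL
    rw [integral_const_mul, vv_orth hα hβ hL.symm, mul_zero]
  · intro h; exact absurd hK h

lemma eta_bounds {η : ℝ → ℝ} (hη : Admissible η) (i : ℕ) :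
    ∃ C : ℝ, 0 ≤ C ∧ ∀ t, 0 ≤ t → |iteratedDeriv i η t| ≤ C := by
  have hc : Continuous (iteratedDeriv i η) := hη.1.continuous_iteratedDeriv i (by exact_mod_cast le_top)
  obtain ⟨C, hC⟩ := isCompact_Icc.exists_bound_of_continuousOn (s := Icc (0 : ℝ) 3) hc.continuousOn
  have hC0 : 0 ≤ C := (norm_nonneg _).trans (hC 0 (by norm_num))
  refine ⟨C, hC0, fun t ht => ?_⟩
  rcases le_or_gt t 3 with h | h
  · exact hC t ⟨ht, h⟩
  · have : η =ᶠ[nhds t] fun _ => (0 : ℝ) := by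
      filter_upwards [lt_mem_nhds (show (2 : ℝ) < t by linarith)] with s hs using hη.2.2 s hs.le
    rw [this.iteratedDeriv_eq]
    simp [iteratedDeriv_const, hC0]

lemma Kn_iter (hα : -1 < α) (hβ : -1 < β) {η : ℝ → ℝ} (hη : Admissible η) (n : ℕ) (hn : 1 ≤ n) (x y : ℝ) (j : ℕ) :
    (y - x) ^ j * Kn η α β n x y = ∑ K ∈ Finset.range (2 * n + j),
      (Tq α β x)^[j] (fun k => η ((k : ℝ) / n) * vv α β k x) K * vv α β K y / hv α β K := by
  have hn' : (0 : ℝ) < n := by exact_mod_cast hn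
  have hF : ∀ K : ℕ, 2 * n ≤ K → η ((K : ℝ) / n) * vv α β K x = 0 := by
    intro K hK
    rw [hη.2.2 _ (by rw [le_div_iff₀ hn']; exact_mod_cast hK), zero_mul]
  rw [← parts_iter hα hβ _ x y (2 * n) hF j, Kn, Finset.sum_range_succ, hF _ le_rfl]
  simp

lemma moment_eq (hα : -1 < α) (hβ : -1 < β) {η : ℝ → ℝ} (hη : Admissible η) (n : ℕ) (hn : 1 ≤ n) (x : ℝ) (j : ℕ) :
    ∫ y, ((y - x) ^ j * Kn η α β n x y) ^ 2 ∂(mu α β) = ∑ K ∈ Finset.range (2 * n + j),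
      ((Tq α β x)^[j] (fun k => η ((k : ℝ) / n) * vv α β k x) K) ^ 2 / hv α β K := by
  simp only [Kn_iter hα hβ hη n hn]
  exact parseval hα hβ _ _

end kern


/-! ### Moment estimates -/

section mom
variable {α β : ℝ}

set_option maxHeartbeats 1000000 in
lemma coeff_bound (hα : -1 < α) (hβ : -1 < β) {η : ℝ → ℝ} (hη : Admissible η) (j : ℕ) : ∃ C : ℝ, 0 < C ∧ ∀ n : ℕ, 4 * j + 16 ≤ n →
    ∀ x : ℝ, 0 ≤ x → x ≤ 1 → ∀ K, K < 2 * n + (j + 1) →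
    |(Tq α β x)^[j + 1] (fun k => η ((k : ℝ) / n) * vv α β k x) K| ≤
      C * (((√(1 - x ^ 2) + 1 / (n : ℝ)) / n) ^ (j + 1) * (√(1 - x ^ 2) + 1 / (n : ℝ)) ^ (-(α + 1 / 2))) := by
  let ι := {p : ℕ × ℝ // 4 * j + 16 ≤ p.1 ∧ 0 ≤ p.2 ∧ p.2 ≤ 1}
  let N : ι → ℝ := fun p => (p.1.1 : ℝ)
  let d : ι → ℕ := fun p => p.1.1 - 2 * (j + 1)
  have hnn : ∀ p : ι, (16 : ℝ) ≤ N p := fun p => by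
    have : 16 ≤ p.1.1 := by have := p.2.1; omega
    show (16 : ℝ) ≤ (p.1.1 : ℝ)
    exact_mod_cast this
  have hN : ∀ p : ι, 1 ≤ N p := fun p => by linarith [hnn p]
  have hd : ∀ p : ι, 2 ≤ d p := fun p => by have := p.2.1; simp only [d]; omega
  have hdN : ∀ p : ι, (1 / 2 : ℝ) * N p ≤ d p := fun p => by
    have : p.1.1 ≤ 2 * d p := by have := p.2.1; simp only [d]; omega
    have : (p.1.1 : ℝ) ≤ 2 * (d p : ℝ) := by exact_mod_cast this
    simp only [N]; linarith
  obtain ⟨f, g, hf, hg, hfg⟩ := Tm_symbol (N := N) (d := d) hN (fun p => by linarith [hd p]) (bq α β)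
    (fun k => cq α β k - 1) (fun p => p.1.2) (fun p => √(1 - p.1.2 ^ 2) + 1 / N p)
    (fun p k => vv α β k p.1.2)
    (fun p => by rw [abs_le]; constructor <;> linarith [p.2.2.1, p.2.2.2])
    (fun p => by have := Real.sqrt_nonneg (1 - p.1.2 ^ 2); linarith)
    (fun p => by
      have h0 : 0 ≤ 1 - p.1.2 ^ 2 := by nlinarith [p.2.2.1, p.2.2.2]
      have h1 := Real.sq_sqrt h0
      have h2 := Real.sqrt_nonneg (1 - p.1.2 ^ 2)
      have h3 : 0 ≤ 1 / N p := by have := hN p; positivity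
      nlinarith)
    (fun m => bq_sy hα hβ hN hd (1 / 2) (by norm_num) hdN m)
    (fun m => gq_sy hα hβ hN hd (1 / 2) (by norm_num) hdN m)
    (fun p K hK => by
      have := vv_rec hα hβ (K + 1) p.1.2
      rw [Nat.add_sub_cancel] at this
      rw [this]; ring)
    (fun p k => η ((k : ℝ) / N p))
    (fun m => fwd_bound η hη.1 (eta_bounds hη) m (fun p => by linarith [hN p])) (j + 1)
  obtain ⟨Cf, hCf, hf⟩ := (hf 0).bound
  obtain ⟨Cg, hCg, hg⟩ := (hg 0).bound
  obtain ⟨Cp, hCp, hp⟩ := pt_bound hα hβ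
  set e := α + 1 / 2 with he
  clear_value e
  set A := (6 : ℝ) ^ |e| * 3 ^ |e| with hA
  have hA0 : 0 < A := by positivity
  refine ⟨(Cf + 2 * Cg) * Cp * A + 1, by positivity, fun n hn x hx0 hx1 K hK => ?_⟩
  set s := √(1 - x ^ 2) with hs
  have hs0 : 0 ≤ s := Real.sqrt_nonneg _
  have hn0 : (0 : ℝ) < n := by exact_mod_cast (by omega : 0 < n)
  set σ := s + 1 / (n : ℝ) with hσ
  have hσ0 : 0 < σ := by positivity
  have hσe : 0 < σ ^ (-e) := Real.rpow_pos_of_pos hσ0 _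
  by_cases hlow : K + (j + 1) ≤ n
  · rw [Tq_low hα hβ x _ n (fun k hk => ?_) j K hlow, abs_zero]
    · positivity
    · rw [hη.2.1 _ (by positivity) (by rw [div_le_one hn0]; exact_mod_cast hk), one_mul]
  · obtain ⟨k, rfl⟩ : ∃ k, K = k + (j + 1) := ⟨K - (j + 1), by omega⟩
    have hk : n - 2 * (j + 1) ≤ k := by omega
    let p : ι := ⟨(n, x), hn, hx0, hx1⟩
    have h1 := hfg p k hk
    have h2 := hf p k hk
    have h3 := hg p k hk
    simp only [N, p] at h1 h2 h3
    rw [← hs, ← hσ] at h2 h3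
    rw [Tq, h1]
    obtain ⟨p1, p2⟩ := hp x hx0 hx1 (k + (j + 1))
    rw [← hs] at p1 p2
    set T := s + 1 / (((k + (j + 1) : ℕ) : ℝ) + 1) with hT
    have hKu : ((k + (j + 1) : ℕ) : ℝ) + 1 ≤ 3 * n := by exact_mod_cast (by omega : k + (j + 1) + 1 ≤ 3 * n)
    have hKl : (n : ℝ) ≤ 2 * (((k + (j + 1) : ℕ) : ℝ) + 1) := by
      exact_mod_cast (by omega : n ≤ 2 * (k + (j + 1) + 1))
    have hKp : (0 : ℝ) < ((k + (j + 1) : ℕ) : ℝ) + 1 := by positivity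
    have t1 : 1 / (((k + (j + 1) : ℕ) : ℝ) + 1) ≤ 2 * (1 / (n : ℝ)) := by
      rw [mul_one_div, div_le_div_iff₀ hKp hn0]; linarith
    have t2 : 1 / (n : ℝ) / 3 ≤ 1 / (((k + (j + 1) : ℕ) : ℝ) + 1) := by
      rw [div_div, div_le_div_iff₀ (by positivity) hKp]; linarith
    have T1 : T ≤ 2 * σ := by rw [hT, hσ]; linarith
    have T2 : σ / 3 ≤ T := by rw [hT, hσ]; linarith
    have T0 : 0 < T := by positivity
    have hTe : T ^ (-e) ≤ A * σ ^ (-e) := by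
      have r1 := (rpow_cmp (-e) (y := σ / 3) (T := T) (M := 6) (by positivity) T2 (by linarith) (by norm_num)).2
      have r2 := (rpow_cmp (-e) (y := σ / 3) (T := σ) (M := 3) (by positivity) (by linarith) (by linarith) (by norm_num)).1
      rw [abs_neg] at r1 r2
      calc T ^ (-e) ≤ 6 ^ |e| * (σ / 3) ^ (-e) := r1
        _ ≤ 6 ^ |e| * (3 ^ |e| * σ ^ (-e)) := by gcongr
        _ = _ := by rw [hA]; ring
    have hTe0 : 0 < T ^ (-e) := Real.rpow_pos_of_pos T0 _
    set q := (σ / n) ^ (j + 1) with hq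
    have hq0 : 0 < q := by positivity
    calc _ ≤ _ := abs_add_le _ _
      _ = |f ⟨(n, x), hn, hx0, hx1⟩ k| * |vv α β (k + (j + 1)) x| + |g ⟨(n, x), hn, hx0, hx1⟩ k| *
          |vv α β (k + (j + 1) + 1) x - x * vv α β (k + (j + 1)) x| := by rw [abs_mul, abs_mul]
      _ ≤ (Cf * q) * (Cp * (A * σ ^ (-e))) + (Cg * (q / σ)) * (Cp * ((A * σ ^ (-e)) * (2 * σ))) := by
          gcongr
          · exact p1.trans (by gcongr)
          · exact p2.trans (by gcongr)
      _ = (Cf + 2 * Cg) * Cp * A * (q * σ ^ (-e)) := by field_simp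
      _ ≤ ((Cf + 2 * Cg) * Cp * A + 1) * (q * σ ^ (-e)) := by gcongr; linarith

lemma moment_high (hα : -1 < α) (hβ : -1 < β) {η : ℝ → ℝ} (hη : Admissible η) (j : ℕ) : ∃ C : ℝ, 0 < C ∧ ∀ n : ℕ, 4 * j + 16 ≤ n →
    ∀ x : ℝ, 0 ≤ x → x ≤ 1 → ∫ y, ((y - x) ^ (j + 1) * Kn η α β n x y) ^ 2 ∂(mu α β) ≤
      C * (n * (((√(1 - x ^ 2) + 1 / (n : ℝ)) / n) ^ (j + 1) *
        (√(1 - x ^ 2) + 1 / (n : ℝ)) ^ (-(α + 1 / 2))) ^ 2) := by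
  obtain ⟨C, hC, h⟩ := coeff_bound hα hβ hη j
  obtain ⟨c, hc, hcl⟩ := hv_lower hα hβ
  refine ⟨3 * C ^ 2 / c, by positivity, fun n hn x hx0 hx1 => ?_⟩
  rw [moment_eq hα hβ hη n (by omega)]
  set B := (((√(1 - x ^ 2) + 1 / (n : ℝ)) / n) ^ (j + 1) *
        (√(1 - x ^ 2) + 1 / (n : ℝ)) ^ (-(α + 1 / 2))) with hB
  calc _ ≤ ∑ K ∈ Finset.range (2 * n + (j + 1)), (C * B) ^ 2 / c := by
        refine Finset.sum_le_sum fun K hK => ?_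
        have := h n hn x hx0 hx1 K (by simpa using hK)
        have h2 : ((Tq α β x)^[j + 1] (fun k => η ((k : ℝ) / n) * vv α β k x) K) ^ 2 ≤ (C * B) ^ 2 := by
          rw [← sq_abs]; exact pow_le_pow_left₀ (abs_nonneg _) this 2
        exact div_le_div₀ (by positivity) h2 hc (hcl K)
    _ = ((2 * n + (j + 1) : ℕ) : ℝ) * ((C * B) ^ 2 / c) := by simp
    _ ≤ (3 * n) * ((C * B) ^ 2 / c) := by
        gcongr
        exact_mod_cast (by omega : 2 * n + (j + 1) ≤ 3 * n)
    _ = _ := by ring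

lemma sum_rpow (a : ℝ) (ha0 : 0 ≤ a) (ha : a < 1) (m : ℕ) :
    ∑ k ∈ Finset.range m, ((k : ℝ) + 1) ^ (-a) ≤ (m : ℝ) ^ (1 - a) / (1 - a) := by
  have h1 : 0 < 1 - a := by linarith
  induction m with
  | zero => simp [Real.zero_rpow h1.ne']
  | succ m ih =>
    rw [Finset.sum_range_succ]
    refine (add_le_add_left ih _).trans ?_
    rw [div_add' _ _ _ h1.ne', div_le_div_iff_of_pos_right h1]
    push_cast
    have hm : (0 : ℝ) < (m : ℝ) + 1 := by positivity
    have hb := _root_.rpow_one_add_le_one_add_mul_self (s := -(1 / ((m : ℝ) + 1))) (p := 1 - a)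
      (by
        have : 1 / ((m : ℝ) + 1) ≤ 1 := by rw [div_le_one hm]; linarith [Nat.cast_nonneg (α := ℝ) m]
        linarith) h1.le (by linarith)
    have e1 : (m : ℝ) = ((m : ℝ) + 1) * (1 + -(1 / ((m : ℝ) + 1))) := by field_simp; ring
    have e2 : (m : ℝ) ^ (1 - a) = ((m : ℝ) + 1) ^ (1 - a) * (1 + -(1 / ((m : ℝ) + 1))) ^ (1 - a) := by
      conv_lhs => rw [e1]
      refine Real.mul_rpow hm.le ?_
      have : 1 / ((m : ℝ) + 1) ≤ 1 := by rw [div_le_one hm]; linarith [Nat.cast_nonneg (α := ℝ) m]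
      linarith
    have e3 : ((m : ℝ) + 1) ^ (1 - a) = ((m : ℝ) + 1) ^ (-a) * ((m : ℝ) + 1) := by
      rw [sub_eq_neg_add, Real.rpow_add hm, Real.rpow_one]
    have hp : 0 < ((m : ℝ) + 1) ^ (1 - a) := Real.rpow_pos_of_pos hm _
    have := mul_le_mul_of_nonneg_left hb hp.le
    rw [e2]
    refine (add_le_add_left this _).trans (le_of_eq ?_)
    rw [e3]; field_simp; ring

set_option maxHeartbeats 1000000 in
lemma moment_zero (hα : -1 < α) (hβ : -1 < β) {η : ℝ → ℝ} (hη : Admissible η) : ∃ C : ℝ, 0 < C ∧ ∀ n : ℕ, 1 ≤ n →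
    ∀ x : ℝ, 0 ≤ x → x ≤ 1 → ∫ y, (Kn η α β n x y) ^ 2 ∂(mu α β) ≤
      C * (n * ((√(1 - x ^ 2) + 1 / (n : ℝ)) ^ (-(α + 1 / 2))) ^ 2) := by
  obtain ⟨Cp, hCp, hp⟩ := pt_bound hα hβ
  obtain ⟨c, hc, hcl⟩ := hv_lower hα hβ
  obtain ⟨Ce, hCe, hE⟩ := eta_bounds hη 0
  simp only [iteratedDeriv_zero] at hE
  -- bound for the sum
  obtain ⟨Cs, hCs, hS⟩ : ∃ Cs : ℝ, 0 < Cs ∧ ∀ n : ℕ, 1 ≤ n → ∀ s : ℝ, 0 ≤ s →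
      ∑ k ∈ Finset.range (2 * n), ((s + 1 / ((k : ℝ) + 1)) ^ (-(α + 1 / 2))) ^ 2 ≤
        Cs * (n * ((s + 1 / (n : ℝ)) ^ (-(α + 1 / 2))) ^ 2) := by
    set a := -(2 * α + 1) with haa
    have ha1 : a < 1 := by rw [haa]; linarith
    have hsq : ∀ t : ℝ, 0 < t → (t ^ (-(α + 1 / 2))) ^ 2 = t ^ a := by
      intro t ht
      rw [← Real.rpow_natCast, ← Real.rpow_mul ht.le]; congr 1; push_cast; rw [haa]; ring
    clear_value a
    rcases le_total a 0 with ha | ha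
    · refine ⟨2 * (2 : ℝ) ^ |a|, by positivity, fun n hn s hs => ?_⟩
      have hn0 : (0 : ℝ) < n := by exact_mod_cast hn
      have hσ : 0 < s + 1 / (n : ℝ) := by positivity
      rw [hsq _ hσ]
      calc _ ≤ ∑ k ∈ Finset.range (2 * n), (2 : ℝ) ^ |a| * (s + 1 / (n : ℝ)) ^ a := by
            refine Finset.sum_le_sum fun k hk => ?_
            have hk1 : (0 : ℝ) < (k : ℝ) + 1 := by positivity
            rw [hsq _ (by positivity)]
            have hk' : (k : ℝ) + 1 ≤ 2 * n := by
              have := Finset.mem_range.1 hk; exact_mod_cast this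
            have t1 : (s + 1 / (n : ℝ)) / 2 ≤ s + 1 / ((k : ℝ) + 1) := by
              have : 1 / (n : ℝ) / 2 ≤ 1 / ((k : ℝ) + 1) := by
                rw [div_div, div_le_div_iff₀ (by positivity) hk1]; linarith
              linarith
            refine (Real.rpow_le_rpow_of_nonpos (by positivity) t1 ha).trans ?_
            exact (rpow_cmp a (by positivity) (by linarith) (by linarith) (by norm_num)).1
        _ = _ := by simp; ring
    · refine ⟨2 / (1 - a), by have : 0 < 1 - a := by linarith
                              positivity, fun n hn s hs => ?_⟩
      have hn0 : (0 : ℝ) < n := by exact_mod_cast hn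
      have hσ : 0 < s + 1 / (n : ℝ) := by positivity
      rw [hsq _ hσ]
      have h1a : 0 < 1 - a := by linarith
      calc _ ≤ ∑ k ∈ Finset.range (2 * n), (s + 1 / (n : ℝ)) ^ a * (2 * n) ^ a * ((k : ℝ) + 1) ^ (-a) := by
            refine Finset.sum_le_sum fun k hk => ?_
            have hk1 : (0 : ℝ) < (k : ℝ) + 1 := by positivity
            rw [hsq _ (by positivity)]
            have hk' : (k : ℝ) + 1 ≤ 2 * n := by
              have := Finset.mem_range.1 hk; exact_mod_cast this
            have t1 : s + 1 / ((k : ℝ) + 1) ≤ (s + 1 / (n : ℝ)) * (2 * n) / ((k : ℝ) + 1) := by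
              rw [le_div_iff₀ hk1, add_mul, add_mul, div_mul_cancel₀ _ hk1.ne']
              have : 1 / (n : ℝ) * (2 * n) = 2 := by field_simp
              rw [this]
              nlinarith
            refine (Real.rpow_le_rpow (by positivity) t1 ha).trans (le_of_eq ?_)
            rw [Real.div_rpow (by positivity) hk1.le, Real.mul_rpow hσ.le (by positivity), Real.rpow_neg hk1.le]
            rfl
        _ = (s + 1 / (n : ℝ)) ^ a * (2 * n) ^ a * ∑ k ∈ Finset.range (2 * n), ((k : ℝ) + 1) ^ (-a) := by
            rw [Finset.mul_sum]
        _ ≤ (s + 1 / (n : ℝ)) ^ a * (2 * n) ^ a * (((2 * n : ℕ) : ℝ) ^ (1 - a) / (1 - a)) := by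
            gcongr; exact sum_rpow a ha ha1 _
        _ = (s + 1 / (n : ℝ)) ^ a * ((2 * n) ^ a * (2 * (n : ℝ)) ^ (1 - a)) / (1 - a) := by
            push_cast; ring
        _ = _ := by
            rw [← Real.rpow_add (by positivity), add_sub_cancel, Real.rpow_one]; ring
  refine ⟨Ce ^ 2 * Cp ^ 2 / c * Cs + 1, by positivity, fun n hn x hx0 hx1 => ?_⟩
  have h := moment_eq hα hβ hη n hn x 0
  simp only [pow_zero, one_mul, Function.iterate_zero, id, add_zero] at h
  rw [h]
  have hs0 : 0 ≤ √(1 - x ^ 2) := Real.sqrt_nonneg _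
  have hX : 0 ≤ (n : ℝ) * ((√(1 - x ^ 2) + 1 / (n : ℝ)) ^ (-(α + 1 / 2))) ^ 2 := by positivity
  calc _ ≤ ∑ k ∈ Finset.range (2 * n), Ce ^ 2 * Cp ^ 2 / c *
        ((√(1 - x ^ 2) + 1 / ((k : ℝ) + 1)) ^ (-(α + 1 / 2))) ^ 2 := by
        refine Finset.sum_le_sum fun k _ => ?_
        have a1 := hE ((k : ℝ) / n) (by positivity)
        have a2 := (hp x hx0 hx1 k).1
        have a3 : (η ((k : ℝ) / n) * vv α β k x) ^ 2 ≤
            (Ce * (Cp * (√(1 - x ^ 2) + 1 / ((k : ℝ) + 1)) ^ (-(α + 1 / 2)))) ^ 2 := by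
          rw [← sq_abs, abs_mul]
          gcongr
        calc _ ≤ (Ce * (Cp * (√(1 - x ^ 2) + 1 / ((k : ℝ) + 1)) ^ (-(α + 1 / 2)))) ^ 2 / c :=
              div_le_div₀ (by positivity) a3 hc (hcl k)
          _ = _ := by ring
    _ = Ce ^ 2 * Cp ^ 2 / c * ∑ k ∈ Finset.range (2 * n),
        ((√(1 - x ^ 2) + 1 / ((k : ℝ) + 1)) ^ (-(α + 1 / 2))) ^ 2 := by rw [Finset.mul_sum]
    _ ≤ Ce ^ 2 * Cp ^ 2 / c * (Cs * (n * ((√(1 - x ^ 2) + 1 / (n : ℝ)) ^ (-(α + 1 / 2))) ^ 2)) := by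
        gcongr; exact hS n hn _ hs0
    _ ≤ _ := by nlinarith
end mom


/-! ### The localisation integral -/

lemma one_add_pow_two_mul_le (u : ℝ) (hu : 0 ≤ u) (m : ℕ) (hm : 1 ≤ m) :
    (1 + u) ^ (2 * m) ≤ 2 ^ (2 * m) * (1 + u ^ (2 * m)) := by
  have := add_pow_le (zero_le_one' ℝ) hu (2 * m)
  rw [one_pow] at this
  refine this.trans ?_
  have : (2 : ℝ) ^ (2 * m - 1) ≤ 2 ^ (2 * m) := pow_le_pow_right₀ (by norm_num) (by omega)
  gcongr

lemma kern_pt (a : ℝ) (m : ℕ) (hm : |a| + 2 ≤ 2 * m) {S L t t₀ : ℝ} (hL : 0 < L) (hLS : L ≤ S)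
    (ht : 0 < t) (ht0 : 0 ≤ t₀) (ht1 : t₀ ≤ S) (h : S / 8 ≤ t₀ ∨ S / 2 ≤ L) :
    t ^ a / (1 + ((t - t₀) / L) ^ (2 * m)) ≤
      16 ^ |a| * 2 ^ (2 * m) * S ^ a * (1 + ((t - t₀) / L) ^ 2)⁻¹ +
        16 * L / S * (Ioo 0 (S / 16)).indicator (fun t => t ^ a) t := by
  have hS : 0 < S := hL.trans_le hLS
  have hm1 : 1 ≤ m := by
    have : (0 : ℝ) < m := by linarith [abs_nonneg a]
    exact_mod_cast this
  set u := |t - t₀| / L with hu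
  have hu0 : 0 ≤ u := by positivity
  have e1 : ((t - t₀) / L) ^ (2 * m) = u ^ (2 * m) := by
    rw [hu, div_pow, div_pow, Even.pow_abs (even_two_mul m)]
  have e2 : ((t - t₀) / L) ^ 2 = u ^ 2 := by
    rw [hu, div_pow, div_pow, sq_abs]
  rw [e1, e2]
  have hta : 0 < t ^ a := Real.rpow_pos_of_pos ht _
  have hSa : 0 < S ^ a := Real.rpow_pos_of_pos hS _
  have hD : 0 < 1 + u ^ (2 * m) := by positivity
  -- main alternative
  have key : ∀ B : ℝ, t ^ a ≤ 16 ^ |a| * S ^ a * (1 + u) ^ |a| →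
      t ^ a / (1 + u ^ (2 * m)) ≤ 16 ^ |a| * 2 ^ (2 * m) * S ^ a * (1 + u ^ 2)⁻¹ := by
    intro _ hB
    rw [← div_eq_mul_inv, div_le_div_iff₀ hD (by positivity)]
    have h1 : (1 + u) ^ |a| ≤ (1 + u) ^ (2 * m - 2) := by
      rw [← Real.rpow_natCast]
      refine Real.rpow_le_rpow_of_exponent_le (by linarith) ?_
      rw [Nat.cast_sub (by omega)]; push_cast; linarith
    have h2 : 1 + u ^ 2 ≤ (1 + u) ^ 2 := by nlinarith
    have h3 := one_add_pow_two_mul_le u hu0 m hm1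
    have h4 : (1 + u) ^ (2 * m) = (1 + u) ^ (2 * m - 2) * (1 + u) ^ 2 := by
      rw [← pow_add]; congr 1; omega
    calc t ^ a * (1 + u ^ 2) ≤ (16 ^ |a| * S ^ a * (1 + u) ^ (2 * m - 2)) * (1 + u) ^ 2 := by
          refine mul_le_mul (hB.trans ?_) h2 (by positivity) (by positivity)
          gcongr
      _ = 16 ^ |a| * S ^ a * (1 + u) ^ (2 * m) := by rw [h4]; ring
      _ ≤ 16 ^ |a| * S ^ a * (2 ^ (2 * m) * (1 + u ^ (2 * m))) := by gcongr
      _ = _ := by ring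
  have hind : 0 ≤ 16 * L / S * (Ioo 0 (S / 16)).indicator (fun t => t ^ a) t := by
    refine mul_nonneg (by positivity) (Set.indicator_nonneg (fun y hy => ?_) _)
    exact Real.rpow_nonneg hy.1.le _
  have h16 : (1 : ℝ) ≤ 16 ^ |a| := Real.one_le_rpow (by norm_num) (abs_nonneg _)
  rcases le_total 0 a with ha | ha
  · refine (key 0 ?_).trans (by linarith)
    have : t ≤ S * (1 + u) := by
      have h1 : t - t₀ ≤ L * u := by
        rw [hu, mul_div_cancel₀ _ hL.ne']; exact le_abs_self _
      nlinarith
    have h2 := Real.rpow_le_rpow ht.le this ha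
    rw [Real.mul_rpow hS.le (by linarith)] at h2
    rw [abs_of_nonneg ha] at h16 ⊢
    refine h2.trans ?_
    have : 0 ≤ S ^ a * (1 + u) ^ a := mul_nonneg hSa.le (Real.rpow_nonneg (by linarith) _)
    nlinarith
  · rcases le_or_gt (S / 16) t with hts | hts
    · refine (key 0 ?_).trans (by linarith)
      have h2 := Real.rpow_le_rpow_of_nonpos (by positivity) hts ha
      have h3 : (S / 16) ^ a = 16 ^ |a| * S ^ a := by
        rw [Real.div_rpow hS.le (by norm_num), abs_of_nonpos ha, Real.rpow_neg (by norm_num)]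
        field_simp
      rw [h3] at h2
      refine h2.trans (le_mul_of_one_le_right (by positivity) ?_)
      exact Real.one_le_rpow (by linarith) (abs_nonneg _)
    · rw [Set.indicator_of_mem (show t ∈ Ioo 0 (S / 16) from ⟨ht, hts⟩)]
      have h5 : 1 / (1 + u ^ (2 * m)) ≤ 16 * L / S := by
        rcases h with h | h
        · have h6 : S / 16 ≤ |t - t₀| := by
            rw [abs_sub_comm]; refine le_trans ?_ (le_abs_self _); linarith
          have h7 : S / (16 * L) ≤ u := by
            rw [hu, div_le_div_iff₀ (by positivity) hL]; nlinarith
          have h8 : u ≤ 1 + u ^ (2 * m) := by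
            rcases le_total u 1 with h9 | h9
            · have := pow_nonneg hu0 (2 * m); linarith
            · have := pow_le_pow_right₀ h9 (show 1 ≤ 2 * m by omega)
              rw [pow_one] at this; linarith
          have h10 : 0 < S / (16 * L) := by positivity
          have h11 := one_div_le_one_div_of_le h10 (h7.trans h8)
          rwa [one_div_div] at h11
        · have : 1 / (1 + u ^ (2 * m)) ≤ 1 := by
            rw [div_le_one hD]; have := pow_nonneg hu0 (2 * m); linarith
          refine this.trans ?_
          rw [le_div_iff₀ hS]; linarith
      have : t ^ a / (1 + u ^ (2 * m)) ≤ 16 * L / S * t ^ a := by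
        rw [div_eq_mul_one_div, mul_comm]; gcongr
      have h12 : 0 ≤ 16 ^ |a| * 2 ^ (2 * m) * S ^ a * (1 + u ^ 2)⁻¹ := by positivity
      linarith

lemma ind_int (a S : ℝ) (ha : -1 < a) (hS : 0 < S) :
    Integrable ((Ioo 0 S).indicator (fun t : ℝ => t ^ a)) ∧
      ∫ t, (Ioo 0 S).indicator (fun t : ℝ => t ^ a) t = S ^ (a + 1) / (a + 1) := by
  have h1 : IntervalIntegrable (fun t : ℝ => t ^ a) volume 0 S :=
    intervalIntegral.intervalIntegrable_rpow' ha
  constructor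
  · rw [integrable_indicator_iff measurableSet_Ioo]
    exact ((intervalIntegrable_iff_integrableOn_Ioo_of_le hS.le).1 h1)
  · rw [integral_indicator measurableSet_Ioo, ← integral_Ioc_eq_integral_Ioo,
      ← intervalIntegral.integral_of_le hS.le, integral_rpow (Or.inl ha),
      Real.zero_rpow (by linarith), sub_zero]

section loc
variable {α β : ℝ}

set_option maxHeartbeats 1000000 in
lemma loc_int (hα : -1 < α) (hβ : -1 < β) (m : ℕ) (hm : |α| + 2 ≤ 2 * m) : ∃ C : ℝ, 0 < C ∧ ∀ n : ℕ, 1 ≤ n →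
    ∀ x : ℝ, 0 ≤ x → x ≤ 1 → ∀ σ L : ℝ, σ = √(1 - x ^ 2) + 1 / (n : ℝ) → L = σ / n →
      ∫ y, 1 / (1 + ((y - x) / L) ^ (2 * m)) ∂(mu α β) ≤ C * ((σ ^ 2) ^ α * L) := by
  set M : ℝ := ∫ y in Ioo (-1 : ℝ) 1, w α β y with hM
  have hM0 : 0 ≤ M := setIntegral_nonneg measurableSet_Ioo fun y hy => (w_pos α β hy).le
  set C₁ : ℝ := 16 ^ |α| * 2 ^ (2 * m) with hC₁
  have hC₁0 : 0 < C₁ := by positivity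
  have ha1 : 0 < α + 1 := by linarith
  refine ⟨2 ^ |β| * (C₁ * Real.pi + 16 * (1 / 16) ^ (α + 1) / (α + 1)) + 2 ^ (2 * m) * 4 ^ (2 * m - 1 - α) * M,
    by positivity, ?_⟩
  intro n hn x hx0 hx1 σ L hσ hLe
  have hn1 : (1 : ℝ) ≤ n := by exact_mod_cast hn
  have hn0 : (0 : ℝ) < n := by linarith
  set s := √(1 - x ^ 2) with hs
  have hs0 : 0 ≤ s := Real.sqrt_nonneg _
  have hs2 : s ^ 2 = 1 - x ^ 2 := Real.sq_sqrt (by nlinarith)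
  have hin : 0 < 1 / (n : ℝ) := by positivity
  have hin1 : 1 / (n : ℝ) ≤ 1 := by rw [div_le_one hn0]; exact hn1
  have hσ0 : 0 < σ := by rw [hσ]; positivity
  have hs1 : s ≤ 1 := by nlinarith
  have hσ2 : σ ≤ 2 := by rw [hσ]; linarith
  have hL' : L = σ * (1 / n) := by rw [hLe]; ring
  have hL : 0 < L := by rw [hL']; positivity
  set S := σ ^ 2 with hSdef
  have hS : 0 < S := by positivity
  have hLS : L ≤ S := by rw [hL', hSdef, sq]; gcongr; rw [hσ]; linarith
  have ht1 : 1 - x ≤ S := by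
    have : s ^ 2 ≤ S := by rw [hSdef]; gcongr; rw [hσ]; linarith
    nlinarith
  have hcase : S / 8 ≤ 1 - x ∨ S / 2 ≤ L := by
    by_contra hcon
    push Not at hcon
    have h1 : s ^ 2 < (σ / 2) ^ 2 := by rw [hs2]; nlinarith
    have h2 : s < σ / 2 := lt_of_pow_lt_pow_left₀ 2 (by positivity) h1
    have h3 : σ / 2 < 1 / n := by rw [hσ] at h2 ⊢; linarith
    have h4 : S / 2 ≤ L := by rw [hL', hSdef]; nlinarith
    linarith [hcon.2]
  have hS4 : S ≤ 4 := by rw [hSdef]; nlinarith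
  have hSa : 0 < S ^ α := Real.rpow_pos_of_pos hS _
  -- three dominating functions
  set g₁ : ℝ → ℝ := fun y => (1 + ((y - x) / L) ^ 2)⁻¹ with hg₁
  set g₂ : ℝ → ℝ := fun y => (Ioo 0 (S / 16)).indicator (fun t : ℝ => t ^ α) (1 - y) with hg₂
  have hI1 : Integrable g₁ ∧ ∫ y, g₁ y = L * Real.pi := by
    have h0 : Integrable fun y : ℝ => (1 + (y / L) ^ 2)⁻¹ := by
      have := (integrable_inv_one_add_sq).comp_div hL.ne'
      exact this
    constructor
    · exact h0.comp_sub_right x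
    · rw [hg₁, integral_sub_right_eq_self (fun y : ℝ => (1 + (y / L) ^ 2)⁻¹) x,
        Measure.integral_comp_div (fun y : ℝ => (1 + y ^ 2)⁻¹) L, integral_univ_inv_one_add_sq,
        abs_of_pos hL, smul_eq_mul]
  have hI2 : Integrable g₂ ∧ ∫ y, g₂ y = (S / 16) ^ (α + 1) / (α + 1) := by
    obtain ⟨i1, i2⟩ := ind_int α (S / 16) hα (by positivity)
    refine ⟨i1.comp_sub_left 1, ?_⟩
    rw [hg₂, integral_sub_left_eq_self _ _ (1 : ℝ), i2]
  have hg1nn : ∀ y, 0 ≤ g₁ y := fun y => by simp only [hg₁]; positivity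
  have hg2nn : ∀ y, 0 ≤ g₂ y := fun y =>
    Set.indicator_nonneg (fun z hz => Real.rpow_nonneg hz.1.le _) _
  set G : ℝ → ℝ := fun y => 2 ^ |β| * (C₁ * S ^ α * g₁ y + 16 * L / S * g₂ y) +
    (2 * L) ^ (2 * m) * w α β y with hG
  have hpt : ∀ y ∈ Ioo (-1 : ℝ) 1, 1 / (1 + ((y - x) / L) ^ (2 * m)) * w α β y ≤ G y := by
    intro y hy
    have hy1 : 0 < 1 - y := by linarith [hy.2]
    have hy2 : 0 < 1 + y := by linarith [hy.1]
    have hk := kern_pt α m hm hL hLS hy1 (sub_nonneg.2 hx1) ht1 hcase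
    have e0 : ((1 - y) - (1 - x)) / L = -((y - x) / L) := by ring
    rw [e0, Even.neg_pow (even_two_mul m), neg_sq] at hk
    have hwp := (w_pos α β hy)
    have hnn : 0 ≤ C₁ * S ^ α * g₁ y + 16 * L / S * g₂ y := by
      have := hg1nn y; have := hg2nn y; positivity
    have hpn : 0 ≤ ((y - x) / L) ^ (2 * m) := Even.pow_nonneg (even_two_mul m) _
    rcases le_total (-1 / 2) y with hyh | hyh
    · have hb : (1 + y) ^ β ≤ 2 ^ |β| := by
        rcases le_total 0 β with hb | hb
        · rw [abs_of_nonneg hb]; exact Real.rpow_le_rpow hy2.le (by linarith [hy.2]) hb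
        · rw [abs_of_nonpos hb, Real.rpow_neg (by norm_num), ← Real.inv_rpow (by norm_num)]
          exact Real.rpow_le_rpow_of_nonpos (by norm_num) (by norm_num; linarith) hb
      have : 1 / (1 + ((y - x) / L) ^ (2 * m)) * w α β y =
          (1 + y) ^ β * ((1 - y) ^ α / (1 + ((y - x) / L) ^ (2 * m))) := by
        rw [w]; ring
      rw [this]
      have h1 : (1 + y) ^ β * ((1 - y) ^ α / (1 + ((y - x) / L) ^ (2 * m))) ≤
          2 ^ |β| * (C₁ * S ^ α * g₁ y + 16 * L / S * g₂ y) := by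
        refine mul_le_mul hb hk ?_ (by positivity)
        have := Real.rpow_nonneg hy1.le α
        positivity
      have h2 : 0 ≤ (2 * L) ^ (2 * m) * w α β y := by positivity
      simp only [hG]; linarith
    · have h1 : 1 / (1 + ((y - x) / L) ^ (2 * m)) ≤ (2 * L) ^ (2 * m) := by
        have h2 : (1 / (2 * L)) ^ (2 * m) ≤ ((y - x) / L) ^ (2 * m) := by
          rw [← Even.pow_abs (even_two_mul m) ((y - x) / L)]
          gcongr
          rw [abs_div, abs_of_pos hL, div_le_div_iff₀ (by positivity) hL, abs_sub_comm,
            abs_of_nonneg (by linarith)]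
          nlinarith
        have h3 : 0 < (1 / (2 * L)) ^ (2 * m) := by positivity
        have h4 := one_div_le_one_div_of_le h3 (h2.trans (by linarith : _ ≤ 1 + ((y - x) / L) ^ (2 * m)))
        rwa [one_div_pow, one_div_one_div] at h4
      have h5 := mul_le_mul_of_nonneg_right h1 hwp.le
      have h6 : 0 ≤ (2 : ℝ) ^ |β| * (C₁ * S ^ α * g₁ y + 16 * L / S * g₂ y) := by positivity
      simp only [hG]; linarith
  have hi1 : IntegrableOn g₁ (Ioo (-1) 1) := hI1.1.integrableOn
  have hi2 : IntegrableOn g₂ (Ioo (-1) 1) := hI2.1.integrableOn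
  have hw := w_io α β hα hβ
  have hA : IntegrableOn (fun y => C₁ * S ^ α * g₁ y) (Ioo (-1) 1) := hi1.const_mul _
  have hB : IntegrableOn (fun y => 16 * L / S * g₂ y) (Ioo (-1) 1) := hi2.const_mul _
  have hAB : IntegrableOn (fun y => 2 ^ |β| * (C₁ * S ^ α * g₁ y + 16 * L / S * g₂ y)) (Ioo (-1) 1) :=
    (hA.add hB).const_mul _
  have hD : IntegrableOn (fun y => (2 * L) ^ (2 * m) * w α β y) (Ioo (-1) 1) := hw.const_mul _
  have hGi : IntegrableOn G (Ioo (-1) 1) := hAB.add hD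
  rw [int_mu]
  have hle : ∫ y in Ioo (-1 : ℝ) 1, 1 / (1 + ((y - x) / L) ^ (2 * m)) * w α β y ≤
      ∫ y in Ioo (-1 : ℝ) 1, G y := by
    refine integral_mono_of_nonneg ?_ hGi ?_
    · refine (ae_restrict_iff' measurableSet_Ioo).2 (Filter.Eventually.of_forall fun y hy => ?_)
      have hpn : 0 ≤ ((y - x) / L) ^ (2 * m) := Even.pow_nonneg (even_two_mul m) _
      have := (w_pos α β hy)
      show 0 ≤ _
      positivity
    · exact (ae_restrict_iff' measurableSet_Ioo).2 (Filter.Eventually.of_forall hpt)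
  refine hle.trans ?_
  have hGe : ∫ y in Ioo (-1 : ℝ) 1, G y = 2 ^ |β| * (C₁ * S ^ α * (∫ y in Ioo (-1 : ℝ) 1, g₁ y) +
      16 * L / S * (∫ y in Ioo (-1 : ℝ) 1, g₂ y)) + (2 * L) ^ (2 * m) * M := by
    simp only [hG]
    rw [integral_add hAB hD, integral_const_mul, integral_const_mul, integral_add hA hB,
      integral_const_mul, integral_const_mul]
  rw [hGe]
  have hb1 : ∫ y in Ioo (-1 : ℝ) 1, g₁ y ≤ L * Real.pi := by
    rw [← hI1.2]
    exact setIntegral_le_integral hI1.1 (Filter.Eventually.of_forall hg1nn)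
  have hb2 : ∫ y in Ioo (-1 : ℝ) 1, g₂ y ≤ (S / 16) ^ (α + 1) / (α + 1) := by
    rw [← hI2.2]
    exact setIntegral_le_integral hI2.1 (Filter.Eventually.of_forall hg2nn)
  have e3 : (S / 16) ^ (α + 1) = (1 / 16) ^ (α + 1) * (S ^ α * S) := by
    rw [div_eq_mul_one_div, Real.mul_rpow hS.le (by norm_num), Real.rpow_add hS, Real.rpow_one]; ring
  have e4 : (2 * L) ^ (2 * m) ≤ 2 ^ (2 * m) * 4 ^ (2 * m - 1 - α) * (S ^ α * L) := by
    have hm1 : 1 ≤ m := by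
      have : (0 : ℝ) < m := by linarith [abs_nonneg α]
      exact_mod_cast this
    have : L ^ (2 * m) = L ^ (2 * m - 1) * L := by rw [← pow_succ]; congr 1; omega
    rw [mul_pow, this]
    have h1 : L ^ (2 * m - 1) ≤ S ^ (2 * m - 1) := by gcongr
    have h2 : S ^ (2 * m - 1) = S ^ (2 * m - 1 - α) * S ^ α := by
      rw [← Real.rpow_add hS, ← Real.rpow_natCast]; congr 1
      rw [Nat.cast_sub (by omega)]; push_cast; ring
    have h3 : S ^ (2 * m - 1 - α) ≤ 4 ^ (2 * m - 1 - α) := by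
      refine Real.rpow_le_rpow hS.le hS4 ?_
      have := le_abs_self α; linarith
    calc (2 : ℝ) ^ (2 * m) * (L ^ (2 * m - 1) * L) ≤ 2 ^ (2 * m) * ((4 ^ (2 * m - 1 - α) * S ^ α) * L) := by
          gcongr
          rw [h2] at h1
          exact h1.trans (by gcongr)
      _ = _ := by ring
  calc _ ≤ 2 ^ |β| * (C₁ * S ^ α * (L * Real.pi) + 16 * L / S * ((S / 16) ^ (α + 1) / (α + 1))) +
        2 ^ (2 * m) * 4 ^ (2 * m - 1 - α) * (S ^ α * L) * M := by gcongr
    _ = _ := by rw [e3]; field_simp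

end loc


/-! ### The Lebesgue constant -/

lemma Kn_cont (η : ℝ → ℝ) (α β : ℝ) (n : ℕ) : Continuous (fun p : ℝ × ℝ => Kn η α β n p.1 p.2) := by
  unfold Kn
  refine continuous_finsetSum _ fun k _ => ?_
  have h1 : Continuous fun p : ℝ × ℝ => vv α β k p.1 := (vv_cont α β k).comp continuous_fst
  have h2 : Continuous fun p : ℝ × ℝ => vv α β k p.2 := (vv_cont α β k).comp continuous_snd
  exact ((continuous_const.mul h1).mul h2).div_const _

lemma Kn_cont_right (η : ℝ → ℝ) (α β : ℝ) (n : ℕ) (x : ℝ) : Continuous (fun y => Kn η α β n x y) := by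
  unfold Kn
  refine continuous_finsetSum _ fun k _ => ?_
  exact (continuous_const.mul (vv_cont α β k)).div_const _

lemma Kn_comm (η : ℝ → ℝ) (α β : ℝ) (n : ℕ) (x y : ℝ) : Kn η α β n x y = Kn η α β n y x := by
  unfold Kn
  exact Finset.sum_congr rfl fun k _ => by ring

lemma int_mu_neg (α β : ℝ) (f : ℝ → ℝ) : ∫ y, f (-y) ∂(mu α β) = ∫ y, f y ∂(mu β α) := by
  rw [int_mu, int_mu, ← integral_Ioc_eq_integral_Ioo, ← integral_Ioc_eq_integral_Ioo,
    ← intervalIntegral.integral_of_le (by norm_num), ← intervalIntegral.integral_of_le (by norm_num)]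
  have := intervalIntegral.integral_comp_neg (a := -1) (b := 1) (fun y => f y * w β α y)
  rw [neg_neg] at this
  rw [← this]
  simp only [w_symm]

section leb
variable {α β : ℝ}

lemma hv_symm (hα : -1 < α) (hβ : -1 < β) (k : ℕ) : hv β α k = hv α β k := by
  unfold hv
  rw [← int_mu_neg α β]
  refine integral_congr_ae (Filter.Eventually.of_forall fun y => ?_)
  simp only [vv_symm hα hβ]
  rw [mul_mul_mul_comm, ← pow_add, Even.neg_one_pow ⟨k, rfl⟩, one_mul]

lemma Kn_symm (hα : -1 < α) (hβ : -1 < β) (η : ℝ → ℝ) (n : ℕ) (x y : ℝ) : Kn η β α n (-x) (-y) = Kn η α β n x y := by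
  unfold Kn
  refine Finset.sum_congr rfl fun k _ => ?_
  rw [vv_symm hα hβ, vv_symm hα hβ, hv_symm hα hβ]
  have : ((-1 : ℝ) ^ k) * (-1) ^ k = 1 := by rw [← pow_add, Even.neg_one_pow ⟨k, rfl⟩]
  linear_combination (η (k / n) * vv α β k x * vv α β k y / hv α β k) * this

lemma leb_small (hα : -1 < α) (hβ : -1 < β) (η : ℝ → ℝ) (n : ℕ) : ∃ C : ℝ, 0 ≤ C ∧ ∀ x ∈ Icc (-1 : ℝ) 1,
    ∫ y, |Kn η α β n x y| ∂(mu α β) ≤ C := by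
  have := mu_finite hα hβ
  obtain ⟨C, hC⟩ := (isCompact_Icc.prod isCompact_Icc).exists_bound_of_continuousOn
    (s := Icc (-1 : ℝ) 1 ×ˢ Icc (-1 : ℝ) 1) (Kn_cont η α β n).continuousOn
  have hC0 : 0 ≤ C := (norm_nonneg _).trans (hC (0, 0) (by simp))
  refine ⟨C * ∫ _y, (1 : ℝ) ∂(mu α β), mul_nonneg hC0 (mu_pos hα hβ).le, fun x hx => ?_⟩
  rw [← integral_const_mul]
  refine integral_mono_ae (cont_int hα hβ (Kn_cont_right η α β n x).abs)
    (cont_int hα hβ (by fun_prop)) ?_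
  filter_upwards [mu_ae α β] with y hy
  rw [mul_one]
  exact hC (x, y) ⟨hx, hy.1.le, hy.2.le⟩

set_option maxHeartbeats 1000000 in
lemma leb_large (hα : -1 < α) (hβ : -1 < β) {η : ℝ → ℝ} (hη : Admissible η) : ∃ C : ℝ, ∃ N : ℕ, 0 ≤ C ∧ ∀ n, N ≤ n →
    ∀ x : ℝ, 0 ≤ x → x ≤ 1 → ∫ y, |Kn η α β n x y| ∂(mu α β) ≤ C := by
  obtain ⟨j, hj⟩ := exists_nat_ge (|α| + 2)
  obtain ⟨C₁, hC₁, h₁⟩ := moment_high hα hβ hη j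
  obtain ⟨C₀, hC₀, h₀⟩ := moment_zero hα hβ hη
  obtain ⟨C₂, hC₂, h₂⟩ := loc_int hα hβ (j + 1) (by push_cast; linarith [Nat.cast_nonneg (α := ℝ) j])
  refine ⟨C₀ + C₁ + C₂, 4 * j + 16, by positivity, fun n hn x hx0 hx1 => ?_⟩
  have hn0 : (0 : ℝ) < n := by exact_mod_cast (by omega : 0 < n)
  specialize h₁ n hn x hx0 hx1
  specialize h₀ n (by omega) x hx0 hx1
  specialize h₂ n (by omega) x hx0 hx1 _ _ rfl rfl
  set σ := √(1 - x ^ 2) + 1 / (n : ℝ) with hσ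
  have hσ0 : 0 < σ := by have := Real.sqrt_nonneg (1 - x ^ 2); positivity
  set L := σ / n with hLd
  have hL : 0 < L := by positivity
  set e := σ ^ (-(α + 1 / 2)) with he
  have he0 : 0 < e := Real.rpow_pos_of_pos hσ0 _
  have hee : e ^ 2 * ((σ ^ 2) ^ α * σ) = 1 := by
    have h1 : e ^ 2 = σ ^ (-(2 * α + 1)) := by
      rw [he, ← Real.rpow_natCast, ← Real.rpow_mul hσ0.le]; congr 1; push_cast; ring
    have h2 : (σ ^ 2) ^ α * σ = σ ^ (2 * α + 1) := by
      rw [← Real.rpow_natCast, ← Real.rpow_mul hσ0.le, Real.rpow_add hσ0, Real.rpow_one]; norm_num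
    rw [h1, h2, ← Real.rpow_add hσ0]; simp
  set K : ℝ → ℝ := fun y => Kn η α β n x y with hK
  have hKc : Continuous K := Kn_cont_right η α β n x
  have hDp : ∀ y : ℝ, 0 < 1 + ((y - x) / L) ^ (2 * (j + 1)) := fun y => by
    have := Even.pow_nonneg (even_two_mul (j + 1)) ((y - x) / L); linarith
  have i0 : Integrable (fun y => K y ^ 2) (mu α β) := cont_int hα hβ (by fun_prop)
  have i1 : Integrable (fun y => ((y - x) ^ (j + 1) * K y) ^ 2) (mu α β) := cont_int hα hβ (by fun_prop)
  have i2 : Integrable (fun y => 1 / (1 + ((y - x) / L) ^ (2 * (j + 1)))) (mu α β) :=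
    cont_int hα hβ (Continuous.div (by fun_prop) (by fun_prop) fun y => (hDp y).ne')
  set lm := 1 / (n * e ^ 2) with hlm
  have hlm0 : 0 < lm := by positivity
  have hle : ∀ y, |K y| ≤ (lm * K y ^ 2 + lm / (L ^ (j + 1)) ^ 2 * ((y - x) ^ (j + 1) * K y) ^ 2) +
      1 / lm * (1 / (1 + ((y - x) / L) ^ (2 * (j + 1)))) := by
    intro y
    set D := 1 + ((y - x) / L) ^ (2 * (j + 1)) with hD
    have hDy : 0 < D := hDp y
    have e1 : lm * K y ^ 2 + lm / (L ^ (j + 1)) ^ 2 * ((y - x) ^ (j + 1) * K y) ^ 2 = lm * D * |K y| ^ 2 := by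
      rw [hD, sq_abs, mul_comm 2 (j + 1), pow_mul, div_pow (y - x) L, div_pow (_ ^ _) (L ^ _)]; ring
    rw [e1]
    have h3 : 1 / lm * (1 / D) = 1 / (lm * D) := by field_simp
    rw [h3]
    set z := lm * D with hz
    have hz0 : 0 < z := by positivity
    have h4 : 0 ≤ (z * |K y| - 1) ^ 2 := sq_nonneg _
    have h5 : 0 ≤ |K y| := abs_nonneg _
    have h6 : |K y| * z ≤ (z * |K y| ^ 2 + 1 / z) * z := by
      rw [add_mul, one_div_mul_cancel hz0.ne']
      nlinarith
    exact le_of_mul_le_mul_right h6 hz0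
  have hA : Integrable (fun y => lm * K y ^ 2) (mu α β) := i0.const_mul _
  have hB : Integrable (fun y => lm / (L ^ (j + 1)) ^ 2 * ((y - x) ^ (j + 1) * K y) ^ 2) (mu α β) := i1.const_mul _
  have hC : Integrable (fun y => 1 / lm * (1 / (1 + ((y - x) / L) ^ (2 * (j + 1))))) (mu α β) := i2.const_mul _
  have hAB : Integrable (fun y => lm * K y ^ 2 + lm / (L ^ (j + 1)) ^ 2 * ((y - x) ^ (j + 1) * K y) ^ 2)
    (mu α β) := hA.add hB
  have hInt : ∫ y, |K y| ∂(mu α β) ≤ (lm * ∫ y, K y ^ 2 ∂(mu α β)) +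
      (lm / (L ^ (j + 1)) ^ 2 * ∫ y, ((y - x) ^ (j + 1) * K y) ^ 2 ∂(mu α β)) +
      1 / lm * ∫ y, 1 / (1 + ((y - x) / L) ^ (2 * (j + 1))) ∂(mu α β) := by
    refine (integral_mono (cont_int hα hβ hKc.abs) (hAB.add hC) hle).trans (le_of_eq ?_)
    rw [integral_add' hAB hC, integral_add hA hB, integral_const_mul, integral_const_mul, integral_const_mul]
  refine hInt.trans ?_
  have b0 : lm * ∫ y, K y ^ 2 ∂(mu α β) ≤ C₀ := by
    calc _ ≤ lm * (C₀ * (n * e ^ 2)) := by gcongr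
      _ = C₀ := by rw [hlm]; field_simp
  have b1 : lm / (L ^ (j + 1)) ^ 2 * ∫ y, ((y - x) ^ (j + 1) * K y) ^ 2 ∂(mu α β) ≤ C₁ := by
    calc _ ≤ lm / (L ^ (j + 1)) ^ 2 * (C₁ * (n * (L ^ (j + 1) * e) ^ 2)) := by gcongr
      _ = C₁ := by rw [hlm]; field_simp
  have b2 : 1 / lm * ∫ y, 1 / (1 + ((y - x) / L) ^ (2 * (j + 1))) ∂(mu α β) ≤ C₂ := by
    calc _ ≤ 1 / lm * (C₂ * ((σ ^ 2) ^ α * L)) := by gcongr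
      _ = C₂ * (e ^ 2 * ((σ ^ 2) ^ α * σ)) := by rw [hlm, hLd]; field_simp
      _ = C₂ := by rw [hee, mul_one]
  linarith

end leb

lemma leb {α β : ℝ} (hα : -1 < α) (hβ : -1 < β) {η : ℝ → ℝ} (hη : Admissible η) :
    ∃ C : ℝ, 0 ≤ C ∧ ∀ n : ℕ, ∀ x ∈ Icc (-1 : ℝ) 1, ∫ y, |Kn η α β n x y| ∂(mu α β) ≤ C := by
  obtain ⟨C₁, N₁, hC₁, h₁⟩ := leb_large hα hβ hη
  obtain ⟨C₂, N₂, hC₂, h₂⟩ := leb_large hβ hα hη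
  choose D hD0 hD using fun n => leb_small hα hβ η n
  set S := ∑ n ∈ Finset.range (N₁ + N₂), D n with hS
  have hS0 : 0 ≤ S := Finset.sum_nonneg fun n _ => hD0 n
  refine ⟨C₁ + C₂ + S, by positivity, fun n x hx => ?_⟩
  rcases lt_or_ge n (N₁ + N₂) with hn | hn
  · have := Finset.single_le_sum (f := D) (fun n _ => hD0 n) (Finset.mem_range.2 hn)
    linarith [hD n x hx]
  · rcases le_total 0 x with h0 | h0
    · linarith [h₁ n (by omega) x h0 hx.2]
    · have := h₂ n (by omega) (-x) (by linarith) (by linarith [hx.1])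
      rw [← int_mu_neg α β] at this
      simp only [Kn_symm hα hβ] at this
      linarith


/-! ### Boundedness of the operators and conclusion -/

section fin
variable {α β : ℝ}

lemma V_int (hα : -1 < α) (hβ : -1 < β) (η : ℝ → ℝ) (n : ℕ) (f : ℝ → ℝ) (hf : Integrable f (mu α β)) (x : ℝ) :
    V η α β n f x = ∫ y, f y * Kn η α β n x y ∂(mu α β) := by
  rw [V_eq hα hβ]
  have h1 : ∀ y, f y * Kn η α β n x y = ∑ k ∈ Finset.range (2 * n + 1),
      (η ((k : ℝ) / n) * vv α β k x / hv α β k) * (f y * vv α β k y) := by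
    intro y
    unfold Kn
    rw [Finset.mul_sum]
    exact Finset.sum_congr rfl fun k _ => by ring
  simp only [h1]
  rw [integral_finsetSum _ fun k _ => (mul_int hf (vv_cont α β k)).const_mul _]
  refine Finset.sum_congr rfl fun k _ => ?_
  rw [integral_const_mul]; ring

lemma V_cont (hα : -1 < α) (hβ : -1 < β) (η : ℝ → ℝ) (n : ℕ) (f : ℝ → ℝ) : Continuous (V η α β n f) := by
  have : V η α β n f = fun x => ∑ k ∈ Finset.range (2 * n + 1), η ((k : ℝ) / n) *
      ((∫ y, f y * vv α β k y ∂(mu α β)) / hv α β k * vv α β k x) := by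
    funext x; exact V_eq hα hβ η n f x
  rw [this]
  refine continuous_finsetSum _ fun k _ => ?_
  exact continuous_const.mul (continuous_const.mul (vv_cont α β k))

lemma V_bdd (hα : -1 < α) (hβ : -1 < β) {η : ℝ → ℝ} {C : ℝ} (hC : 0 < C) (n : ℕ)
    (hK : ∀ x ∈ Icc (-1 : ℝ) 1, ∫ y, |Kn η α β n x y| ∂(mu α β) ≤ C)
    (f : ℝ → ℝ) (hf : Measurable f) (hfi : Integrable f (mu α β)) (p : ℝ≥0∞) (hp : 1 ≤ p) (hpt : p ≠ ⊤) :
    eLpNorm (V η α β n f) p (mu α β) ≤ ENNReal.ofReal C * eLpNorm f p (mu α β) := by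
  have hfin := mu_finite hα hβ
  set r := p.toReal with hr
  have hr1 : 1 ≤ r := by
    rw [hr, ← ENNReal.toReal_one]; exact ENNReal.toReal_mono hpt hp
  have hr0 : 0 < r := by linarith
  have hp0 : p ≠ 0 := (zero_lt_one.trans_le hp).ne'
  set Ce := ENNReal.ofReal C with hCe
  have hCe0 : Ce ≠ 0 := by rw [hCe]; simpa using hC
  have hCet : Ce ≠ ⊤ := ENNReal.ofReal_ne_top
  have hKm : Measurable (fun q : ℝ × ℝ => ‖Kn η α β n q.1 q.2‖ₑ) :=
    (Kn_cont η α β n).measurable.enorm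
  have hKx : ∀ x, Measurable (fun y => ‖Kn η α β n x y‖ₑ) := fun x =>
    (Kn_cont_right η α β n x).measurable.enorm
  have hKb : ∀ x ∈ Icc (-1 : ℝ) 1, ∫⁻ y, ‖Kn η α β n x y‖ₑ ∂(mu α β) ≤ Ce := by
    intro x hx
    have h1 := (cont_int hα hβ (Kn_cont_right η α β n x))
    rw [← ofReal_integral_norm_eq_lintegral_enorm h1]
    exact ENNReal.ofReal_le_ofReal (hK x hx)
  -- pointwise Jensen
  have hpt1 : ∀ x ∈ Icc (-1 : ℝ) 1, ‖V η α β n f x‖ₑ ^ r ≤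
      Ce ^ (r - 1) * ∫⁻ y, ‖Kn η α β n x y‖ₑ * ‖f y‖ₑ ^ r ∂(mu α β) := by
    intro x hx
    set ν := (mu α β).withDensity (fun y => ‖Kn η α β n x y‖ₑ) with hν
    have h1 := eLpNorm_le_eLpNorm_mul_rpow_measure_univ (μ := ν) hp hf.aestronglyMeasurable
    have h2 : eLpNorm f 1 ν = ∫⁻ y, ‖Kn η α β n x y‖ₑ * ‖f y‖ₑ ∂(mu α β) := by
      rw [eLpNorm_one_eq_lintegral_enorm, hν,
        lintegral_withDensity_eq_lintegral_mul _ (hKx x) hf.enorm]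
      rfl
    have h3 : eLpNorm f p ν = (∫⁻ y, ‖Kn η α β n x y‖ₑ * ‖f y‖ₑ ^ r ∂(mu α β)) ^ (1 / r) := by
      rw [eLpNorm_eq_lintegral_rpow_enorm_toReal hp0 hpt, hν,
        lintegral_withDensity_eq_lintegral_mul _ (hKx x) (hf.enorm.pow_const _)]
      rfl
    have h4 : ν univ ≤ Ce := by
      rw [hν, withDensity_apply _ MeasurableSet.univ, Measure.restrict_univ]
      exact hKb x hx
    have h5 : ‖V η α β n f x‖ₑ ≤ ∫⁻ y, ‖Kn η α β n x y‖ₑ * ‖f y‖ₑ ∂(mu α β) := by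
      rw [V_int hα hβ η n f hfi]
      refine (enorm_integral_le_lintegral_enorm _).trans (le_of_eq ?_)
      refine lintegral_congr fun y => ?_
      rw [enorm_mul, mul_comm]
    rw [h2, h3] at h1
    have h6 := ENNReal.rpow_le_rpow (h5.trans h1) hr0.le
    refine h6.trans ?_
    rw [ENNReal.mul_rpow_of_nonneg _ _ hr0.le, ← ENNReal.rpow_mul, one_div_mul_cancel hr0.ne',
      ENNReal.rpow_one, mul_comm, ← ENNReal.rpow_mul, ENNReal.toReal_one]
    have h7 : (1 / 1 - 1 / r) * r = r - 1 := by field_simp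
    rw [h7]
    gcongr
  have hmain : ∫⁻ x, ‖V η α β n f x‖ₑ ^ r ∂(mu α β) ≤ Ce ^ r * ∫⁻ y, ‖f y‖ₑ ^ r ∂(mu α β) := by
    calc ∫⁻ x, ‖V η α β n f x‖ₑ ^ r ∂(mu α β)
        ≤ ∫⁻ x, Ce ^ (r - 1) * ∫⁻ y, ‖Kn η α β n x y‖ₑ * ‖f y‖ₑ ^ r ∂(mu α β) ∂(mu α β) := by
          refine lintegral_mono_ae ?_
          filter_upwards [mu_ae α β] with x hx using hpt1 x ⟨hx.1.le, hx.2.le⟩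
      _ = Ce ^ (r - 1) * ∫⁻ x, ∫⁻ y, ‖Kn η α β n x y‖ₑ * ‖f y‖ₑ ^ r ∂(mu α β) ∂(mu α β) := by
          rw [lintegral_const_mul' _ _ (ENNReal.rpow_ne_top_of_nonneg (by linarith) hCet)]
      _ = Ce ^ (r - 1) * ∫⁻ y, ∫⁻ x, ‖Kn η α β n x y‖ₑ * ‖f y‖ₑ ^ r ∂(mu α β) ∂(mu α β) := by
          rw [lintegral_lintegral_swap]
          exact (hKm.mul ((hf.comp measurable_snd).enorm.pow_const _)).aemeasurable
      _ ≤ Ce ^ (r - 1) * ∫⁻ y, Ce * ‖f y‖ₑ ^ r ∂(mu α β) := by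
          gcongr 1
          refine lintegral_mono_ae ?_
          filter_upwards [mu_ae α β] with y hy
          simp only [Kn_comm η α β n _ y]
          rw [lintegral_mul_const _ (hKx y)]
          gcongr
          exact hKb y ⟨hy.1.le, hy.2.le⟩
      _ = Ce ^ r * ∫⁻ y, ‖f y‖ₑ ^ r ∂(mu α β) := by
          rw [lintegral_const_mul' _ _ hCet, ← mul_assoc]
          congr 1
          conv_lhs => rw [← ENNReal.rpow_one Ce, ← ENNReal.rpow_mul, one_mul,
            ← ENNReal.rpow_add _ _ hCe0 hCet]
          congr 1; ring
  rw [eLpNorm_eq_lintegral_rpow_enorm_toReal hp0 hpt, eLpNorm_eq_lintegral_rpow_enorm_toReal hp0 hpt]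
  refine (ENNReal.rpow_le_rpow hmain (by positivity)).trans (le_of_eq ?_)
  rw [ENNReal.mul_rpow_of_nonneg _ _ (by positivity), ← ENNReal.rpow_mul, ← hr,
    mul_one_div_cancel hr0.ne', ENNReal.rpow_one]

lemma LpW_eq (p : ℝ≥0∞) (hp : 1 ≤ p) (hpt : p ≠ ⊤) (f : ℝ → ℝ) (hf : Measurable f) :
    LpW α β p f = (eLpNorm f p (mu α β)).toReal := by
  have hp0 : p ≠ 0 := (zero_lt_one.trans_le hp).ne'
  rw [LpW, if_neg hpt, eLpNorm_eq_lintegral_rpow_enorm_toReal hp0 hpt, ← ENNReal.toReal_rpow,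
    ← int_mu α β (fun x => |f x| ^ p.toReal),
    integral_eq_lintegral_of_nonneg_ae (Filter.Eventually.of_forall fun x => by positivity)
      (hf.abs.pow_const _).aestronglyMeasurable]
  congr 2
  refine lintegral_congr fun x => ?_
  rw [← ENNReal.ofReal_rpow_of_nonneg (abs_nonneg _) ENNReal.toReal_nonneg, Real.enorm_eq_ofReal_abs]

lemma memLp_of (p : ℝ≥0∞) (hp : 1 ≤ p) (hpt : p ≠ ⊤) (f : ℝ → ℝ) (hf : MemLpW α β p f) :
    MemLp f p (mu α β) := by
  have hp0 : p ≠ 0 := (zero_lt_one.trans_le hp).ne'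
  rw [← integrable_norm_rpow_iff hf.1.aestronglyMeasurable hp0 hpt]
  exact (integrable_mu α β _).2 (hf.2.1 hpt)

lemma fin_bound (hα : -1 < α) (hβ : -1 < β) {η : ℝ → ℝ} (hη : Admissible η) {C : ℝ} (hC : 0 < C) (n : ℕ) (hn : 1 ≤ n)
    (hK : ∀ x ∈ Icc (-1 : ℝ) 1, ∫ y, |Kn η α β n x y| ∂(mu α β) ≤ C)
    (p : ℝ≥0∞) (hp : 1 ≤ p) (f : ℝ → ℝ) (hf : MemLpW α β p f)
    (q : Polynomial ℝ) (hq : q.natDegree ≤ n) :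
    LpW α β p (fun x => f x - V η α β n f x) ≤ (1 + C) * LpW α β p (fun x => f x - q.eval x) := by
  have hfin := mu_finite hα hβ
  have hqc : Continuous fun x => q.eval x := q.continuous
  have hqi : Integrable (fun x => q.eval x) (mu α β) := cont_int hα hβ hqc
  set g : ℝ → ℝ := fun x => f x - q.eval x with hg
  have hgm : Measurable g := hf.1.sub hqc.measurable
  have hfi : Integrable f (mu α β) := by
    by_cases hpt : p = ⊤
    · obtain ⟨M, hM⟩ := isCompact_Icc.exists_bound_of_continuousOn (hf.2.2 hpt)
      refine Integrable.of_bound hf.1.aestronglyMeasurable M ?_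
      filter_upwards [mu_ae α β] with x hx using hM x ⟨hx.1.le, hx.2.le⟩
    · exact (memLp_of p hp hpt f hf).integrable hp
  have hgi : Integrable g (mu α β) := hfi.sub hqi
  have hVe : ∀ x, f x - V η α β n f x = g x - V η α β n g x := by
    intro x
    have h1 := V_add hα hβ η n g (fun x => q.eval x) hgi hqi x
    have h2 : (fun y => g y + q.eval y) = f := by funext y; simp [hg]
    rw [h2, V_poly hα hβ η hη n hn q hq] at h1
    rw [h1]; simp only [hg]; ring
  simp only [hVe]
  by_cases hpt : p = ⊤
  · have hgc : ContinuousOn g (Icc (-1) 1) := (hf.2.2 hpt).sub hqc.continuousOn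
    simp only [LpW, if_pos hpt]
    set M := sSup ((fun x => |g x|) '' Icc (-1 : ℝ) 1) with hM
    have hbd : BddAbove ((fun x => |g x|) '' Icc (-1 : ℝ) 1) :=
      (isCompact_Icc.image_of_continuousOn hgc.abs).bddAbove
    have hgM : ∀ x ∈ Icc (-1 : ℝ) 1, |g x| ≤ M := fun x hx => le_csSup hbd ⟨x, hx, rfl⟩
    have hM0 : 0 ≤ M := (abs_nonneg _).trans (hgM 0 (by simp))
    refine csSup_le (Set.Nonempty.image _ ⟨0, by simp⟩) ?_
    rintro _ ⟨x, hx, rfl⟩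
    have h1 : |V η α β n g x| ≤ M * C := by
      rw [V_int hα hβ η n g hgi]
      refine (abs_integral_le_integral_abs).trans ?_
      refine le_trans ?_ (mul_le_mul_of_nonneg_left (hK x hx) hM0)
      rw [← integral_const_mul]
      refine integral_mono_ae (mul_int hgi (Kn_cont_right η α β n x)).abs
        ((cont_int hα hβ (Kn_cont_right η α β n x).abs).const_mul _) ?_
      filter_upwards [mu_ae α β] with y hy
      rw [abs_mul]
      exact mul_le_mul_of_nonneg_right (hgM y ⟨hy.1.le, hy.2.le⟩) (abs_nonneg _)
    have h2 := abs_sub (g x) (V η α β n g x)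
    show |g x - V η α β n g x| ≤ _
    linarith [hgM x hx]
  · have hVm : Measurable (V η α β n g) := (V_cont hα hβ η n g).measurable
    rw [LpW_eq p hp hpt (fun x => g x - V η α β n g x) (hgm.sub hVm), LpW_eq p hp hpt _ hgm]
    have hfL := memLp_of p hp hpt f hf
    have hqL : MemLp (fun x => q.eval x) p (mu α β) := by
      obtain ⟨M, hM⟩ := isCompact_Icc.exists_bound_of_continuousOn (s := Icc (-1 : ℝ) 1) hqc.continuousOn
      refine MemLp.of_bound hqc.aestronglyMeasurable M ?_
      filter_upwards [mu_ae α β] with x hx using hM x ⟨hx.1.le, hx.2.le⟩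
    have hgL : MemLp g p (mu α β) := hfL.sub hqL
    have hb := V_bdd hα hβ hC n hK g hgm hgi p hp hpt
    have h1 : eLpNorm (fun x => g x - V η α β n g x) p (mu α β) ≤
        ENNReal.ofReal (1 + C) * eLpNorm g p (mu α β) := by
      refine (eLpNorm_sub_le hgm.aestronglyMeasurable hVm.aestronglyMeasurable hp).trans ?_
      rw [ENNReal.ofReal_add zero_le_one hC.le, add_mul, ENNReal.ofReal_one, one_mul]
      gcongr
    have h2 := ENNReal.toReal_mono (ENNReal.mul_ne_top ENNReal.ofReal_ne_top hgL.2.ne) h1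
    rwa [ENNReal.toReal_mul, ENNReal.toReal_ofReal (by linarith)] at h2

end fin

theorem statement2 (α β : ℝ) (hα : -1 < α) (hβ : -1 < β) (p : ℝ≥0∞) (hp : 1 ≤ p)
    (η : ℝ → ℝ) (hη : Admissible η) :
    ∃ c : ℝ, 0 < c ∧ ∀ f : ℝ → ℝ, MemLpW α β p f → ∀ n : ℕ, 1 ≤ n →
      LpW α β p (fun x => f x - V η α β n f x) ≤ c * E α β p n f := by
  obtain ⟨C, hC, hK⟩ := leb hα hβ hη
  refine ⟨1 + (C + 1), by positivity, fun f hf n hn => ?_⟩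
  have hc : 0 < 1 + (C + 1) := by positivity
  rw [mul_comm, ← div_le_iff₀ hc]
  refine le_csInf ⟨_, 0, by simp, rfl⟩ ?_
  rintro _ ⟨q, hq, rfl⟩
  rw [div_le_iff₀ hc, mul_comm]
  exact fin_bound hα hβ hη (by positivity) n hn (fun x hx => (hK n x hx).trans (by linarith)) p hp f hf q hq

end JacobiApprox
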